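/- arXiv:1601.02914 — 2 statements merged into one kernel-verified Lean document; each statement's English description precedes it below -/
import Mathlib

section
/- For the cycle C_n on n ≥ 4 vertices, write n = 3t − i with t ∈ ℕ and i ∈ {0,1,2}. Then τ(C_n) = (7n + i + 6)/(3(n+1)) if n ∈ {5, 7, 9, 10, 14, 17}, and τ(C_n) = (7n + i + 3)/(3(n+1)) otherwise. (Equivalently, τ(C_n) = (n·τ(P_n) + π(C_n))/(n+1), where π(C_n) = 4 for n ∈ {5,7,9,10,14,17} and π(C_n) = 3 for all other n ≥ 4.) -/
open SimpleGraph Function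

/-- A Thue colouring of a simple graph `G`: a proper vertex colouring such that the
colour sequence along any path (here: the support of a path-walk) is non-repetitive,
i.e. it is never a square `l ++ l` with `l` nonempty. -/
def IsThueColoring {V α : Type*} (G : SimpleGraph V) (φ : V → α) : Prop :=
  (∀ ⦃a b : V⦄, G.Adj a b → φ a ≠ φ b) ∧
  ∀ ⦃a b : V⦄ (p : G.Walk a b), p.IsPath →
    ∀ l : List α, l ≠ [] → p.support.map φ ≠ l ++ l

/-- The Thue chromatic number `π(G)`: the least number of colours admitting a Thue
colouring of `G`. -/
noncomputable def thueNumber {V : Type*} (G : SimpleGraph V) : ℕ :=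
  sInf {k | ∃ φ : V → Fin k, IsThueColoring G φ}
/-- `l` is an ordering (a listing without repetition) of the edges of `G`. -/
def IsEdgeOrdering {V : Type*} (G : SimpleGraph V) (l : List (Sym2 V)) : Prop :=
  l.Nodup ∧ ∀ e, e ∈ l ↔ e ∈ G.edgeSet

/-- The τ-value of an edge ordering: the average `(1/(ε+1)) Σ_{i=0}^{ε} π(G*ᵢ)` of the
Thue numbers of the graphs obtained by successively deleting the edges in order. -/
noncomputable def tauValue {V : Type*} (G : SimpleGraph V) (l : List (Sym2 V)) : ℝ :=
  (∑ i ∈ Finset.range (l.length + 1),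
    (thueNumber (G.deleteEdges {e | e ∈ l.take i}) : ℝ)) / (l.length + 1)

/-- The τ-index of a graph: the minimum τ-value over all orderings of its edges. -/
noncomputable def tauIndex {V : Type*} (G : SimpleGraph V) : ℝ :=
  sInf {x | ∃ l : List (Sym2 V), IsEdgeOrdering G l ∧ tauValue G l = x}
namespace ThueAux

/-! ### Kernel friendly bounded quantifiers -/

def allB (n : ℕ) (f : ℕ → Bool) : Bool :=
  Nat.rec (motive := fun _ => Bool) true (fun k ih => and (f k) ih) n

def anyB (n : ℕ) (f : ℕ → Bool) : Bool :=
  Nat.rec (motive := fun _ => Bool) false (fun k ih => or (f k) ih) n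

theorem allB_iff (n : ℕ) (f : ℕ → Bool) : allB n f = true ↔ ∀ i < n, f i = true := by
  induction n with
  | zero => simp [allB]
  | succ k ih =>
    have : allB (k+1) f = and (f k) (allB k f) := rfl
    rw [this, Bool.and_eq_true, ih]
    constructor
    · rintro ⟨h1, h2⟩ i hi
      rcases Nat.lt_succ_iff_lt_or_eq.mp hi with h | h
      · exact h2 i h
      · exact h ▸ h1
    · intro h
      exact ⟨h k (by omega), fun i hi => h i (by omega)⟩

theorem anyB_iff (n : ℕ) (f : ℕ → Bool) : anyB n f = true ↔ ∃ i < n, f i = true := by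
  induction n with
  | zero => simp [anyB]
  | succ k ih =>
    have : anyB (k+1) f = or (f k) (anyB k f) := rfl
    rw [this, Bool.or_eq_true, ih]
    constructor
    · rintro (h | ⟨i, hi, h⟩)
      · exact ⟨k, by omega, h⟩
      · exact ⟨i, by omega, h⟩
    · rintro ⟨i, hi, h⟩
      rcases Nat.lt_succ_iff_lt_or_eq.mp hi with h' | h'
      · exact Or.inr ⟨i, h', h⟩
      · exact Or.inl (h' ▸ h)

/-- `i < n` as a fast Boolean. -/
def ltB (i n : ℕ) : Bool := Nat.ble (Nat.succ i) n

theorem ltB_iff (i n : ℕ) : ltB i n = true ↔ i < n := by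
  unfold ltB; rw [Nat.ble_eq]; omega

/-- Base-4 digit number `j` of `w`: words over a small alphabet are coded by naturals. -/
def dig (w j : ℕ) : ℕ := Nat.mod (Nat.div w (Nat.pow 4 j)) 4

/-- The words `f a .. ` and `g b ..` of length `p` differ somewhere. -/
def difB (f : ℕ → ℕ) (g : ℕ → ℕ) (p : ℕ) : Bool :=
  anyB p (fun j => not (Nat.beq (f j) (g j)))

theorem difB_iff (f g : ℕ → ℕ) (p : ℕ) : difB f g p = true ↔ ∃ j < p, f j ≠ g j := by
  unfold difB
  rw [anyB_iff]
  have key : ∀ a b : ℕ, (!(Nat.beq a b)) = true ↔ a ≠ b := by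
    intro a b
    rw [Bool.not_eq_true', Ne, ← Nat.beq_eq, Bool.not_eq_true]
  simp only [key]

/-- `s` has no square inside `[0, N)`. -/
def SF (s : ℕ → ℕ) (N : ℕ) : Prop :=
  ∀ i p, 0 < p → i + 2 * p ≤ N → ∃ j < p, s (i + j) ≠ s (i + j + p)

/-- Boolean version of `SF`, restricted to periods at most `P`. -/
def sfB (s : ℕ → ℕ) (N P : ℕ) : Bool :=
  allB P (fun p => allB (Nat.sub (Nat.succ N) (Nat.mul 2 (Nat.succ p))) (fun i =>
    difB (fun j => s (Nat.add i j)) (fun j => s (Nat.add (Nat.add i j) (Nat.succ p))) (Nat.succ p)))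

theorem sfB_iff (s : ℕ → ℕ) (N P : ℕ) : sfB s N P = true ↔
    ∀ i p, 0 < p → p ≤ P → i + 2 * p ≤ N → ∃ j < p, s (i + j) ≠ s (i + j + p) := by
  unfold sfB
  simp only [allB_iff, difB_iff]
  constructor
  · intro h i p hp hP hN
    obtain ⟨q, rfl⟩ : ∃ q, p = q + 1 := ⟨p - 1, by omega⟩
    exact h q (by omega) i (by show i < (N + 1) - 2 * (q + 1); omega)
  · intro h q hq i hi
    have hi' : i < (N + 1) - 2 * (q + 1) := hi
    exact h i (q + 1) (by omega) (by omega) (by omega)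

/-- Evaluate `x` to a literal before passing it on (only matters for kernel evaluation). -/
def force (x : ℕ) (f : ℕ → Bool) : Bool :=
  Nat.rec (motive := fun _ => Bool) (f 0) (fun k _ => f (Nat.succ k)) x

theorem force_eq (x : ℕ) (f : ℕ → Bool) : force x f = f x := by
  cases x <;> rfl

/-- Code the word `f 0, …, f (N-1)` as a number. -/
def pack (f : ℕ → ℕ) (N : ℕ) : ℕ :=
  Nat.rec (motive := fun _ => ℕ) 0 (fun k ih => Nat.add (Nat.mul (Nat.mod (f k) 4) (Nat.pow 4 k)) ih) N

theorem dig_eq (w j : ℕ) : dig w j = w / 4 ^ j % 4 := rfl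

theorem dig_lt (w j : ℕ) : dig w j < 4 := Nat.mod_lt _ (by norm_num)

theorem pack_lt (f : ℕ → ℕ) (N : ℕ) : pack f N < 4 ^ N := by
  induction N with
  | zero => simp [pack]
  | succ k ih =>
    have e : pack f (k+1) = (f k % 4) * 4 ^ k + pack f k := rfl
    have : f k % 4 < 4 := Nat.mod_lt _ (by norm_num)
    rw [e, pow_succ]
    nlinarith

theorem dig_pack (f : ℕ → ℕ) (N j : ℕ) (hj : j < N) : dig (pack f N) j = f j % 4 := by
  induction N with
  | zero => omega
  | succ k ih =>
    have e : pack f (k+1) = (f k % 4) * 4 ^ k + pack f k := rfl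
    rw [e, dig_eq]
    rcases Nat.lt_succ_iff_lt_or_eq.mp hj with h | h
    · rw [← ih h, dig_eq]
      obtain ⟨d, rfl⟩ : ∃ d, k = j + 1 + d := ⟨k - j - 1, by omega⟩
      have : (f (j+1+d) % 4) * 4 ^ (j + 1 + d) + pack f (j+1+d)
          = pack f (j+1+d) + 4 ^ j * (4 * ((f (j+1+d) % 4) * 4 ^ d)) := by ring
      rw [this, Nat.add_mul_div_left _ _ (by positivity), Nat.add_mul_mod_self_left]
    · subst h
      have : (f j % 4) * 4 ^ j + pack f j = pack f j + 4 ^ j * (f j % 4) := by ring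
      rw [this, Nat.add_mul_div_left _ _ (by positivity), Nat.div_eq_of_lt (pack_lt f j)]
      simp

/-- Compare the factors of length `p` at positions `i` and `k`. -/
def eqN (w i k p : ℕ) : Bool :=
  Nat.beq (Nat.mod (Nat.div w (Nat.pow 4 i)) (Nat.pow 4 p))
    (Nat.mod (Nat.div w (Nat.pow 4 k)) (Nat.pow 4 p))

theorem mod_eq_iff (a b p : ℕ) : a % 4 ^ p = b % 4 ^ p ↔ ∀ j < p, dig a j = dig b j := by
  induction p with
  | zero => simp [Nat.mod_one]
  | succ k ih =>
    rw [Nat.mod_pow_succ, Nat.mod_pow_succ (x := b)]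
    constructor
    · intro h
      have h1 : a % 4 ^ k = b % 4 ^ k := by
        have := congrArg (· % 4 ^ k) h
        simpa using this
      have h2 : a / 4 ^ k % 4 = b / 4 ^ k % 4 := by
        rw [h1] at h
        exact Nat.eq_of_mul_eq_mul_left (by positivity) (Nat.add_left_cancel h)
      intro j hj
      rcases Nat.lt_succ_iff_lt_or_eq.mp hj with h' | h'
      · exact ih.mp h1 j h'
      · subst h'; exact h2
    · intro h
      rw [ih.mpr (fun j hj => h j (by omega))]
      have : a / 4 ^ k % 4 = b / 4 ^ k % 4 := h k (by omega)
      rw [this]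

theorem eqN_iff (w i k p : ℕ) : eqN w i k p = true ↔ ∀ j < p, dig w (i + j) = dig w (k + j) := by
  have hd : ∀ i j, dig (w / 4 ^ i) j = dig w (i + j) := by
    intro i j
    rw [dig_eq, dig_eq, Nat.div_div_eq_div_mul, pow_add]
  unfold eqN
  rw [Nat.beq_eq]
  have := mod_eq_iff (w / 4 ^ i) (w / 4 ^ k) p
  simp only [hd] at this
  exact this

theorem eqN_not (w i k p : ℕ) : (!(eqN w i k p)) = true ↔ ∃ j < p, dig w (i + j) ≠ dig w (k + j) := by
  rw [Bool.not_eq_true', ← Bool.not_eq_true, eqN_iff]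
  push Not
  rfl

/-- Faster version of `sfB`. -/
def sfP (s : ℕ → ℕ) (N P : ℕ) : Bool :=
  force (pack s N) (fun w =>
  allB P (fun p => allB (Nat.sub (Nat.succ N) (Nat.mul 2 (Nat.succ p))) (fun i =>
    not (eqN w i (Nat.add i (Nat.succ p)) (Nat.succ p)))))

theorem sfP_sf (s : ℕ → ℕ) (N P : ℕ) (hs : ∀ j, s j < 4) (h : sfP s N P = true) :
    ∀ i p, 0 < p → p ≤ P → i + 2 * p ≤ N → ∃ j < p, s (i + j) ≠ s (i + j + p) := by
  unfold sfP at h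
  rw [force_eq] at h
  simp only [allB_iff, eqN_not] at h
  intro i p hp hP hN
  obtain ⟨q, rfl⟩ : ∃ q, p = q + 1 := ⟨p - 1, by omega⟩
  obtain ⟨j, hj, hne⟩ := h q (by omega) i (by show i < (N + 1) - 2 * (q + 1); omega)
  refine ⟨j, hj, ?_⟩
  have hne' : dig (pack s N) (i + j) ≠ dig (pack s N) (i + (q + 1) + j) := hne
  have hj' : j < q + 1 := hj
  rw [dig_pack _ _ _ (by omega), dig_pack _ _ _ (by omega), Nat.mod_eq_of_lt (hs _),
    Nat.mod_eq_of_lt (hs _)] at hne'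
  rwa [show i + j + (q + 1) = i + (q + 1) + j by omega]

/-- Circular square-freeness of the word `w 0, …, w (n-1)`. -/
def Circ (w : ℕ → ℕ) (n : ℕ) : Prop :=
  ∀ i p, 0 < p → 2 * p ≤ n → ∃ j < p, w ((i + j) % n) ≠ w ((i + j + p) % n)

def circB (w : ℕ → ℕ) (n : ℕ) : Bool :=
  force (pack (fun j => w (Nat.mod j n)) (Nat.mul 2 n)) (fun v =>
  allB (Nat.div n 2) (fun p => allB n (fun i =>
    not (eqN v i (Nat.add i (Nat.succ p)) (Nat.succ p)))))

theorem circB_iff (w : ℕ → ℕ) (n : ℕ) (hw : ∀ j, w j < 4) : circB w n = true ↔ Circ w n := by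
  unfold circB
  rw [force_eq]
  simp only [allB_iff, eqN_not]
  have key : ∀ i < n, ∀ q < n / 2, ∀ j < q + 1,
      (dig (pack (fun j => w (Nat.mod j n)) (Nat.mul 2 n)) (i + j)
        ≠ dig (pack (fun j => w (Nat.mod j n)) (Nat.mul 2 n)) (i + (q + 1) + j)
       ↔ w ((i + j) % n) ≠ w ((i + j + (q + 1)) % n)) := by
    intro i hi q hq j hj
    rw [dig_pack _ _ _ (by show _ < 2 * n; omega), dig_pack _ _ _ (by show _ < 2 * n; omega),
      Nat.mod_eq_of_lt (hw _), Nat.mod_eq_of_lt (hw _),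
      show i + j + (q + 1) = i + (q + 1) + j by omega]
    rfl
  constructor
  · intro h i p hp hn
    obtain ⟨q, rfl⟩ : ∃ q, p = q + 1 := ⟨p - 1, by omega⟩
    have hq : q < n / 2 := by omega
    have hi : i % n < n := Nat.mod_lt _ (by omega)
    obtain ⟨j, hj, hne⟩ := h q hq (i % n) hi
    refine ⟨j, hj, ?_⟩
    have e1 : (i + j) % n = (i % n + j) % n := by simp
    have e2 : (i + j + (q + 1)) % n = (i % n + j + (q + 1)) % n := by
      rw [add_assoc, add_assoc, Nat.mod_add_mod]
    rw [e1, e2]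
    exact (key _ hi q hq j hj).mp hne
  · intro h q hq i hi
    have hq' : q < n / 2 := hq
    obtain ⟨j, hj, hne⟩ := h i (q + 1) (by omega) (by omega)
    exact ⟨j, hj, (key i hi q hq j hj).mpr hne⟩

/-! ### Explicit words -/

/-- Circular square-free ternary words for small lengths. -/
def small3 : List (ℕ × ℕ) := [
  (4, 100),
  (6, 1176),
  (8, 39012),
  (11, 1611876),
  (12, 9987204),
  (13, 38151300),
  (15, 556147812),
  (16, 2559674756),
  (18, 36008642948),
  (19, 107781626008),
  (20, 654521541732),
  (21, 1726989042840),
  (22, 10003541492888),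
  (23, 41889372182808),
  (24, 167753245287556),
  (25, 432684770936392),
  (26, 2680920236724612),
  (27, 6836240549224740),
  (28, 28294989072139416),
  (29, 171455172072318084),
  (30, 655597110131303556),
  (31, 1324376674384774728),
  (32, 6999035903566301284),
  (33, 28972327406848778532),
  (34, 175573258738071905380),
  (35, 703598039530707896420),
  (36, 2809121539262310130820),
  (37, 7407053586390896968856),
  (38, 29036499870535512565284),
  (39, 116147934109303132723272),
  (40, 633468191801486931695716),
  (41, 2878615729462215721755748),
  (42, 5556188289069518316247192),
  (43, 30339167589397849502685256),
  (44, 117445718014069041660502308),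
  (45, 469696717906225867843208740),
  (46, 1900906101995315078822959176),
  (47, 7766858600324001285432042056),
  (48, 31132602903056642020420655176),
  (49, 124530411612103689331820533832),
  (50, 486670733302717259326149924936),
  (51, 3016270607127603901403291329668),
  (52, 7963852716890879401387902933064),
  (53, 31857324891043114315378497717400),
  (54, 124710817344225228860968504811812),
  (55, 772722528031591848014976322212228),
  (56, 1993403323602026269568554959521352),
  (57, 7981490143603398570285350728046664),
  (58, 47411588752126304707743072704139800),
  (59, 93970350376521898528539309761501336),
  (60, 755852063054141972126279141782217860),
  (61, 1503536480221589819480840485185283224),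
  (62, 12660285866032905426349797283966882328),
  (63, 48356633366060853029240021202592221572),
  (64, 194162741972535684585128020333262410264),
  (65, 388656527849507647024933794842475127368),
  (66, 1563927969265862242102970861065216333976),
  (67, 8264522474645731585666011832293875292260),
  (68, 33441093254808403379711373865554498963556),
  (69, 180443082189042940166696983119549939729956),
  (70, 546544085910287018715927383016195971225752),
  (71, 3169100324098530464426659890490805010862616),
  (72, 8570056035496271353977651687508855040926280),
  (73, 46741899913510108583324161105079205330260356),
  (74, 136974744143611083132222660067091446523650632),
  (75, 559661143971015240292412899525121189562423448),
  (76, 2191577144244516306363400724665509508462822984),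
  (77, 8664386051659169910235076833590414383310251556),
  (78, 35818313213445235986262568236484275356352799304),
  (79, 143273262453857544296765504017242527854035015752)]

/-- Circular square-free words over four letters for the exceptional lengths. -/
def small4 : List (ℕ × ℕ) := [
  (5, 540),
  (7, 14408),
  (9, 74124),
  (10, 497772),
  (14, 159852388),
  (17, 15153595976)]

theorem small3_ok : small3.all (fun q => and (circB (dig q.2) q.1)
    (allB q.1 (fun i => ltB (dig q.2 i) 3))) = true := by
  decide +kernel

theorem small4_ok : small4.all (fun q => and (circB (dig q.2) q.1)
    (allB q.1 (fun i => ltB (dig q.2 i) 4))) = true := by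
  decide +kernel

/-! ### A uniform square-free morphism -/

/-- Letter number `r` of the image of the letter `a` (images have length 18). -/
def hT (a r : ℕ) : ℕ :=
  match a with
  | 0 => dig 36046147972 r
  | 1 => dig 36047458692 r
  | _ => dig 40955384196 r

def H (s : ℕ → ℕ) (j : ℕ) : ℕ := hT (s (Nat.div j 18)) (Nat.mod j 18)

def s5 (a b c d e : ℕ) (q : ℕ) : ℕ :=
  match q with
  | 0 => a
  | 1 => b
  | 2 => c
  | 3 => d
  | _ => e

theorem H_small : allB 3 (fun a => allB 3 (fun b => allB 3 (fun c => allB 3 (fun d => allB 3 (fun e =>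
    or (not (sfB (s5 a b c d e) 5 2)) (sfP (H (s5 a b c d e)) 90 34)))))) = true := by
  decide +kernel

theorem H_sync : allB 3 (fun a => allB 3 (fun b => allB 3 (fun c => or (Nat.beq b c) (
    allB 17 (fun o => difB (hT a)
      (fun j => H (s5 b c 0 0 0) (Nat.add (Nat.succ o) j)) 18))))) = true := by
  decide +kernel

theorem H_inj : allB 3 (fun a => allB 3 (fun b => or (Nat.beq a b) (difB (hT a) (hT b) 18))) = true := by
  decide +kernel

theorem H_ps : allB 3 (fun a => allB 3 (fun b => allB 3 (fun c => or (Nat.beq a b) (or (Nat.beq b c)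
    (allB 18 (fun r => or (difB (fun j => hT a (Nat.add r j)) (fun j => hT b (Nat.add r j)) (Nat.sub 18 r))
      (difB (hT b) (hT c) r))))))) = true := by
  decide +kernel

/-- The connecting words. -/
def XL : List (ℕ × ℕ) := [
  (29, 151030645405092228),
  (33, 38663844883596413316),
  (40, 633468440195393899301252),
  (41, 2533873760581227641932164),
  (42, 10135495043126767461173636),
  (45, 648671677486447955826280836),
  (46, 2594686707979488763025918340),
  (48, 41514987696645304351661853060),
  (49, 166059950773451304508721301892),
  (50, 664239797746039751414574582148),
  (52, 10627836850341689509732152347012),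
  (53, 42511347401364791735868330183044),
  (54, 170045389592014135896697205787012),
  (55, 680181552384877927321659314899332),
  (56, 2720726209539522414987028494125444),
  (57, 10882904838158087693645053697296772),
  (61, 2786023638568459990307101997452593540),
  (62, 11144094554273883811460194982392072580)]

def mkB (X l g L : ℕ) : Bool :=
  and (allB 3 (fun a => allB 3 (fun b => or (Nat.beq a b) (allB 18 (fun o =>
    difB (fun r => H (s5 a b 0 0 0) (Nat.add o r)) (fun r => dig X (Nat.add g r)) L)))))
  (and (allB 3 (fun a => allB 18 (fun o =>
    difB (fun r => bif ltB (Nat.add o r) 18 then hT a (Nat.add o r) else dig X (Nat.sub (Nat.add o r) 18))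
      (fun r => dig X (Nat.add g r)) L)))
  (and (allB (Nat.sub (Nat.succ l) L) (fun t => or (Nat.beq t g)
    (difB (fun r => dig X (Nat.add t r)) (fun r => dig X (Nat.add g r)) L)))
  (allB 3 (fun a => allB l (fun t => or (Nat.ble (Nat.add t L) l)
    (difB (fun r => bif ltB (Nat.add t r) l then dig X (Nat.add t r) else hT a (Nat.sub (Nat.add t r) l))
      (fun r => dig X (Nat.add g r)) L))))))

def chkX (X l : ℕ) : Bool :=
  and (mkB X l 0 6) (and (mkB X l 7 9) (and (mkB X l (Nat.sub l 11) 5) (and (mkB X l (Nat.sub l 5) 5)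
  (and (sfP (dig X) l 31)
  (and (allB 3 (fun a => sfP (fun j => bif ltB j 18 then hT a j else dig X (Nat.sub j 18)) 34 17))
  (and (allB 3 (fun a => sfP (fun j => bif ltB j 11 then dig X (Nat.add (Nat.sub l 11) j)
      else hT a (Nat.sub j 11)) 29 14))
  (and (allB 2 (fun a => allB 5 (fun r => Nat.beq (dig X r) (hT a r))))
  (and (allB 2 (fun a => allB 4 (fun r => Nat.beq (dig X (Nat.add (Nat.sub l 4) r)) (hT a (Nat.add 14 r)))))
  (and (allB l (fun r => ltB (dig X r) 3))
  (and (ltB 28 l) (ltB l 63)))))))))))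

theorem XL_ok : XL.all (fun q => chkX q.2 q.1) = true := by
  decide +kernel

theorem XL_res : ∀ r < 18, ∃ q ∈ XL, q.1 % 18 = r := by
  decide +kernel

theorem small3_res : ∀ n < 80, 4 ≤ n → n ∉ [5, 7, 9, 10, 14, 17] → ∃ q ∈ small3, q.1 = n := by
  decide +kernel

theorem small4_res : ∀ n ∈ [5, 7, 9, 10, 14, 17], ∃ q ∈ small4, q.1 = n := by
  decide +kernel

theorem hT_lt : allB 3 (fun a => allB 18 (fun r => ltB (hT a r) 3)) = true := by
  decide +kernel

/-! ### Exhaustive search for the exceptional lengths -/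

def sufB (v len : ℕ) : Bool :=
  anyB (Nat.div len 2) (fun p => eqN v 0 (Nat.succ p) (Nat.succ p))

/-- `dfs f v len` : every extension by `f` letters of the word (coded by `v`, most recent letter
first) of length `len` has a circular square. -/
def dfs (f : ℕ) : ℕ → ℕ → Bool :=
  Nat.rec (motive := fun _ => ℕ → ℕ → Bool)
    (fun v len => not (circB (dig v) len))
    (fun _ ih v len => or (sufB v len) (
      and (force (Nat.add (Nat.mul 4 v) 0) (fun v' => ih v' (Nat.succ len))) (
      and (force (Nat.add (Nat.mul 4 v) 1) (fun v' => ih v' (Nat.succ len)))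
        (force (Nat.add (Nat.mul 4 v) 2) (fun v' => ih v' (Nat.succ len)))))) f

theorem dfs_ok : [5, 7, 9, 10, 14, 17].all (fun n => dfs n 0 0) = true := by
  decide +kernel

theorem H_eq (s : ℕ → ℕ) (j : ℕ) : H s j = hT (s (j / 18)) (j % 18) := rfl

theorem hT_lt4 (a r : ℕ) : hT a r < 4 := by
  unfold hT
  split <;> exact dig_lt _ _

attribute [irreducible] allB anyB difB sfB sfP circB dfs dig hT H

theorem hT_lt3 (a r : ℕ) (ha : a < 3) (hr : r < 18) : hT a r < 3 := by
  have h := hT_lt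
  simp only [allB_iff, ltB_iff] at h
  exact h a ha r hr

theorem H_block (s : ℕ → ℕ) (q r : ℕ) (hr : r < 18) : H s (18 * q + r) = hT (s q) r := by
  rw [H_eq, show (18 * q + r) / 18 = q by omega, show (18 * q + r) % 18 = r by omega]

theorem H_lt3 (s : ℕ → ℕ) (hs : ∀ q, s q < 3) (j : ℕ) : H s j < 3 := by
  rw [H_eq]
  exact hT_lt3 _ _ (hs _) (Nat.mod_lt _ (by norm_num))

theorem H_sf (s : ℕ → ℕ) (N : ℕ) (hN : 5 ≤ N) (hs : ∀ q, s q < 3) (hsf : SF s N) :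
    SF (H s) (18 * N) := by
  intro i p hp hle
  by_contra hcon
  push Not at hcon
  by_cases hp34 : p ≤ 34
  · -- short squares
    have hsm := H_small
    simp only [allB_iff, Bool.or_eq_true, Bool.not_eq_true', ← Bool.not_eq_true] at hsm
    obtain ⟨q, hq1, hq2, hq3⟩ : ∃ q, q + 5 ≤ N ∧ 18 * q ≤ i ∧ i + 2 * p ≤ 18 * q + 90 := by
      by_cases h : i / 18 + 5 ≤ N
      · exact ⟨i / 18, h, by omega, by omega⟩
      · exact ⟨N - 5, by omega, by omega, by omega⟩
    set t := s5 (s q) (s (q+1)) (s (q+2)) (s (q+3)) (s (q+4)) with ht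
    have htq : ∀ j < 5, t j = s (q + j) := by
      intro j hj
      interval_cases j <;> rfl
    have h1 : sfB t 5 2 = true := by
      rw [sfB_iff]
      intro i' p' hp' _ h5
      obtain ⟨j, hj, hne⟩ := hsf (q + i') p' hp' (by omega)
      refine ⟨j, hj, ?_⟩
      rw [htq _ (by omega), htq _ (by omega)]
      simpa only [add_assoc] using hne
    have h2 : sfP (H t) 90 34 = true := by
      rcases hsm _ (hs q) _ (hs (q+1)) _ (hs (q+2)) _ (hs (q+3)) _ (hs (q+4)) with h | h
      · exact absurd h1 h
      · exact h
    have h3 := sfP_sf _ _ _ (fun j => by rw [H_eq]; exact hT_lt4 _ _) h2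
    have htH : ∀ j < 90, H t j = H s (18 * q + j) := by
      intro j hj
      rw [H_eq, H_eq, htq _ (by omega)]
      rw [show q + j / 18 = (18 * q + j) / 18 by omega, show j % 18 = (18 * q + j) % 18 by omega]
    obtain ⟨j, hj, hne⟩ := h3 (i - 18 * q) p hp hp34 (by omega)
    rw [htH _ (by omega), htH _ (by omega)] at hne
    apply hne
    have := hcon j hj
    rwa [show 18 * q + (i - 18 * q + j) = i + j by omega,
      show 18 * q + (i - 18 * q + j + p) = i + j + p by omega]
  · have hcon' : ∀ x, i ≤ x → x < i + p → H s x = H s (x + p) := by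
      intro x h1 h2
      have := hcon (x - i) (by omega)
      rwa [show i + (x - i) = x by omega] at this
    have hinj : ∀ a b, a < 3 → b < 3 → (∀ r < 18, hT a r = hT b r) → a = b := by
      intro a b ha hb hab
      have h := H_inj
      simp only [allB_iff, Bool.or_eq_true, Nat.beq_eq, difB_iff] at h
      rcases h a ha b hb with h | ⟨j, hj, hne⟩
      · exact h
      · exact absurd (hab j hj) hne
    -- synchronisation
    have ho : p % 18 = 0 := by
      by_contra ho
      have h := H_sync
      simp only [allB_iff, Bool.or_eq_true, Nat.beq_eq, difB_iff] at h
      set q := (i + 17) / 18 with hq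
      set d := p / 18 with hd
      have hbc : s (q + d) ≠ s (q + d + 1) := by
        obtain ⟨j, hj, hne⟩ := hsf (q + d) 1 one_pos (by omega)
        obtain rfl : j = 0 := by omega
        simpa using hne
      rcases h _ (hs q) _ (hs (q + d)) _ (hs (q + d + 1)) with h | h
      · exact hbc h
      · obtain ⟨j, hj, hne⟩ := h (p % 18 - 1) (by omega)
        apply hne
        have e1 := hcon' (18 * q + j) (by omega) (by omega)
        rw [H_block _ _ _ hj] at e1
        rw [e1]
        change _ = H (s5 _ _ 0 0 0) ((p % 18 - 1) + 1 + j)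
        rw [show (p % 18 - 1) + 1 + j = p % 18 + j by omega]
        by_cases hlt : p % 18 + j < 18
        · rw [show 18 * q + j + p = 18 * (q + d) + (p % 18 + j) by omega, H_block _ _ _ hlt,
            H_eq, show (p % 18 + j) / 18 = 0 by omega, show (p % 18 + j) % 18 = p % 18 + j by omega]
          rfl
        · rw [show 18 * q + j + p = 18 * (q + d + 1) + (p % 18 + j - 18) by omega,
            H_block _ _ _ (by omega),
            H_eq, show (p % 18 + j) / 18 = 1 by omega,
            show (p % 18 + j) % 18 = p % 18 + j - 18 by omega]
          rfl
    obtain ⟨d, rfl⟩ : ∃ d, p = 18 * d := ⟨p / 18, by omega⟩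
    have hblock : ∀ q, i ≤ 18 * q → 18 * q + 18 ≤ i + 18 * d → s q = s (q + d) := by
      intro q h1 h2
      apply hinj _ _ (hs _) (hs _)
      intro r hr
      have := hcon' (18 * q + r) (by omega) (by omega)
      rwa [H_block _ _ _ hr, show 18 * q + r + 18 * d = 18 * (q + d) + r by ring,
        H_block _ _ _ hr] at this
    set q0 := i / 18 with hq0
    set r := i % 18 with hr
    -- it suffices to find the letter at one of the two ends
    have hend0 : s q0 = s (q0 + d) → False := by
      intro h0
      obtain ⟨j, hj, hne⟩ := hsf q0 d (by omega) (by omega)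
      apply hne
      rcases Nat.eq_zero_or_pos j with rfl | hjp
      · simpa using h0
      · exact hblock (q0 + j) (by omega) (by omega)
    have hend1 : 0 < r → s (q0 + d) = s (q0 + d + d) → False := by
      intro hr0 h0
      obtain ⟨j, hj, hne⟩ := hsf (q0 + 1) d (by omega) (by omega)
      apply hne
      by_cases hjd : j + 1 = d
      · rw [show q0 + 1 + j = q0 + d by omega]
        exact h0
      · exact hblock (q0 + 1 + j) (by omega) (by omega)
    by_cases hr0 : r = 0
    · exact hend0 (hblock q0 (by omega) (by omega))
    · have h := H_ps
      simp only [allB_iff, Bool.or_eq_true, Nat.beq_eq, difB_iff] at h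
      rcases h _ (hs q0) _ (hs (q0 + d)) _ (hs (q0 + d + d)) with h | h | h
      · exact hend0 h
      · exact hend1 (by omega) h
      · rcases h r (by omega) with ⟨j, hj, hne⟩ | ⟨j, hj, hne⟩
        · have hj' : j < 18 - r := hj
          apply hne
          have := hcon' (18 * q0 + (r + j)) (by omega) (by omega)
          rwa [H_block _ _ _ (by omega),
            show 18 * q0 + (r + j) + 18 * d = 18 * (q0 + d) + (r + j) by ring,
            H_block _ _ _ (by omega)] at this
        · apply hne
          have := hcon' (18 * (q0 + d) + j) (by omega) (by omega)
          rwa [H_block _ _ _ (by omega),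
            show 18 * (q0 + d) + j + 18 * d = 18 * (q0 + d + d) + j by ring,
            H_block _ _ _ (by omega)] at this

theorem SF.mono {s : ℕ → ℕ} {N M : ℕ} (h : SF s N) (hM : M ≤ N) : SF s M :=
  fun i p hp hi => h i p hp (hi.trans hM)

theorem SF.shift {s : ℕ → ℕ} {N a M : ℕ} (h : SF s N) (hM : a + M ≤ N) :
    SF (fun j => s (a + j)) M := by
  intro i p hp hi
  obtain ⟨j, hj, hne⟩ := h (a + i) p hp (by omega)
  exact ⟨j, hj, by simpa only [add_assoc] using hne⟩

theorem exists_sf (N : ℕ) : ∃ s : ℕ → ℕ, (∀ q, s q < 3) ∧ SF s N := by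
  have key : ∀ k : ℕ, ∃ s : ℕ → ℕ, (∀ q, s q < 3) ∧ SF s (5 + k) := by
    intro k
    induction k with
    | zero =>
      refine ⟨s5 0 1 2 0 1, ?_, ?_⟩
      · intro q
        unfold s5
        split <;> omega
      · have h : sfB (s5 0 1 2 0 1) 5 2 = true := by decide +kernel
        rw [sfB_iff] at h
        intro i p hp hi
        exact h i p hp (by omega) hi
    | succ k ih =>
      obtain ⟨s, hs, hsf⟩ := ih
      exact ⟨H s, H_lt3 s hs, (H_sf s _ (by omega) hs hsf).mono (by omega)⟩
  obtain ⟨s, hs, hsf⟩ := key N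
  exact ⟨s, hs, hsf.mono (by omega)⟩

theorem exists_flank (m : ℕ) : ∃ s : ℕ → ℕ, (∀ q, s q < 3) ∧ SF s (m + 10) ∧
    s 0 < 2 ∧ s (m + 1) < 2 := by
  obtain ⟨s, hs, hsf⟩ := exists_sf (m + 30)
  have s1 : ∀ i, i < m + 20 → s i ≠ s (i + 1) := by
    intro i hi
    obtain ⟨j, hj, hne⟩ := hsf i 1 one_pos (by omega)
    obtain rfl : j = 0 := by omega
    simpa using hne
  have s2 : ∀ i, i < 20 → ¬ (s i = s (i + 2) ∧ s (i + 1) = s (i + 3)) := by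
    rintro i hi ⟨h1, h2⟩
    obtain ⟨j, hj, hne⟩ := hsf i 2 two_pos (by omega)
    interval_cases j
    · exact hne h1
    · exact hne h2
  have s4 : ∀ i, i < 20 → ¬ (s i = s (i + 4) ∧ s (i + 1) = s (i + 5) ∧ s (i + 2) = s (i + 6)
      ∧ s (i + 3) = s (i + 7)) := by
    rintro i hi ⟨h1, h2, h3, h4⟩
    obtain ⟨j, hj, hne⟩ := hsf i 4 (by norm_num) (by omega)
    interval_cases j
    · exact hne h1
    · exact hne h2
    · exact hne h3
    · exact hne h4
  have key : ∃ i < 10, s i < 2 ∧ s (i + 1) < 2 := by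
    by_contra hcon
    push Not at hcon
    have main : ∀ a, a < 2 → s a = 2 → False := by
      intro a ha h0
      have e : ∀ j, j < 8 → s (a + j) = 2 → s (a + j + 1) < 2 ∧ s (a + j + 2) = 2 := by
        intro j hj h
        have h1 := s1 (a + j) (by omega)
        have h2 := hs (a + j + 1)
        have h3 := hcon (a + j + 1) (by omega)
        have h4 := hs (a + j + 1 + 1)
        constructor
        · omega
        · have := h3 (by omega)
          show s (a + j + 1 + 1) = 2
          omega
      have e0 := e 0 (by omega) h0
      have e2 := e 2 (by omega) e0.2
      have e4 := e 4 (by omega) e2.2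
      have e6 := e 6 (by omega) e4.2
      have t0 := s2 a (by omega)
      have t2 := s2 (a + 2) (by omega)
      have t4 := s2 (a + 4) (by omega)
      have t := s4 a (by omega)
      simp only [add_assoc, Nat.reduceAdd, add_zero] at e0 e2 e4 e6 t0 t2 t4 t
      omega
    have h0 := hs 0
    have h1 := hs 1
    have h2 := hcon 0 (by omega)
    by_cases h : s 0 = 2
    · exact main 0 (by omega) h
    · have := h2 (by omega)
      exact main 1 (by omega) (by simp only [zero_add] at this; omega)
  obtain ⟨i, hi, h0, h1⟩ := key
  have hd := s1 (i + m + 1) (by omega)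
  by_cases hc : s (i + m + 1) < 2
  · refine ⟨fun j => s (i + j), fun q => hs _, hsf.shift (by omega), by simpa using h0, ?_⟩
    simpa only [add_assoc] using hc
  · refine ⟨fun j => s (i + 1 + j), fun q => hs _, hsf.shift (by omega), by simpa using h1, ?_⟩
    have a1 := hs (i + m + 1)
    have a2 := hs (i + m + 1 + 1)
    show s (i + 1 + (m + 1)) < 2
    rw [show i + 1 + (m + 1) = i + m + 1 + 1 by omega]
    omega

theorem mkB_spec {X l g L : ℕ} (h : mkB X l g L = true) :
    (∀ a < 3, ∀ b < 3, a ≠ b → ∀ o < 18, ∃ r < L,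
      H (s5 a b 0 0 0) (o + r) ≠ dig X (g + r)) ∧
    (∀ a < 3, ∀ o < 18, ∃ r < L,
      (bif ltB (o + r) 18 then hT a (o + r) else dig X (o + r - 18)) ≠ dig X (g + r)) ∧
    (∀ t, t + L ≤ l → t ≠ g → ∃ r < L, dig X (t + r) ≠ dig X (g + r)) ∧
    (∀ a < 3, ∀ t < l, l < t + L → ∃ r < L,
      (bif ltB (t + r) l then dig X (t + r) else hT a (t + r - l)) ≠ dig X (g + r)) := by
  unfold mkB at h
  simp only [allB_iff, Bool.and_eq_true, Bool.or_eq_true, Nat.beq_eq, difB_iff, Nat.ble_eq] at h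
  obtain ⟨h1, h2, h3, h4⟩ := h
  refine ⟨?_, h2, ?_, ?_⟩
  · intro a ha b hb hab
    exact (h1 a ha b hb).resolve_left hab
  · intro t ht htg
    exact (h3 t (by show t < (l + 1) - L; omega)).resolve_left htg
  · intro a ha t ht htl
    refine (h4 a ha t ht).resolve_left ?_
    show ¬ (t + L ≤ l)
    omega

section Big

variable (s : ℕ → ℕ) (m l X : ℕ)

/-- The circular word: images of the letters `s 1, …, s m` followed by the connecting word. -/
def bigW (j : ℕ) : ℕ := if j < 18 * m then H s (j + 18) else dig X (j - 18 * m)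

def bigF (j : ℕ) : ℕ := bigW s m X (j % (18 * m + l))

theorem bigF_per (j : ℕ) : bigF s m l X (j + (18 * m + l)) = bigF s m l X j := by
  unfold bigF; rw [Nat.add_mod_right]

theorem bigF_h (j : ℕ) (hj : j < 18 * m) : bigF s m l X j = H s (j + 18) := by
  unfold bigF bigW
  rw [Nat.mod_eq_of_lt (by omega), if_pos hj]

theorem bigF_x (j : ℕ) (hj : j < l) : bigF s m l X (18 * m + j) = dig X j := by
  unfold bigF bigW
  rw [Nat.mod_eq_of_lt (by omega), if_neg (by omega)]
  congr 1; omega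

theorem bigF_mod (j r : ℕ) : bigF s m l X (j + r) = bigF s m l X (j % (18 * m + l) + r) := by
  unfold bigF; rw [Nat.mod_add_mod]

variable {s m l X}

theorem bigF_marker {g L : ℕ} (hm : 1 ≤ m) (hl : 28 < l) (hL : L ≤ 9) (hL0 : 0 < L)
    (hs : ∀ q, s q < 3) (hadj : ∀ q ≤ m, s q ≠ s (q + 1))
    (h : mkB X l g L = true) (j : ℕ)
    (hj : ∀ r < L, bigF s m l X (j + r) = dig X (g + r)) :
    j % (18 * m + l) = 18 * m + g := by
  obtain ⟨h1, h2, h3, h4⟩ := mkB_spec h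
  have hc : j % (18 * m + l) < 18 * m + l := Nat.mod_lt _ (by omega)
  have hj' : ∀ r < L, bigF s m l X (j % (18 * m + l) + r) = dig X (g + r) := by
    intro r hr
    rw [← bigF_mod, hj r hr]
  generalize j % (18 * m + l) = c at hc hj' ⊢
  by_cases c1 : c + L ≤ 18 * m
  · exfalso
    obtain ⟨r, hr, hne⟩ := h1 _ (hs (c / 18 + 1)) _ (hs (c / 18 + 2)) (hadj _ (by omega)) (c % 18)
      (Nat.mod_lt _ (by norm_num))
    apply hne
    rw [← hj' r hr, bigF_h _ _ _ _ _ (by omega)]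
    by_cases hlt : c % 18 + r < 18
    · rw [show c + r + 18 = 18 * (c / 18 + 1) + (c % 18 + r) by omega, H_block _ _ _ hlt, H_eq,
        show (c % 18 + r) / 18 = 0 by omega, Nat.mod_eq_of_lt hlt]
      rfl
    · rw [show c + r + 18 = 18 * (c / 18 + 2) + (c % 18 + r - 18) by omega,
        H_block _ _ _ (by omega), H_eq,
        show (c % 18 + r) / 18 = 1 by omega, show (c % 18 + r) % 18 = c % 18 + r - 18 by omega]
      rfl
  by_cases c2 : c < 18 * m
  · exfalso
    obtain ⟨r, hr, hne⟩ := h2 _ (hs m) (c + 18 - 18 * m) (by omega)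
    apply hne
    rw [← hj' r hr]
    by_cases hlt : c + r < 18 * m
    · rw [(ltB_iff _ _).mpr (by omega), bigF_h _ _ _ _ _ hlt,
        show c + r + 18 = 18 * m + (c + 18 - 18 * m + r) by omega, H_block _ _ _ (by omega)]
      rfl
    · have : ltB (c + 18 - 18 * m + r) 18 = false := by
        rw [← Bool.not_eq_true, ltB_iff]; omega
      rw [this, show c + r = 18 * m + (c + r - 18 * m) by omega, bigF_x _ _ _ _ _ (by omega)]
      show dig X _ = dig X _
      congr 1; omega
  by_cases c3 : c + L ≤ 18 * m + l
  · by_contra hne0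
    obtain ⟨r, hr, hne⟩ := h3 (c - 18 * m) (by omega) (by omega)
    apply hne
    rw [← hj' r hr, show c + r = 18 * m + (c - 18 * m + r) by omega, bigF_x _ _ _ _ _ (by omega)]
  · exfalso
    obtain ⟨r, hr, hne⟩ := h4 _ (hs 1) (c - 18 * m) (by omega) (by omega)
    apply hne
    rw [← hj' r hr]
    by_cases hlt : c + r < 18 * m + l
    · rw [(ltB_iff _ _).mpr (by omega),
        show c + r = 18 * m + (c - 18 * m + r) by omega, bigF_x _ _ _ _ _ (by omega)]
      rfl
    · have : ltB (c - 18 * m + r) l = false := by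
        rw [← Bool.not_eq_true, ltB_iff]; omega
      rw [this, show c + r = (c - 18 * m + r - l) + (18 * m + l) by omega, bigF_per,
        bigF_h _ _ _ _ _ (by omega),
        show c - 18 * m + r - l + 18 = 18 * 1 + (c - 18 * m + r - l) by omega,
        H_block _ _ _ (by omega)]
      rfl

theorem big_circ (hm : 1 ≤ m) (hs : ∀ q, s q < 3) (hsf : SF s (m + 10))
    (hs0 : s 0 < 2) (hsm : s (m + 1) < 2) (hX : chkX X l = true) :
    ∃ w : ℕ → ℕ, (∀ j < 18 * m + l, w j < 3) ∧ Circ w (18 * m + l) := by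
  unfold chkX at hX
  simp only [Bool.and_eq_true] at hX
  obtain ⟨k1, k2, k3, k4, k5, k6, k7, k8, k9, k10, k11, k12⟩ := hX
  rw [ltB_iff] at k11 k12
  simp only [allB_iff, Nat.beq_eq, ltB_iff] at k6 k7 k8 k9 k10
  have hH := H_sf s _ (by omega) hs hsf
  have hadj : ∀ q ≤ m, s q ≠ s (q + 1) := by
    intro q hq
    obtain ⟨j, hj, hne⟩ := hsf q 1 one_pos (by omega)
    obtain rfl : j = 0 := by omega
    simpa using hne
  refine ⟨bigW s m X, ?_, ?_⟩
  · intro j hj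
    unfold bigW
    split
    · exact H_lt3 s hs _
    · exact k10 _ (by omega)
  have main : ∀ i p, i < 18 * m + l → 0 < p → 2 * p ≤ 18 * m + l →
      (∀ y, i ≤ y → y < i + p → bigF s m l X y = bigF s m l X (y + p)) → False := by
    intro i p hi hp hpn hsq
    -- a marker inside the window straddles the centre
    have mark : ∀ g L, L ≤ 9 → 0 < L → g + L ≤ l → mkB X l g L = true → ∀ P,
        (P = 18 * m + g ∨ P = 18 * m + g + (18 * m + l)) →
        i ≤ P → P + L ≤ i + 2 * p → P < i + p ∧ i + p < P + L := by
      intro g L hL hL0 hgl hmk P hP h1 h2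
      have hocc : ∀ r < L, bigF s m l X (P + r) = dig X (g + r) := by
        intro r hr
        rcases hP with rfl | rfl
        · rw [add_assoc, bigF_x _ _ _ _ _ (by omega)]
        · rw [show 18 * m + g + (18 * m + l) + r = 18 * m + (g + r) + (18 * m + l) by ring,
            bigF_per, bigF_x _ _ _ _ _ (by omega)]
      have hPm : P % (18 * m + l) = 18 * m + g :=
        bigF_marker hm k11 hL hL0 hs hadj hmk P hocc
      have hdm := Nat.div_add_mod P (18 * m + l)
      by_contra hcon
      by_cases hside : P + L ≤ i + p
      · have hocc2 : ∀ r < L, bigF s m l X (P + p + r) = dig X (g + r) := by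
          intro r hr
          rw [← hocc r hr, hsq (P + r) (by omega) (by omega)]
          congr 1; omega
        have h := bigF_marker hm k11 hL hL0 hs hadj hmk _ hocc2
        rw [← Nat.mod_add_mod, hPm] at h
        by_cases hlt : 18 * m + g + p < 18 * m + l
        · rw [Nat.mod_eq_of_lt hlt] at h; omega
        · rw [Nat.mod_eq_sub_mod (by omega), Nat.mod_eq_of_lt (by omega)] at h
          omega
      · have hge : i + p ≤ P := by omega
        have hocc2 : ∀ r < L, bigF s m l X (P - p + r) = dig X (g + r) := by
          intro r hr
          rw [← hocc r hr, hsq (P - p + r) (by omega) (by omega)]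
          congr 1; omega
        have h := bigF_marker hm k11 hL hL0 hs hadj hmk _ hocc2
        have h' : (P - p + p) % (18 * m + l) = 18 * m + g := by
          rw [Nat.sub_add_cancel (by omega)]; exact hPm
        rw [← Nat.mod_add_mod, h] at h'
        by_cases hlt : 18 * m + g + p < 18 * m + l
        · rw [Nat.mod_eq_of_lt hlt] at h'; omega
        · rw [Nat.mod_eq_sub_mod (by omega), Nat.mod_eq_of_lt (by omega)] at h'
          omega
    -- window containing the first marker
    have caseA : ∀ D, (D = 0 ∨ D = 18 * m + l) → i ≤ 18 * m + D → 18 * m + D + 6 ≤ i + 2 * p →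
        False := by
      intro D hD h1 h2
      have a1 := mark 0 6 (by omega) (by omega) (by omega) k1 (18 * m + D) (by omega) h1 h2
      have a2 : ¬ (18 * m + D + 16 ≤ i + 2 * p) := by
        intro h3
        have := mark 7 9 (by omega) (by omega) (by omega) k2 (18 * m + 7 + D) (by omega) (by omega)
          (by omega)
        omega
      have h := sfP_sf _ _ _ ?_ (k6 _ (hs m))
      · obtain ⟨j, hj, hne⟩ := h (i + 18 - 18 * m - D) p hp (by omega) (by omega)
        apply hne
        have hval : ∀ y, y < 34 → bigF s m l X (y + 18 * (m - 1) + D) =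
            (bif ltB y 18 then hT (s m) y else dig X (Nat.sub y 18)) := by
          intro y hy
          have hred : bigF s m l X (y + 18 * (m - 1) + D) = bigF s m l X (y + 18 * (m - 1)) := by
            rcases hD with rfl | rfl
            · rfl
            · exact bigF_per _ _ _ _ _
          rw [hred]
          by_cases hlt : y < 18
          · rw [(ltB_iff _ _).mpr hlt, bigF_h _ _ _ _ _ (by omega),
              show y + 18 * (m - 1) + 18 = 18 * m + y by omega, H_block _ _ _ hlt]
            rfl
          · have : ltB y 18 = false := by
              rw [← Bool.not_eq_true, ltB_iff]; omega
            rw [this, show y + 18 * (m - 1) = 18 * m + (y - 18) by omega,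
              bigF_x _ _ _ _ _ (by omega)]
            rfl
        have e1 := hval (i + 18 - 18 * m - D + j) (by omega)
        have e2 := hval (i + 18 - 18 * m - D + j + p) (by omega)
        rw [← e1, ← e2]
        have := hsq (i + j) (by omega) (by omega)
        rwa [show i + 18 - 18 * m - D + j + 18 * (m - 1) + D = i + j by omega,
          show i + 18 - 18 * m - D + j + p + 18 * (m - 1) + D = i + j + p by omega]
      · intro j
        cases ltB j 18
        · exact dig_lt _ _
        · exact hT_lt4 _ _
    -- window containing the last marker
    have caseB : i + 5 ≤ 18 * m + l → 18 * m + l ≤ i + 2 * p → False := by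
      intro h1 h2
      have a1 := mark (l - 5) 5 (by omega) (by omega) (by omega) k4 (18 * m + (l - 5)) (by omega)
        (by omega) (by omega)
      have a2 : ¬ (i + 11 ≤ 18 * m + l) := by
        intro h3
        have := mark (l - 11) 5 (by omega) (by omega) (by omega) k3 (18 * m + (l - 11)) (by omega)
          (by omega) (by omega)
        omega
      have h := sfP_sf _ _ _ ?_ (k7 _ (hs 1))
      · obtain ⟨j, hj, hne⟩ := h (i + 11 - (18 * m + l)) p hp (by omega) (by omega)
        apply hne
        have hval : ∀ y, y < 29 → bigF s m l X (y + (18 * m + l) - 11) =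
            (bif ltB y 11 then dig X (Nat.add (Nat.sub l 11) y) else hT (s 1) (Nat.sub y 11)) := by
          intro y hy
          by_cases hlt : y < 11
          · rw [(ltB_iff _ _).mpr hlt, show y + (18 * m + l) - 11 = 18 * m + (l - 11 + y) by omega,
              bigF_x _ _ _ _ _ (by omega)]
            rfl
          · have : ltB y 11 = false := by
              rw [← Bool.not_eq_true, ltB_iff]; omega
            rw [this, show y + (18 * m + l) - 11 = (y - 11) + (18 * m + l) by omega, bigF_per,
              bigF_h _ _ _ _ _ (by omega), show y - 11 + 18 = 18 * 1 + (y - 11) by omega,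
              H_block _ _ _ (by omega)]
            rfl
        have e1 := hval (i + 11 - (18 * m + l) + j) (by omega)
        have e2 := hval (i + 11 - (18 * m + l) + j + p) (by omega)
        rw [← e1, ← e2]
        have := hsq (i + j) (by omega) (by omega)
        rwa [show i + 11 - (18 * m + l) + j + (18 * m + l) - 11 = i + j by omega,
          show i + 11 - (18 * m + l) + j + p + (18 * m + l) - 11 = i + j + p by omega]
      · intro j
        cases ltB j 11
        · exact hT_lt4 _ _
        · exact dig_lt _ _
    -- values around the images of the letters
    have hHF : ∀ y, y < 18 * m + 5 → bigF s m l X y = H s (y + 18) := by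
      intro y hy
      by_cases hlt : y < 18 * m
      · exact bigF_h _ _ _ _ _ hlt
      · have e := k8 _ hsm (y - 18 * m) (by omega)
        rw [show y = 18 * m + (y - 18 * m) by omega, bigF_x _ _ _ _ _ (by omega), e,
          show 18 * m + (y - 18 * m) + 18 = 18 * (m + 1) + (y - 18 * m) by omega,
          H_block _ _ _ (by omega)]
    by_cases c1 : i ≤ 18 * m
    · have hend : i + 2 * p < 18 * m + 6 := by
        by_contra hcon
        exact caseA 0 (Or.inl rfl) (by omega) (by omega)
      obtain ⟨j, hj, hne⟩ := hH (i + 18) p hp (by omega)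
      apply hne
      have := hsq (i + j) (by omega) (by omega)
      rw [hHF _ (by omega), hHF _ (by omega)] at this
      rwa [show i + 18 + j = i + j + 18 by omega, show i + j + 18 + p = i + j + p + 18 by omega]
    by_cases c2 : i + 5 ≤ 18 * m + l
    · have hend : i + 2 * p < 18 * m + l := by
        by_contra hcon
        exact caseB c2 (by omega)
      obtain ⟨j, hj, hne⟩ := sfP_sf _ _ _ (dig_lt X) k5 (i - 18 * m) p hp (by omega) (by omega)
      apply hne
      have := hsq (i + j) (by omega) (by omega)
      rwa [show i + j = 18 * m + (i - 18 * m + j) by omega, bigF_x _ _ _ _ _ (by omega), add_assoc,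
        bigF_x _ _ _ _ _ (by omega)] at this
    · have hend : i + 2 * p < 18 * m + (18 * m + l) + 6 := by
        by_contra hcon
        exact caseA _ (Or.inr rfl) (by omega) (by omega)
      have hHF2 : ∀ y, 18 * m + l < y + 5 → y < 18 * m + (18 * m + l) + 5 →
          bigF s m l X y = H s (y + 18 - (18 * m + l)) := by
        intro y h1 h2
        by_cases hlt : y < 18 * m + l
        · have e := k9 _ hs0 (y + 4 - (18 * m + l)) (by omega)
          have e' : dig X (l - 4 + (y + 4 - (18 * m + l))) =
            hT (s 0) (14 + (y + 4 - (18 * m + l))) := e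
          rw [show y = 18 * m + (l - 4 + (y + 4 - (18 * m + l))) by omega,
            bigF_x _ _ _ _ _ (by omega), e', ← H_block _ _ _ (by omega)]
          congr 1; omega
        · rw [show y = y - (18 * m + l) + (18 * m + l) by omega, bigF_per, hHF _ (by omega)]
          congr 1; omega
      obtain ⟨j, hj, hne⟩ := hH (i + 18 - (18 * m + l)) p hp (by omega)
      apply hne
      have := hsq (i + j) (by omega) (by omega)
      rw [hHF2 _ (by omega) (by omega), hHF2 _ (by omega) (by omega)] at this
      rwa [show i + 18 - (18 * m + l) + j = i + j + 18 - (18 * m + l) by omega,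
        show i + j + 18 - (18 * m + l) + p = i + j + p + 18 - (18 * m + l) by omega]
  intro i p hp hpn
  by_contra hcon
  push Not at hcon
  refine main (i % (18 * m + l)) p (Nat.mod_lt _ (by omega)) hp hpn ?_
  intro y h1 h2
  have := hcon (y - i % (18 * m + l)) (by omega)
  have e1 := bigF_mod s m l X i (y - i % (18 * m + l))
  have e2 := bigF_mod s m l X i (y - i % (18 * m + l) + p)
  rw [show i % (18 * m + l) + (y - i % (18 * m + l)) = y by omega] at e1
  rw [show i % (18 * m + l) + (y - i % (18 * m + l) + p) = y + p by omega] at e2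
  rw [← e1, ← e2, ← add_assoc]
  exact this

end Big

/-- Theorem of Currie: circular square-free ternary words exist for all other lengths. -/
theorem circ3 (n : ℕ) (hn : 4 ≤ n) (hex : n ∉ [5, 7, 9, 10, 14, 17]) :
    ∃ w : ℕ → ℕ, (∀ j < n, w j < 3) ∧ Circ w n := by
  by_cases h80 : n < 80
  · obtain ⟨q, hq, rfl⟩ := small3_res n h80 hn hex
    have h := small3_ok
    rw [List.all_eq_true] at h
    have h' := h q hq
    simp only [Bool.and_eq_true, allB_iff, ltB_iff] at h'
    exact ⟨dig q.2, h'.2, (circB_iff _ _ (dig_lt _)).mp h'.1⟩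
  · obtain ⟨q, hq, hr⟩ := XL_res (n % 18) (Nat.mod_lt _ (by norm_num))
    have h := XL_ok
    rw [List.all_eq_true] at h
    have h' := h q hq
    have h'' := h'
    unfold chkX at h''
    simp only [Bool.and_eq_true] at h''
    obtain ⟨k1, k2, k3, k4, k5, k6, k7, k8, k9, k10, k11, k12⟩ := h''
    rw [ltB_iff] at k11 k12
    obtain ⟨m, hm⟩ : ∃ m, n = 18 * m + q.1 := ⟨(n - q.1) / 18, by omega⟩
    obtain ⟨s, hs, hsf, hs0, hsm⟩ := exists_flank m
    rw [hm]
    exact big_circ (by omega) hs hsf hs0 hsm h'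

theorem circ4 (n : ℕ) (hex : n ∈ [5, 7, 9, 10, 14, 17]) :
    ∃ w : ℕ → ℕ, (∀ j < n, w j < 4) ∧ Circ w n := by
  obtain ⟨q, hq, rfl⟩ := small4_res n hex
  have h := small4_ok
  rw [List.all_eq_true] at h
  have h' := h q hq
  simp only [Bool.and_eq_true, allB_iff, ltB_iff] at h'
  exact ⟨dig q.2, h'.2, (circB_iff _ _ (dig_lt _)).mp h'.1⟩

theorem dfs_spec (n : ℕ) (w : ℕ → ℕ) (hw : ∀ j < n, w j < 3) (hc : Circ w n) :
    ∀ f v len, len + f = n → (∀ j < len, dig v j = w (len - 1 - j)) → dfs f v len = true → False := by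
  intro f
  induction f with
  | zero =>
    intro v len hlen hv h
    have h0 : (!(circB (dig v) len)) = true := by
      unfold dfs at h; exact h
    rw [Bool.not_eq_true', ← Bool.not_eq_true, circB_iff _ _ (dig_lt v)] at h0
    apply h0
    obtain rfl : len = n := by omega
    intro i p hp hpn
    -- reverse
    have hlen : 0 < len := by omega
    obtain ⟨a, ha⟩ : ∃ a, a = i % len := ⟨_, rfl⟩
    have hal : a < len := ha ▸ Nat.mod_lt _ hlen
    obtain ⟨j, hj, hne⟩ := hc (2 * len - a - 2 * p) p hp hpn
    refine ⟨p - 1 - j, by omega, ?_⟩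
    have key : ∀ x, x < 2 * p → dig v ((i + x) % len) = w ((2 * len - a - 2 * p + (2 * p - 1 - x)) % len) := by
      intro x hx
      rw [hv _ (Nat.mod_lt _ hlen), ← Nat.mod_add_mod, ← ha]
      congr 1
      by_cases hlt : a + x < len
      · rw [Nat.mod_eq_of_lt hlt, Nat.mod_eq_sub_mod (by omega), Nat.mod_eq_of_lt (by omega)]
        omega
      · rw [Nat.mod_eq_sub_mod (by omega), Nat.mod_eq_of_lt (by omega), Nat.mod_eq_of_lt (by omega)]
        omega
    rw [key _ (by omega), add_assoc, key _ (by omega)]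
    intro h'
    apply hne
    rw [show 2 * p - 1 - (p - 1 - j) = j + p by omega,
      show 2 * p - 1 - (p - 1 - j + p) = j by omega] at h'
    rw [h'.symm, add_assoc (2 * len - a - 2 * p) j p]
  | succ f ih =>
    intro v len hlen hv h
    have h0 : (or (sufB v len) (
      and (force (Nat.add (Nat.mul 4 v) 0) (fun v' => dfs f v' (Nat.succ len))) (
      and (force (Nat.add (Nat.mul 4 v) 1) (fun v' => dfs f v' (Nat.succ len)))
        (force (Nat.add (Nat.mul 4 v) 2) (fun v' => dfs f v' (Nat.succ len)))))) = true := by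
      unfold dfs at h ⊢; exact h
    simp only [Bool.or_eq_true, Bool.and_eq_true, force_eq] at h0
    rcases h0 with h0 | ⟨h1, h2, h3⟩
    · unfold sufB at h0
      simp only [anyB_iff, eqN_iff] at h0
      obtain ⟨q, hq, hsq⟩ := h0
      have hq' : q < len / 2 := hq
      obtain ⟨j, hj, hne⟩ := hc (len - 2 * (q + 1)) (q + 1) (by omega) (by omega)
      apply hne
      have := hsq (q - j) (by show _ < q + 1; omega)
      have this' : dig v (0 + (q - j)) = dig v (q + 1 + (q - j)) := this
      rw [hv _ (by omega), hv _ (by omega)] at this'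
      rw [Nat.mod_eq_of_lt (by omega), Nat.mod_eq_of_lt (by omega)]
      rw [show len - 1 - (0 + (q - j)) = len - 2 * (q + 1) + j + (q + 1) by omega,
        show len - 1 - (q + 1 + (q - j)) = len - 2 * (q + 1) + j by omega] at this'
      exact this'.symm
    · have hext : ∀ c, c < 4 → w len = c → ∀ j < len + 1, dig (4 * v + c) j = w (len + 1 - 1 - j) := by
        intro c hc4 hwc j hj
        rcases Nat.eq_zero_or_pos j with rfl | hj0
        · rw [dig_eq]
          simp only [pow_zero, Nat.div_one, Nat.sub_zero, Nat.add_sub_cancel]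
          omega
        · obtain ⟨j, rfl⟩ : ∃ j', j = j' + 1 := ⟨j - 1, by omega⟩
          rw [show len + 1 - 1 - (j + 1) = len - 1 - j by omega, ← hv j (by omega), dig_eq, dig_eq,
            pow_succ', ← Nat.div_div_eq_div_mul]
          congr 2
          omega
      have hw3 := hw len (by omega)
      have h012 : w len = 0 ∨ w len = 1 ∨ w len = 2 := by omega
      rcases h012 with h | h | h
      · exact ih _ _ (by omega) (hext 0 (by omega) h) h1
      · exact ih _ _ (by omega) (hext 1 (by omega) h) h2
      · exact ih _ _ (by omega) (hext 2 (by omega) h) h3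

theorem no_circ3 (n : ℕ) (hex : n ∈ [5, 7, 9, 10, 14, 17]) (w : ℕ → ℕ) (hw : ∀ j < n, w j < 3)
    (hc : Circ w n) : False := by
  have h := dfs_ok
  rw [List.all_eq_true] at h
  exact dfs_spec n w hw hc n 0 0 (by omega) (by intro j hj; omega) (h n hex)


/-! ### Graph part -/

theorem exists_walk {V : Type*} {G : SimpleGraph V} (L : ℕ) : ∀ (f : ℕ → V),
    (∀ r < L, G.Adj (f r) (f (r+1))) →
    ∃ p : G.Walk (f 0) (f L), p.support = (List.range (L+1)).map f := by
  induction L with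
  | zero => intro f _; exact ⟨Walk.nil, by simp⟩
  | succ L ih =>
    intro f hf
    obtain ⟨p, hp⟩ := ih (fun r => f (r+1)) (fun r hr => hf (r+1) (by omega))
    refine ⟨Walk.cons (hf 0 (by omega)) p, ?_⟩
    rw [Walk.support_cons, hp, List.range_succ_eq_map (n := L+1)]
    simp [Function.comp_def]

theorem thue_iff {V α : Type*} (G : SimpleGraph V) (φ : V → α) :
    IsThueColoring G φ ↔ ∀ m > 0, ∀ f : ℕ → V,
      (∀ r, r + 1 < 2*m → G.Adj (f r) (f (r+1))) →
      (∀ r s, r < 2*m → s < 2*m → f r = f s → r = s) →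
      ∃ r < m, φ (f r) ≠ φ (f (r+m)) := by
  constructor
  · rintro ⟨-, h⟩ m hm f hf hinj
    by_contra! hc
    obtain ⟨p, hp⟩ := exists_walk (2*m-1) f (fun r hr => hf r (by omega))
    have h2 : 2*m-1+1 = m + m := by omega
    rw [h2] at hp
    have hpath : p.IsPath := by
      rw [Walk.isPath_def, hp]
      refine List.Nodup.map_on ?_ List.nodup_range
      intro x hx y hy hxy
      rw [List.mem_range] at hx hy
      exact hinj x y (by omega) (by omega) hxy
    refine h p hpath ((List.range m).map (fun r => φ (f r))) ?_ ?_
    · simp; omega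
    · rw [hp, List.range_add]
      simp only [List.map_append, List.map_map]
      congr 1
      apply List.map_congr_left
      intro r hr
      rw [List.mem_range] at hr
      simp only [Function.comp_apply]
      rw [Nat.add_comm m r, hc r hr]
  · intro h
    constructor
    · intro a b hab
      obtain ⟨r, hr, hne⟩ := h 1 one_pos (fun r => if r = 0 then a else b) (by
        intro r hr
        have : r = 0 := by omega
        subst this; simpa using hab) (by
        intro r s hr hs hrs
        have hne := hab.ne
        have hr : r = 0 ∨ r = 1 := by omega
        have hs : s = 0 ∨ s = 1 := by omega
        rcases hr with rfl | rfl <;> rcases hs with rfl | rfl <;> simp_all)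
      have : r = 0 := by omega
      subst this; simpa using hne
    · intro a b p hp l hl heq
      have hlen : p.length + 1 = 2 * l.length := by
        have := congrArg List.length heq
        simp at this; omega
      have hpos : 0 < l.length := List.length_pos_iff.mpr hl
      obtain ⟨r, hr, hne⟩ := h l.length hpos p.getVert (by
        intro r hr
        exact p.adj_getVert_succ (by omega)) (by
        intro r s hr hs hrs
        exact hp.getVert_injOn (by simp; omega) (by simp; omega) hrs)
      apply hne
      have key : ∀ s, s ≤ p.length → some (φ (p.getVert s)) = (l ++ l)[s]? := by
        intro s hs
        rw [← heq, List.getElem?_map, ← Walk.getVert_eq_support_getElem? p hs]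
        rfl
      have k1 := key r (by omega)
      have k2 := key (r + l.length) (by omega)
      rw [List.getElem?_append_left (by omega)] at k1
      rw [List.getElem?_append_right (by omega), Nat.add_sub_cancel] at k2
      exact Option.some_injective _ (k1.trans k2.symm)

theorem thue_pull {V W α : Type*} {G : SimpleGraph V} {G' : SimpleGraph W} {φ : W → α}
    (h : IsThueColoring G' φ) (g : V → W) (hg : Function.Injective g)
    (hadj : ∀ a b, G.Adj a b → G'.Adj (g a) (g b)) : IsThueColoring G (fun v => φ (g v)) := by
  rw [thue_iff] at h ⊢
  intro m hm f hf hinj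
  exact h m hm (fun r => g (f r)) (fun r hr => hadj _ _ (hf r hr))
    (fun r s hr hs hrs => hinj r s hr hs (hg hrs))

theorem thue_le {V : Type*} {G : SimpleGraph V} {k : ℕ} (φ : V → Fin k)
    (h : IsThueColoring G φ) : thueNumber G ≤ k := Nat.sInf_le ⟨φ, h⟩

theorem le_thue {n : ℕ} {G : SimpleGraph (Fin n)} {b : ℕ}
    (h : ∀ k, ∀ φ : Fin n → Fin k, IsThueColoring G φ → b ≤ k) : b ≤ thueNumber G := by
  apply le_csInf
  · refine ⟨n, id, ?_⟩
    rw [thue_iff]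
    intro m hm f hf hinj
    refine ⟨0, hm, fun he => ?_⟩
    have := hinj _ _ (by omega) (by omega) he
    omega
  · rintro k ⟨φ, hφ⟩
    exact h k φ hφ

/-- successor along the cycle -/
def nxt {n : ℕ} (v : Fin n) : Fin n :=
  ⟨if v.val + 1 < n then v.val + 1 else 0, by have := v.2; split_ifs <;> omega⟩

theorem nxt_val {n : ℕ} (v : Fin n) :
    (nxt v).val = if v.val + 1 < n then v.val + 1 else 0 := rfl

theorem nxt_mod {n : ℕ} (v : Fin n) : (nxt v).val = (v.val + 1) % n := by
  have := v.2
  rw [nxt_val]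
  split_ifs with h
  · rw [Nat.mod_eq_of_lt h]
  · have : v.val + 1 = n := by omega
    rw [this, Nat.mod_self]

theorem nxt_inj {n : ℕ} : Function.Injective (nxt (n := n)) := by
  intro u v h
  have h1 := congrArg Fin.val h
  have := u.2
  have := v.2
  simp only [nxt_val] at h1
  ext
  split_ifs at h1 <;> omega

theorem adj_iff {n : ℕ} (hn : 3 ≤ n) (u v : Fin n) :
    (cycleGraph n).Adj u v ↔ v = nxt u ∨ u = nxt v := by
  have hu := u.2
  have hv := v.2
  rw [cycleGraph_adj', Fin.ext_iff, Fin.ext_iff, nxt_val, nxt_val, Fin.val_sub, Fin.val_sub]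
  have key : ∀ a b : ℕ, a < n → b < n → ((n - b + a) % n = 1 ↔
      a = if b + 1 < n then b + 1 else 0) := by
    intro a b ha hb
    rcases Nat.lt_or_ge a b with h | h
    · rw [Nat.mod_eq_of_lt (by omega)]; split_ifs <;> omega
    · rw [show n - b + a = (a - b) + n by omega, Nat.add_mod_right,
        Nat.mod_eq_of_lt (by omega)]; split_ifs <;> omega
  rw [key _ _ hu hv, key _ _ hv hu, or_comm]

theorem path_dir {n : ℕ} (hn : 3 ≤ n) (f : ℕ → Fin n) (L : ℕ)
    (hf : ∀ r, r + 1 < L → (cycleGraph n).Adj (f r) (f (r+1)))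
    (hinj : ∀ r s, r < L → s < L → f r = f s → r = s) :
    (∀ r, r + 1 < L → f (r+1) = nxt (f r)) ∨ (∀ r, r + 1 < L → f r = nxt (f (r+1))) := by
  by_cases hL : 1 < L
  swap
  · left; intro r hr; omega
  rcases (adj_iff hn _ _).1 (hf 0 (by omega)) with h0 | h0
  · left
    intro r
    induction r with
    | zero => intro _; exact h0
    | succ r ih =>
      intro hr
      have h1 := ih (by omega)
      rcases (adj_iff hn _ _).1 (hf (r+1) hr) with h | h
      · exact h
      · have := hinj r (r+1+1) (by omega) (by omega) (nxt_inj (h1.symm.trans h))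
        omega
  · right
    intro r
    induction r with
    | zero => intro _; exact h0
    | succ r ih =>
      intro hr
      have h1 := ih (by omega)
      rcases (adj_iff hn _ _).1 (hf (r+1) hr) with h | h
      · have := hinj r (r+1+1) (by omega) (by omega) (h1.trans h.symm)
        omega
      · exact h

theorem asc_val {n : ℕ} (f : ℕ → Fin n) (L : ℕ)
    (hf : ∀ r, r + 1 < L → f (r+1) = nxt (f r)) :
    ∀ r, r < L → (f r).val = ((f 0).val + r) % n := by
  intro r
  induction r with
  | zero => intro _; simp [Nat.mod_eq_of_lt]
  | succ r ih =>
    intro hr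
    rw [hf r hr, nxt_mod, ih (by omega), Nat.mod_add_mod, Nat.add_assoc]

theorem circ_thue {n k : ℕ} (hn : 3 ≤ n) (w : ℕ → ℕ) (hw : ∀ j < n, w j < k) (hc : Circ w n) :
    IsThueColoring (cycleGraph n) (fun v : Fin n => (⟨w v.val, hw _ v.2⟩ : Fin k)) := by
  rw [thue_iff]
  intro m hm f hf hinj
  have hcard : 2 * m ≤ n := by
    have := Finset.card_le_card_of_injOn (s := Finset.range (2*m)) (t := Finset.univ) f
      (fun _ _ => Finset.mem_coe.2 (Finset.mem_univ _)) (by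
        intro r hr s hs hrs
        simp only [Finset.coe_range, Set.mem_Iio] at hr hs
        exact hinj r s hr hs hrs)
    simpa using this
  have main : ∀ g : ℕ → Fin n, (∀ r, r + 1 < 2*m → g (r+1) = nxt (g r)) →
      ∃ r < m, w (g r).val ≠ w (g (r+m)).val := by
    intro g hg
    have hv := asc_val g (2*m) hg
    obtain ⟨j, hj, hne⟩ := hc (g 0).val m hm hcard
    refine ⟨j, hj, ?_⟩
    rw [hv j (by omega), hv (j+m) (by omega), ← Nat.add_assoc]
    exact hne
  simp only [ne_eq, Fin.mk.injEq]
  rcases path_dir hn f (2*m) hf hinj with h | h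
  · exact main f h
  · obtain ⟨r, hr, hne⟩ := main (fun s => f (2*m-1-s)) (by
      intro r hr
      have := h (2*m-1-(r+1)) (by omega)
      rw [show 2*m-1-(r+1)+1 = 2*m-1-r by omega] at this
      exact this)
    refine ⟨m-1-r, by omega, fun he => hne ?_⟩
    rw [show 2*m-1-(r+m) = m-1-r by omega, show 2*m-1-r = m-1-r+m by omega]
    exact he.symm

theorem thue_circ {n k : ℕ} (hn : 3 ≤ n) (φ : Fin n → Fin k)
    (h : IsThueColoring (cycleGraph n) φ) :
    Circ (fun j => if hj : j < n then (φ ⟨j, hj⟩).val else 0) n := by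
  rw [thue_iff] at h
  intro i p hp hpn
  have hmod : ∀ x, x % n < n := fun x => Nat.mod_lt _ (by omega)
  obtain ⟨r, hr, hne⟩ := h p hp (fun r => ⟨(i+r)%n, hmod _⟩) (by
    intro r hr
    rw [adj_iff hn]
    left
    ext
    rw [nxt_mod]
    simp [Nat.add_assoc]) (by
    intro r s hr hs hrs
    have h1 : (i + r) % n = (i + s) % n := congrArg Fin.val hrs
    have h2 : r ≡ s [MOD n] := Nat.ModEq.add_left_cancel' i h1
    exact Nat.ModEq.eq_of_lt_of_lt h2 (by omega) (by omega))
  refine ⟨r, hr, ?_⟩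
  simp only [hmod, dif_pos]
  intro he
  apply hne
  ext
  simpa [Nat.add_assoc] using he

theorem cyc_le3 {n : ℕ} (hn : 4 ≤ n) (hex : n ∉ [5,7,9,10,14,17]) :
    thueNumber (cycleGraph n) ≤ 3 := by
  obtain ⟨w, hw, hc⟩ := circ3 n hn hex
  exact thue_le _ (circ_thue (by omega) w hw hc)

theorem cyc_le4 {n : ℕ} (hex : n ∈ [5,7,9,10,14,17]) : thueNumber (cycleGraph n) ≤ 4 := by
  obtain ⟨w, hw, hc⟩ := circ4 n hex
  refine thue_le _ (circ_thue ?_ w hw hc)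
  simp at hex; omega

theorem cyc_ge4 {n : ℕ} (hex : n ∈ [5,7,9,10,14,17]) : 4 ≤ thueNumber (cycleGraph n) := by
  apply le_thue
  intro k φ hφ
  by_contra hk
  refine no_circ3 n hex _ ?_ (thue_circ (by simp at hex; omega) φ hφ)
  intro j hj
  simp only [hj, dif_pos]
  have := (φ ⟨j, hj⟩).2
  omega

/-- the edge leaving `j` -/
def E {n : ℕ} (j : Fin n) : Sym2 (Fin n) := s(j, nxt j)

theorem E_inj {n : ℕ} (hn : 3 ≤ n) : Function.Injective (E (n := n)) := by
  intro a b h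
  rw [E, E, Sym2.eq_iff] at h
  rcases h with h | ⟨h1, h2⟩
  · exact h.1
  · have h1 := congrArg Fin.val h1
    have h2 := congrArg Fin.val h2
    rw [nxt_val] at h1 h2
    have := a.2
    have := b.2
    ext
    split_ifs at h1 h2 <;> omega

theorem mem_edge {n : ℕ} (hn : 3 ≤ n) (e : Sym2 (Fin n)) :
    e ∈ (cycleGraph n).edgeSet ↔ ∃ j, E j = e := by
  induction e with
  | h u v =>
    rw [mem_edgeSet, adj_iff hn]
    constructor
    · rintro (h | h)
      · exact ⟨u, by rw [E, h]⟩
      · exact ⟨v, by rw [E, h, Sym2.eq_swap]⟩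
    · rintro ⟨j, hj⟩
      rw [E, Sym2.eq_iff] at hj
      rcases hj with ⟨h1, h2⟩ | ⟨h1, h2⟩
      · left; rw [← h1, h2]
      · right; rw [← h1, h2]

theorem ord_length {n : ℕ} (hn : 3 ≤ n) {l : List (Sym2 (Fin n))}
    (hl : IsEdgeOrdering (cycleGraph n) l) : l.length = n := by
  classical
  rw [← List.toFinset_card_of_nodup hl.1]
  have : l.toFinset = Finset.univ.image (E (n := n)) := by
    ext e
    simp [hl.2, mem_edge hn]
  rw [this, Finset.card_image_of_injective _ (E_inj hn)]
  simp

theorem del_adj {n : ℕ} (hn : 3 ≤ n) (S : Set (Sym2 (Fin n))) (u v : Fin n) :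
    ((cycleGraph n).deleteEdges S).Adj u v ↔
      (v = nxt u ∧ E u ∉ S) ∨ (u = nxt v ∧ E v ∉ S) := by
  rw [deleteEdges_adj, adj_iff hn]
  constructor
  · rintro ⟨h | h, hS⟩
    · left; refine ⟨h, ?_⟩; rw [E, ← h]; exact hS
    · right; refine ⟨h, ?_⟩; rw [E, ← h, Sym2.eq_swap]; exact hS
  · rintro (⟨h, hS⟩ | ⟨h, hS⟩)
    · refine ⟨Or.inl h, ?_⟩; rw [E, ← h] at hS; exact hS
    · refine ⟨Or.inr h, ?_⟩; rw [E, ← h, Sym2.eq_swap] at hS; exact hS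

theorem del_le3 {n : ℕ} (hn : 3 ≤ n) (S : Set (Sym2 (Fin n))) (j : Fin n) (hj : E j ∈ S) :
    thueNumber ((cycleGraph n).deleteEdges S) ≤ 3 := by
  obtain ⟨w, hw, hc⟩ := circ3 (n+18) (by omega) (by simp)
  have hT := circ_thue (by omega) w hw hc
  have hjn := j.2
  let g : Fin n → Fin (n+18) := fun v =>
    ⟨if v.val ≤ j.val then v.val + n - 1 - j.val else v.val - 1 - j.val, by
      have := v.2; split_ifs <;> omega⟩
  have hgv : ∀ v, (g v).val =
    if v.val ≤ j.val then v.val + n - 1 - j.val else v.val - 1 - j.val := fun _ => rfl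
  have step : ∀ u : Fin n, E u ∉ S → g (nxt u) = nxt (g u) := by
    intro u hu
    have hne : u.val ≠ j.val := by
      intro h; apply hu; rw [Fin.ext h]; exact hj
    have := u.2
    ext
    rw [nxt_val, hgv, hgv, nxt_val]
    split_ifs <;> omega
  refine thue_le _ (thue_pull hT g ?_ ?_)
  · intro u v h
    have h1 := congrArg Fin.val h
    have := u.2
    have := v.2
    rw [hgv, hgv] at h1
    ext
    split_ifs at h1 <;> omega
  · intro a b hab
    rw [adj_iff (by omega)]
    rcases (del_adj hn S a b).1 hab with ⟨h, hS⟩ | ⟨h, hS⟩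
    · left; rw [h, step _ hS]
    · right; rw [h, step _ hS]

theorem del_le2 {n : ℕ} (hn : 3 ≤ n) (S : Set (Sym2 (Fin n)))
    (hS : ∀ j : Fin n, (j.val % 3 = 2 ∨ j.val + 1 = n) → E j ∈ S) :
    thueNumber ((cycleGraph n).deleteEdges S) ≤ 2 := by
  have hstep : ∀ u v : Fin n, ((cycleGraph n).deleteEdges S).Adj u v →
      u.val / 3 = v.val / 3 ∧ ((u.val % 3 = 1 ∧ v.val % 3 ≠ 1) ∨ (u.val % 3 ≠ 1 ∧ v.val % 3 = 1)) := by
    intro u v h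
    have key : ∀ a b : Fin n, b = nxt a → E a ∉ S →
        b.val = a.val + 1 ∧ a.val % 3 ≠ 2 := by
      intro a b h1 h2
      have h3 : ¬ (a.val % 3 = 2 ∨ a.val + 1 = n) := fun h => h2 (hS a h)
      have := a.2
      rw [h1, nxt_val]
      split_ifs <;> omega
    rcases (del_adj hn S u v).1 h with ⟨h1, h2⟩ | ⟨h1, h2⟩
    · have := key _ _ h1 h2; omega
    · have := key _ _ h1 h2; omega
  refine thue_le (fun v : Fin n => if v.val % 3 = 1 then (1 : Fin 2) else 0) ?_
  rw [thue_iff]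
  intro m hm f hf hinj
  have h01 := hstep _ _ (hf 0 (by omega))
  rcases Nat.lt_or_ge 1 m with h1 | h1
  · exfalso
    have h12 := hstep _ _ (hf 1 (by omega))
    have h23 := hstep _ _ (hf 2 (by omega))
    have d02 : (f 0).val ≠ (f 2).val := fun h => by
      have := hinj 0 2 (by omega) (by omega) (Fin.ext h); omega
    have d13 : (f 1).val ≠ (f 3).val := fun h => by
      have := hinj 1 3 (by omega) (by omega) (Fin.ext h); omega
    simp only [Nat.zero_add, Nat.reduceAdd] at h01 h12 h23
    omega
  · have : m = 1 := by omega
    subst this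
    refine ⟨0, by omega, ?_⟩
    simp only [Nat.zero_add] at h01 ⊢
    rcases h01.2 with ⟨a, b⟩ | ⟨a, b⟩ <;> simp [a, b]

theorem del_le1 {n : ℕ} (hn : 3 ≤ n) (S : Set (Sym2 (Fin n)))
    (hS : ∀ j : Fin n, E j ∈ S) :
    thueNumber ((cycleGraph n).deleteEdges S) ≤ 1 := by
  refine thue_le (fun _ : Fin n => (0 : Fin 1)) ?_
  rw [thue_iff]
  intro m hm f hf hinj
  exfalso
  have h := hf 0 (by omega)
  rw [del_adj hn] at h
  simp [hS] at h

theorem del_ge1 {n : ℕ} (hn : 3 ≤ n) (G : SimpleGraph (Fin n)) : 1 ≤ thueNumber G := by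
  apply le_thue
  intro k φ _
  have := (φ ⟨0, by omega⟩).2
  omega

theorem del_ge2 {n : ℕ} (hn : 3 ≤ n) (S : Set (Sym2 (Fin n))) (j : Fin n) (hj : E j ∉ S) :
    2 ≤ thueNumber ((cycleGraph n).deleteEdges S) := by
  apply le_thue
  intro k φ hφ
  have h := hφ.1 ((del_adj hn S j (nxt j)).2 (Or.inl ⟨rfl, hj⟩))
  have h1 : (φ j).val ≠ (φ (nxt j)).val := fun h' => h (Fin.ext h')
  have := (φ j).2
  have := (φ (nxt j)).2
  omega

theorem del_ge3 {n : ℕ} (hn : 4 ≤ n) (S : Set (Sym2 (Fin n))) (j : Fin n) (h0 : E j ∉ S)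
    (h1 : E (nxt j) ∉ S) (h2 : E (nxt (nxt j)) ∉ S) :
    3 ≤ thueNumber ((cycleGraph n).deleteEdges S) := by
  apply le_thue
  intro k φ hφ
  by_contra hk
  have a0 := (del_adj (by omega) S j (nxt j)).2 (Or.inl ⟨rfl, h0⟩)
  have a1 := (del_adj (by omega) S _ (nxt (nxt j))).2 (Or.inl ⟨rfl, h1⟩)
  have a2 := (del_adj (by omega) S _ (nxt (nxt (nxt j)))).2 (Or.inl ⟨rfl, h2⟩)
  have b0 : (φ j).val ≠ _ := fun h' => hφ.1 a0 (Fin.ext h')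
  have b1 : (φ (nxt j)).val ≠ _ := fun h' => hφ.1 a1 (Fin.ext h')
  have b2 : (φ (nxt (nxt j))).val ≠ _ := fun h' => hφ.1 a2 (Fin.ext h')
  rw [thue_iff] at hφ
  have hv := asc_val (fun r => nxt^[r] j) 4 (fun r _ => by
    simp only [Function.iterate_succ_apply'])
  obtain ⟨r, hr, hne⟩ := hφ 2 (by omega) (fun r => nxt^[r] j) (by
    intro r hr
    have : r = 0 ∨ r = 1 ∨ r = 2 := by omega
    rcases this with rfl | rfl | rfl
    · exact a0
    · exact a1
    · exact a2) (by
    intro r s hr hs hrs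
    have h1 := congrArg Fin.val hrs
    rw [hv r (by omega), hv s (by omega)] at h1
    have h2 : r ≡ s [MOD n] := Nat.ModEq.add_left_cancel' _ h1
    exact Nat.ModEq.eq_of_lt_of_lt h2 (by omega) (by omega))
  have c0 := (φ j).2
  have c1 := (φ (nxt j)).2
  have c2 := (φ (nxt (nxt j))).2
  have c3 := (φ (nxt (nxt (nxt j)))).2
  apply hne
  have : r = 0 ∨ r = 1 := by omega
  rcases this with rfl | rfl
  · ext
    change (φ j).val = (φ (nxt (nxt j))).val
    omega
  · ext
    change (φ (nxt j)).val = (φ (nxt (nxt (nxt j)))).val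
    omega

theorem exists_three {n : ℕ} (hn : 4 ≤ n) (l : List (Sym2 (Fin n))) (hl : 3 * l.length < n) :
    ∃ j : Fin n, E j ∉ l ∧ E (nxt j) ∉ l ∧ E (nxt (nxt j)) ∉ l := by
  classical
  by_contra! hc
  let D : Finset (Fin n) := Finset.univ.filter (fun j => E j ∈ l)
  let D1 : Finset (Fin n) := Finset.univ.filter (fun j => E (nxt j) ∈ l)
  let D2 : Finset (Fin n) := Finset.univ.filter (fun j => E (nxt (nxt j)) ∈ l)
  have bnd : ∀ g : Fin n → Fin n, Function.Injective g →
      (Finset.univ.filter (fun j => E (g j) ∈ l)).card ≤ l.length := by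
    intro g hg
    refine le_trans (Finset.card_le_card_of_injOn (t := l.toFinset) (fun j => E (g j)) ?_ ?_)
      (List.toFinset_card_le l)
    · intro j hj
      simpa using hj
    · intro a _ b _ hab
      exact hg (E_inj (by omega) hab)
  have h0 : D.card ≤ l.length := bnd id Function.injective_id
  have h1 : D1.card ≤ l.length := bnd nxt nxt_inj
  have h2 : D2.card ≤ l.length := bnd (fun j => nxt (nxt j)) (nxt_inj.comp nxt_inj)
  have hu : (Finset.univ : Finset (Fin n)) ⊆ D ∪ D1 ∪ D2 := by
    intro j _
    simp only [D, D1, D2, Finset.mem_union, Finset.mem_filter, Finset.mem_univ, true_and]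
    by_cases x : E j ∈ l
    · exact Or.inl (Or.inl x)
    by_cases y : E (nxt j) ∈ l
    · exact Or.inl (Or.inr y)
    exact Or.inr (hc j x y)
  have h3 := Finset.card_le_card hu
  have h4 := Finset.card_union_le (D ∪ D1) D2
  have h5 := Finset.card_union_le D D1
  simp only [Finset.card_univ, Fintype.card_fin] at h3
  omega

theorem exists_one {n : ℕ} (hn : 3 ≤ n) (l : List (Sym2 (Fin n))) (hl : l.length < n) :
    ∃ j : Fin n, E j ∉ l := by
  classical
  by_contra! hc
  have := Finset.card_le_card_of_injOn (s := (Finset.univ : Finset (Fin n))) (t := l.toFinset) E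
    (fun j _ => by simpa using hc j) ((E_inj hn).injOn)
  have h2 := List.toFinset_card_le l
  simp only [Finset.card_univ, Fintype.card_fin] at this
  omega

theorem exists_ord {n t i : ℕ} (hn : 4 ≤ n) (hi : i ≤ 2) (hti : n + i = 3 * t) :
    ∃ l, IsEdgeOrdering (cycleGraph n) l ∧
      ∀ j : Fin n, (j.val % 3 = 2 ∨ j.val + 1 = n) → E j ∈ l.take t := by
  classical
  let g : Fin t → Fin n := fun q => ⟨min (3 * q.val + 2) (n-1), by omega⟩
  have hg : Function.Injective g := by
    intro a b h
    have h1 : min (3 * a.val + 2) (n-1) = min (3 * b.val + 2) (n-1) := congrArg Fin.val h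
    have := a.2
    have := b.2
    ext
    omega
  let A : List (Fin n) := (List.finRange t).map g
  have hA : A.Nodup := (List.nodup_finRange t).map hg
  have hAl : A.length = t := by simp [A]
  let B : List (Fin n) := (List.finRange n).filter (fun j => j ∉ A)
  have hB : B.Nodup := (List.nodup_finRange n).filter _
  have hAB : (A ++ B).Nodup := by
    rw [List.nodup_append']
    refine ⟨hA, hB, ?_⟩
    intro x hx hx'
    simp only [B, List.mem_filter, decide_eq_true_eq] at hx'
    exact hx'.2 hx
  have hmem : ∀ j, j ∈ A ++ B := by
    intro j
    by_cases h : j ∈ A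
    · exact List.mem_append_left _ h
    · apply List.mem_append_right
      simp only [B, List.mem_filter, decide_eq_true_eq]
      exact ⟨List.mem_finRange j, h⟩
  refine ⟨(A ++ B).map E, ⟨hAB.map (E_inj (by omega)), ?_⟩, ?_⟩
  · intro e
    rw [mem_edge (by omega), List.mem_map]
    exact ⟨fun ⟨j, _, h⟩ => ⟨j, h⟩, fun ⟨j, h⟩ => ⟨j, hmem j, h⟩⟩
  · intro j hj
    rw [← List.map_take, List.take_left' hAl]
    apply List.mem_map_of_mem
    have := j.2
    refine List.mem_map.2 ⟨⟨j.val / 3, by omega⟩, List.mem_finRange _, ?_⟩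
    ext
    change min (3 * (j.val / 3) + 2) (n-1) = j.val
    omega

/-- the optimal sequence of Thue numbers -/
def cost (P n t s : ℕ) : ℕ :=
  (if s = 0 then P - 3 else 0) + (if s < t then 1 else 0) + (if s < n then 1 else 0) + 1

theorem sum_lt (t N : ℕ) : ∑ s ∈ Finset.range N, (if s < t then 1 else 0) = min N t := by
  induction N with
  | zero => simp
  | succ N ih => rw [Finset.sum_range_succ, ih]; split_ifs <;> omega

theorem sum_cost (P n t : ℕ) (ht : t ≤ n) :
    ∑ s ∈ Finset.range (n+1), cost P n t s = (P - 3) + t + n + (n + 1) := by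
  simp only [cost, Finset.sum_add_distrib, sum_lt]
  simp
  omega

theorem tau_main {n t i P : ℕ} (hn : 4 ≤ n) (hi : i ≤ 2) (hti : n + i = 3 * t)
    (hP : thueNumber (cycleGraph n) = P) (hP3 : 3 ≤ P) :
    tauIndex (cycleGraph n) = ((P - 3 + t + n + (n + 1) : ℕ) : ℝ) / (n + 1) := by
  have h0 : ∀ l : List (Sym2 (Fin n)),
      thueNumber ((cycleGraph n).deleteEdges {e | e ∈ l.take 0}) = P := by
    intro l; simp [hP]
  apply IsLeast.csInf_eq
  constructor
  · obtain ⟨l, hl, hgood⟩ := exists_ord hn hi hti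
    have hlen := ord_length (by omega) hl
    refine ⟨l, hl, ?_⟩
    rw [tauValue, hlen, ← sum_cost P n t (by omega), Nat.cast_sum]
    congr 1
    apply Finset.sum_congr rfl
    intro s hs
    rw [Finset.mem_range] at hs
    congr 1
    have hlens : (l.take s).length = s := by rw [List.length_take]; omega
    rcases Nat.eq_zero_or_pos s with rfl | hs0
    · rw [h0, cost]; simp; split_ifs <;> omega
    · obtain ⟨e, he⟩ := List.exists_mem_of_length_pos (l := l.take s) (by omega)
      obtain ⟨j, rfl⟩ := (mem_edge (by omega) e).1 ((hl.2 e).1 (List.mem_of_mem_take he))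
      have u3 := del_le3 (by omega) {e | e ∈ l.take s} j he
      rcases Nat.lt_or_ge s t with hst | hst
      · obtain ⟨j, a, b, c⟩ := exists_three hn (l.take s) (by omega)
        have := del_ge3 hn {e | e ∈ l.take s} j a b c
        rw [cost, if_neg (by omega), if_pos hst, if_pos (by omega)]
        omega
      · have u2 := del_le2 (by omega) {e | e ∈ l.take s} (fun j hj =>
          (List.take_sublist_take_left hst).subset (hgood j hj))
        rcases Nat.lt_or_ge s n with hsn | hsn
        · obtain ⟨j, a⟩ := exists_one (by omega) (l.take s) (by omega)
          have := del_ge2 (by omega) {e | e ∈ l.take s} j a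
          rw [cost, if_neg (by omega), if_neg (by omega), if_pos (by omega)]
          omega
        · have u1 := del_le1 (by omega) {e | e ∈ l.take s} (fun j => by
            change E j ∈ l.take s
            rw [List.take_of_length_le (by omega), hl.2, mem_edge (by omega)]
            exact ⟨j, rfl⟩)
          have := del_ge1 (by omega) ((cycleGraph n).deleteEdges {e | e ∈ l.take s})
          rw [cost, if_neg (by omega), if_neg (by omega), if_neg (by omega)]
          omega
  · rintro x ⟨l, hl, rfl⟩
    have hlen := ord_length (by omega) hl
    rw [tauValue, hlen, ← sum_cost P n t (by omega), Nat.cast_sum]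
    apply div_le_div_of_nonneg_right _ (by positivity)
    apply Finset.sum_le_sum
    intro s hs
    rw [Finset.mem_range] at hs
    rw [Nat.cast_le]
    have hlens : (l.take s).length = s := by rw [List.length_take]; omega
    rcases Nat.eq_zero_or_pos s with rfl | hs0
    · rw [h0, cost]; simp; split_ifs <;> omega
    · rcases Nat.lt_or_ge s t with hst | hst
      · obtain ⟨j, a, b, c⟩ := exists_three hn (l.take s) (by omega)
        have := del_ge3 hn {e | e ∈ l.take s} j a b c
        rw [cost, if_neg (by omega), if_pos hst, if_pos (by omega)]
        omega
      · rcases Nat.lt_or_ge s n with hsn | hsn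
        · obtain ⟨j, a⟩ := exists_one (by omega) (l.take s) (by omega)
          have := del_ge2 (by omega) {e | e ∈ l.take s} j a
          rw [cost, if_neg (by omega), if_neg (by omega), if_pos (by omega)]
          omega
        · have := del_ge1 (by omega) ((cycleGraph n).deleteEdges {e | e ∈ l.take s})
          rw [cost, if_neg (by omega), if_neg (by omega), if_neg (by omega)]
          omega

theorem cyc_ge3 {n : ℕ} (hn : 4 ≤ n) : 3 ≤ thueNumber (cycleGraph n) := by
  have := del_ge3 hn ∅ ⟨0, by omega⟩ (by simp) (by simp) (by simp)
  simpa using this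

end ThueAux

/-- the τ-index of the cycle `C_n`, `n ≥ 4`, where `n = 3t − i` with
`i ∈ {0,1,2}` (expressed as `n + i = 3t`). -/
theorem tauIndex_cycleGraph (n t i : ℕ) (hn : 4 ≤ n) (hi : i ≤ 2)
    (hti : n + i = 3 * t) :
    (n ∈ ({5, 7, 9, 10, 14, 17} : Set ℕ) →
      tauIndex (cycleGraph n) = (7 * n + i + 6) / (3 * (n + 1))) ∧
    (n ∉ ({5, 7, 9, 10, 14, 17} : Set ℕ) →
      tauIndex (cycleGraph n) = (7 * n + i + 3) / (3 * (n + 1))) := by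
  have hR : (n : ℝ) + i = 3 * t := by exact_mod_cast hti
  have hn0 : (n : ℝ) + 1 ≠ 0 := by positivity
  constructor
  · intro h
    have hex : n ∈ [5, 7, 9, 10, 14, 17] := by simpa using h
    have hP := le_antisymm (ThueAux.cyc_le4 hex) (ThueAux.cyc_ge4 hex)
    rw [ThueAux.tau_main hn hi hti hP (by omega), div_eq_div_iff hn0 (by positivity)]
    push_cast
    linear_combination -(n + 1 : ℝ) * hR
  · intro h
    have hex : n ∉ [5, 7, 9, 10, 14, 17] := by simpa using h
    have hP := le_antisymm (ThueAux.cyc_le3 hn hex) (ThueAux.cyc_ge3 hn)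
    rw [ThueAux.tau_main hn hi hti hP (by omega), div_eq_div_iff hn0 (by positivity)]
    push_cast
    linear_combination -(n + 1 : ℝ) * hR
end

section
/- For the cycle C_n on n ≥ 4 vertices, the Thue reach equals the diameter: π_R(C_n) = diam(C_n) = ⌊n/2⌋. That is, there exists a Thue colouring of C_n using exactly π(C_n) colours in which two vertices at distance ⌊n/2⌋ receive the same colour, and this is the maximum possible distance between equally coloured vertices over all such colourings. -/
open SimpleGraph Function

/-- The Thue reach `π_R(G)`: the maximum, over all Thue colourings `φ` of `G` using
exactly `π(G)` colours and all pairs of distinct equally coloured vertices `u, v`, of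
the distance `d_G(u,v)` (equivalently, the maximum of the positive Thue colour
diameters `π_D(c)`). -/
noncomputable def thueReach {V : Type*} (G : SimpleGraph V) : ℕ :=
  sSup {d | 0 < d ∧ ∃ φ : V → Fin (thueNumber G), Function.Surjective φ ∧
    IsThueColoring G φ ∧ ∃ u v : V, u ≠ v ∧ φ u = φ v ∧ G.dist u v = d}
/-- `w` is (the periodic extension of) a circular square-free word of length `n`. -/
def CSF (n : ℕ) (w : ℕ → ℕ) : Prop :=
  (∀ i, w (i + n) = w i) ∧
    ∀ p, 0 < p → 2 * p ≤ n → ∀ i, ∃ j < p, w (i + j) ≠ w (i + j + p)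

theorem CSF.mod {n : ℕ} {w : ℕ → ℕ} (h : CSF n w) (i : ℕ) : w (i % n) = w i := by
  have : Function.Periodic w n := h.1
  exact this.map_mod_nat i

theorem cyc_adj {n : ℕ} (hn : 3 ≤ n) {u v : Fin n} :
    (cycleGraph n).Adj u v ↔ v.val = (u.val + 1) % n ∨ u.val = (v.val + 1) % n := by
  have hu := u.2
  have hv := v.2
  rw [cycleGraph_adj', Fin.val_sub, Fin.val_sub]
  have key : ∀ a b : ℕ, a < n → b < n → ((n - b + a) % n = 1 ↔ a = (b + 1) % n) := by
    intro a b ha hb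
    rcases le_or_gt n (n - b + a) with h | h
    · rw [Nat.mod_eq_sub_mod h, Nat.mod_eq_of_lt (by omega)]
      rcases eq_or_ne (b + 1) n with h1 | h1
      · rw [h1, Nat.mod_self]; omega
      · rw [Nat.mod_eq_of_lt (by omega)]; omega
    · rw [Nat.mod_eq_of_lt h]
      rcases eq_or_ne (b + 1) n with h1 | h1
      · rw [h1, Nat.mod_self]; omega
      · rw [Nat.mod_eq_of_lt (by omega)]; omega
  rw [key _ _ hu hv, key _ _ hv hu, or_comm]

/-- A non-backtracking walk on a cycle keeps its direction. -/
theorem mono_dir {n : ℕ} (g : ℕ → ℕ) (hg : ∀ i, g i < n) : ∀ m : ℕ,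
    (∀ i < m, g (i + 1) = (g i + 1) % n ∨ g i = (g (i + 1) + 1) % n) →
    (∀ i, i + 2 ≤ m → g i ≠ g (i + 2)) →
    (∀ i < m, g (i + 1) = (g i + 1) % n) ∨ (∀ i < m, g i = (g (i + 1) + 1) % n)
  | 0, _, _ => Or.inl (by intro i hi; omega)
  | 1, h, _ => by
      rcases h 0 (by omega) with h0 | h0
      · left; intro i hi; obtain rfl : i = 0 := by omega
        exact h0
      · right; intro i hi; obtain rfl : i = 0 := by omega
        exact h0
  | m + 2, h, hne => by
      have ih := mono_dir g hg (m + 1) (fun i hi => h i (by omega)) (fun i hi => hne i (by omega))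
      have hm := hne m (by omega)
      have h1 := h (m + 1) (by omega)
      rcases ih with ih | ih
      · left
        intro i hi
        rcases Nat.lt_or_ge i (m + 1) with hlt | hge
        · exact ih i hlt
        · obtain rfl : i = m + 1 := by omega
          rcases h1 with h1 | h1
          · exact h1
          · exfalso
            have h2 := ih m (by omega)
            rw [h2] at h1
            have := Nat.ModEq.add_right_cancel' 1 (show g m + 1 ≡ g (m + 1 + 1) + 1 [MOD n] from h1)
            rw [Nat.ModEq, Nat.mod_eq_of_lt (hg _), Nat.mod_eq_of_lt (hg _)] at this
            exact hm this
      · right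
        intro i hi
        rcases Nat.lt_or_ge i (m + 1) with hlt | hge
        · exact ih i hlt
        · obtain rfl : i = m + 1 := by omega
          rcases h1 with h1 | h1
          · exfalso
            have h2 := ih m (by omega)
            exact hm (h2.trans h1.symm)
          · exact h1

theorem fwd_pos {n : ℕ} (g : ℕ → ℕ) (hg : ∀ i, g i < n) (m : ℕ)
    (h : ∀ i < m, g (i + 1) = (g i + 1) % n) : ∀ i ≤ m, g i = (g 0 + i) % n := by
  intro i
  induction i with
  | zero => intro _; rw [Nat.add_zero, Nat.mod_eq_of_lt (hg 0)]
  | succ i ih =>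
    intro hi
    rw [h i (by omega), ih (by omega), Nat.mod_add_mod, Nat.add_assoc]

theorem bwd_pos {n : ℕ} (g : ℕ → ℕ) (hg : ∀ i, g i < n) (m : ℕ)
    (h : ∀ i < m, g i = (g (i + 1) + 1) % n) : ∀ i ≤ m, g (m - i) = (g m + i) % n := by
  have := fwd_pos (fun i => g (m - i)) (fun i => hg _) m (by
    intro i hi
    have := h (m - (i + 1)) (by omega)
    rwa [show m - (i + 1) + 1 = m - i by omega] at this)
  simpa using this

theorem path_dir {n : ℕ} (hn : 3 ≤ n) {a b : Fin n} (p : (cycleGraph n).Walk a b)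
    (hp : p.IsPath) :
    (∀ i ≤ p.length, (p.getVert i).val = (a.val + i) % n) ∨
    (∀ i ≤ p.length, (p.getVert (p.length - i)).val = (b.val + i) % n) := by
  have hg : ∀ i, (p.getVert i).val < n := fun i => (p.getVert i).2
  have := mono_dir (fun i => (p.getVert i).val) hg p.length
    (fun i hi => (cyc_adj hn).1 (p.adj_getVert_succ hi))
    (fun i hi he => by
      have := hp.getVert_injOn (show i ∈ {i | i ≤ p.length} by simp; omega)
        (show i + 2 ∈ {i | i ≤ p.length} by simp; omega) (Fin.ext he)
      omega)
  rcases this with h | h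
  · left
    intro i hi
    have := fwd_pos (fun i => (p.getVert i).val) hg p.length h i hi
    simpa using this
  · right
    intro i hi
    have := bwd_pos (fun i => (p.getVert i).val) hg p.length h i hi
    simpa using this

theorem thue_of_csf {n k : ℕ} (hn : 3 ≤ n) {w : ℕ → ℕ} (h : CSF n w) (φ : Fin n → Fin k)
    (hφ : ∀ v, (φ v).val = w v.val) : IsThueColoring (cycleGraph n) φ := by
  have hw1 : ∀ i, w i ≠ w (i + 1) := by
    intro i
    obtain ⟨j, hj, hne⟩ := h.2 1 (by omega) (by omega) i
    obtain rfl : j = 0 := by omega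
    simpa using hne
  refine ⟨?_, ?_⟩
  · intro a b hab he
    have he' : w a.val = w b.val := by rw [← hφ, ← hφ, he]
    rcases (cyc_adj hn).1 hab with h1 | h1
    · rw [h1, h.mod] at he'; exact hw1 _ he'
    · rw [h1, h.mod] at he'; exact hw1 _ he'.symm
  · intro a b p hp l hl he
    have hlen : p.length + 1 = l.length + l.length := by
      have := congrArg List.length he
      simpa using this
    have hcard : p.length + 1 ≤ n := by
      have := hp.length_lt
      simpa using this
    have hl0 : 0 < l.length := List.length_pos_iff.2 hl
    have hsq : ∀ j < l.length, φ (p.getVert j) = φ (p.getVert (j + l.length)) := by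
      intro j hj
      have e1 : (p.support.map φ)[j]? = some (φ (p.getVert j)) := by
        rw [List.getElem?_map, ← p.getVert_eq_support_getElem? (by omega)]; rfl
      have e2 : (p.support.map φ)[j + l.length]? = some (φ (p.getVert (j + l.length))) := by
        rw [List.getElem?_map, ← p.getVert_eq_support_getElem? (by omega)]; rfl
      rw [he, List.getElem?_append_left hj] at e1
      rw [he, List.getElem?_append_right (by omega), Nat.add_sub_cancel, e1] at e2
      exact Option.some.inj e2
    have hsq' : ∀ j < l.length, w (p.getVert j).val = w (p.getVert (j + l.length)).val := by
      intro j hj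
      rw [← hφ, ← hφ, hsq j hj]
    rcases path_dir hn p hp with hd | hd
    · obtain ⟨j, hj, hne⟩ := h.2 l.length hl0 (by omega) a.val
      apply hne
      have := hsq' j hj
      rw [hd j (by omega), hd _ (by omega), h.mod, h.mod] at this
      rw [this, Nat.add_assoc]
    · obtain ⟨j, hj, hne⟩ := h.2 l.length hl0 (by omega) b.val
      apply hne
      have := hsq' (l.length - 1 - j) (by omega)
      have e1 := hd (j + l.length) (by omega)
      have e2 := hd j (by omega)
      rw [show p.length - (j + l.length) = l.length - 1 - j by omega] at e1
      rw [show p.length - j = l.length - 1 - j + l.length by omega] at e2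
      rw [e1, e2, h.mod, h.mod] at this
      rw [← this, Nat.add_assoc]

theorem csf_of_thue {n k : ℕ} (hn : 3 ≤ n) (φ : Fin n → Fin k)
    (h : IsThueColoring (cycleGraph n) φ) :
    CSF n (fun i => (φ ⟨i % n, Nat.mod_lt _ (by omega)⟩).val) := by
  refine ⟨fun i => by simp, ?_⟩
  intro p hp hpn i
  by_contra hcon
  push Not at hcon
  let f : ℕ → Fin n := fun j => ⟨(i + j) % n, Nat.mod_lt _ (by omega)⟩
  have hne : (List.range (2 * p)).map f ≠ [] := by simp; omega
  have hchain : ((List.range (2 * p)).map f).IsChain (cycleGraph n).Adj := by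
    rw [List.isChain_iff_getElem]
    intro j hj
    simp only [List.getElem_map, List.getElem_range]
    rw [cyc_adj hn]
    left
    simp [f, Nat.add_assoc]
  have hnd : ((List.range (2 * p)).map f).Nodup := by
    rw [List.nodup_map_iff_inj_on List.nodup_range]
    intro x hx y hy hxy
    have hx := List.mem_range.1 hx
    have hy := List.mem_range.1 hy
    have h1 : (i + x) % n = (i + y) % n := congrArg Fin.val hxy
    have h2 : x ≡ y [MOD n] := Nat.ModEq.add_left_cancel' i h1
    rwa [Nat.ModEq, Nat.mod_eq_of_lt (by omega), Nat.mod_eq_of_lt (by omega)] at h2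
  have hpath : (Walk.ofSupport _ hne hchain).IsPath := by
    rw [Walk.isPath_def, Walk.support_ofSupport]; exact hnd
  refine h.2 _ hpath ((List.range p).map (fun j => φ (f j))) (by simp; omega) ?_
  rw [Walk.support_ofSupport, two_mul, List.range_add, List.map_append, List.map_append]
  simp only [List.map_map]
  congr 1
  apply List.map_congr_left
  intro j hj
  have := hcon j (List.mem_range.1 hj)
  apply Fin.ext
  simp only [Function.comp, f]
  rw [this]
  congr 4
  omega

theorem dist_shift_le {n : ℕ} (hn : 3 ≤ n) (u : Fin n) : ∀ (t : ℕ) (v : Fin n),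
    v.val = (u.val + t) % n → (cycleGraph n).dist u v ≤ t := by
  intro t
  induction t with
  | zero =>
    intro v hv
    rw [Nat.add_zero, Nat.mod_eq_of_lt u.2] at hv
    rw [Fin.ext hv]; simp
  | succ t ih =>
    intro v hv
    let x : Fin n := ⟨(u.val + t) % n, Nat.mod_lt _ (by omega)⟩
    have h1 := ih x rfl
    have hadj : (cycleGraph n).Adj x v := by
      rw [cyc_adj hn]; left
      rw [hv]; simp [x, Nat.add_assoc]
    have hc : (cycleGraph n).Connected := by
      obtain ⟨m, rfl⟩ : ∃ m, n = m + 1 := ⟨n - 1, by omega⟩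
      exact cycleGraph_connected
    have h2 := hc.dist_triangle (u := u) (v := x) (w := v)
    rw [SimpleGraph.dist_eq_one_iff_adj.2 hadj] at h2
    omega

theorem dist_le_half {n : ℕ} (hn : 3 ≤ n) (u v : Fin n) : (cycleGraph n).dist u v ≤ n / 2 := by
  have hu := u.2
  have hv := v.2
  have main : ∀ u v : Fin n, u.val ≤ v.val → (cycleGraph n).dist u v ≤ n / 2 := by
    intro u v huv
    have hu := u.2
    have hv := v.2
    have h1 := dist_shift_le hn u (v.val - u.val) v (by
      rw [Nat.add_sub_cancel' huv, Nat.mod_eq_of_lt hv])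
    have h2 := dist_shift_le hn v (n - (v.val - u.val)) u (by
      rw [show v.val + (n - (v.val - u.val)) = u.val + n by omega, Nat.add_mod_right,
        Nat.mod_eq_of_lt hu])
    rw [SimpleGraph.dist_comm] at h2
    omega
  rcases le_total u.val v.val with h | h
  · exact main u v h
  · rw [SimpleGraph.dist_comm]; exact main v u h

theorem dist_eq_half {n : ℕ} (hn : 3 ≤ n) (u v : Fin n) (h : v.val = (u.val + n / 2) % n) :
    (cycleGraph n).dist u v = n / 2 := by
  have hc : (cycleGraph n).Connected := by
    obtain ⟨m, rfl⟩ : ∃ m, n = m + 1 := ⟨n - 1, by omega⟩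
    exact cycleGraph_connected
  apply le_antisymm (dist_le_half hn u v)
  obtain ⟨p, hp, hl⟩ := hc.exists_path_of_dist u v
  rw [← hl]
  by_contra hlt
  have hu := u.2
  have hv := v.2
  rcases path_dir hn p hp with hd | hd
  · have := hd p.length le_rfl
    rw [Walk.getVert_length, h] at this
    have h2 : n / 2 ≡ p.length [MOD n] := Nat.ModEq.add_left_cancel' _ this
    rw [Nat.ModEq, Nat.mod_eq_of_lt (by omega), Nat.mod_eq_of_lt (by omega)] at h2
    omega
  · have := hd p.length le_rfl
    rw [Nat.sub_self, Walk.getVert_zero, h, Nat.mod_add_mod, Nat.add_assoc] at this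
    nth_rewrite 1 [← Nat.mod_eq_of_lt hu] at this
    have h2 : 0 ≡ n / 2 + p.length [MOD n] := Nat.ModEq.add_left_cancel' u.val this
    rw [Nat.ModEq, Nat.mod_eq_of_lt (by omega), Nat.mod_eq_of_lt (by omega)] at h2
    omega

theorem diam_eq_half {n : ℕ} (hn : 3 ≤ n) : (cycleGraph n).diam = n / 2 := by
  have : Nonempty (Fin n) := ⟨⟨0, by omega⟩⟩
  have hc : (cycleGraph n).Connected := by
    obtain ⟨m, rfl⟩ : ∃ m, n = m + 1 := ⟨n - 1, by omega⟩
    exact cycleGraph_connected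
  apply le_antisymm
  · obtain ⟨u, v, huv⟩ := (cycleGraph n).exists_dist_eq_diam
    rw [← huv]; exact dist_le_half hn u v
  · have := SimpleGraph.dist_le_diam (SimpleGraph.connected_iff_ediam_ne_top.1 hc)
      (u := ⟨0, by omega⟩) (v := ⟨n / 2, by omega⟩)
    rwa [dist_eq_half hn _ _ (by simp; rw [Nat.mod_eq_of_lt (by omega)])] at this

/-- There is a circular square-free word of length `n` over `{0, …, k-1}` with two equal
antipodal letters. -/
def Good (k n : ℕ) : Prop :=
  ∃ w : ℕ → ℕ, CSF n w ∧ (∀ i, w i < k) ∧ ∃ i, w i = w (i + n / 2)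

theorem main_of_good {n k : ℕ} (hn : 4 ≤ n) (hg : Good k n)
    (hmin : ∀ k' < k, ∀ w : ℕ → ℕ, CSF n w → ¬ ∀ i, w i < k') :
    thueReach (cycleGraph n) = (cycleGraph n).diam ∧
    (cycleGraph n).diam = n / 2 ∧
    (∃ φ : Fin n → Fin (thueNumber (cycleGraph n)), Function.Surjective φ ∧
      IsThueColoring (cycleGraph n) φ ∧
      ∃ u v : Fin n, u ≠ v ∧ φ u = φ v ∧ (cycleGraph n).dist u v = n / 2) ∧
    (∀ φ : Fin n → Fin (thueNumber (cycleGraph n)), Function.Surjective φ →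
      IsThueColoring (cycleGraph n) φ → ∀ u v : Fin n, u ≠ v → φ u = φ v →
        (cycleGraph n).dist u v ≤ n / 2) := by
  obtain ⟨w, hw, hk, i, hi⟩ := hg
  have hnum : thueNumber (cycleGraph n) = k := by
    apply le_antisymm
    · exact Nat.sInf_le ⟨fun v => ⟨w v.val, hk _⟩, thue_of_csf (by omega) hw _ (fun v => rfl)⟩
    · apply le_csInf
      · exact ⟨k, fun v => ⟨w v.val, hk _⟩, thue_of_csf (by omega) hw _ (fun v => rfl)⟩
      · rintro k' ⟨φ, hφ⟩
        by_contra hlt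
        exact hmin k' (by omega) _ (csf_of_thue (by omega) φ hφ) (fun i => Fin.is_lt _)
  rw [hnum]
  have hdiam := diam_eq_half (n := n) (by omega)
  have hex : ∃ φ : Fin n → Fin k, Function.Surjective φ ∧
      IsThueColoring (cycleGraph n) φ ∧
      ∃ u v : Fin n, u ≠ v ∧ φ u = φ v ∧ (cycleGraph n).dist u v = n / 2 := by
    refine ⟨fun v => ⟨w v.val, hk _⟩, ?_, thue_of_csf (by omega) hw _ (fun v => rfl),
      ⟨i % n, Nat.mod_lt _ (by omega)⟩, ⟨(i + n / 2) % n, Nat.mod_lt _ (by omega)⟩, ?_, ?_, ?_⟩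
    · by_contra hns
      have : ∃ c : Fin k, ∀ v : Fin n, w v.val ≠ c.val := by
        unfold Function.Surjective at hns
        push Not at hns
        obtain ⟨c, hc⟩ := hns
        exact ⟨c, fun v hv => hc v (Fin.ext hv)⟩
      obtain ⟨c, hc⟩ := this
      have hck := c.2
      have hc' : ∀ i, w i ≠ c.val := fun i => by
        rw [← hw.mod]; exact hc ⟨i % n, Nat.mod_lt _ (by omega)⟩
      refine hmin (k - 1) (by omega) (fun i => if w i < c.val then w i else w i - 1) ?_ ?_
      · refine ⟨fun i => by simp only [hw.1], fun p hp hpn i => ?_⟩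
        obtain ⟨j, hj, hne⟩ := hw.2 p hp hpn i
        refine ⟨j, hj, ?_⟩
        have h1 := hc' (i + j)
        have h2 := hc' (i + j + p)
        dsimp only
        split_ifs <;> omega
      · intro i
        have h1 := hc' i
        have h2 := hk i
        split_ifs <;> omega
    · intro he
      have h1 : i % n = (i + n / 2) % n := congrArg Fin.val he
      have h2 : 0 ≡ n / 2 [MOD n] := Nat.ModEq.add_left_cancel' i h1
      rw [Nat.ModEq, Nat.mod_eq_of_lt (by omega), Nat.mod_eq_of_lt (by omega)] at h2
      omega
    · apply Fin.ext
      simp only [hw.mod, hi]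
    · apply dist_eq_half (by omega)
      simp
  refine ⟨?_, hdiam, hex, fun φ _ _ u v _ _ => dist_le_half (by omega) u v⟩
  rw [hdiam]
  unfold thueReach
  rw [hnum]
  apply le_antisymm
  · apply csSup_le'
    rintro d ⟨_, φ, _, _, u, v, _, _, rfl⟩
    exact dist_le_half (by omega) u v
  · apply le_csSup
    · refine ⟨n / 2, ?_⟩
      rintro d ⟨_, φ, _, _, u, v, _, _, rfl⟩
      exact dist_le_half (by omega) u v
    · obtain ⟨φ, h1, h2, u, v, h3, h4, h5⟩ := hex
      exact ⟨by omega, φ, h1, h2, u, v, h3, h4, h5⟩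

theorem no_two {n : ℕ} (hn : 4 ≤ n) : ∀ k' < 3, ∀ w : ℕ → ℕ, CSF n w → ¬ ∀ i, w i < k' := by
  intro k' hk' w hw hlt
  have hw1 : ∀ i, w i ≠ w (i + 1) := by
    intro i
    obtain ⟨j, hj, hne⟩ := hw.2 1 (by omega) (by omega) i
    obtain rfl : j = 0 := by omega
    simpa using hne
  obtain ⟨j, hj, hne⟩ := hw.2 2 (by omega) (by omega) 0
  apply hne
  have a := hw1 (0 + j)
  have b := hw1 (0 + j + 1)
  have c := hlt (0 + j)
  have d := hlt (0 + j + 1)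
  have e := hlt (0 + j + 2)
  rw [show 0 + j + 1 + 1 = 0 + j + 2 by omega] at b
  omega
/-- The `i`-th base-four digit of `X`. -/
def dig (X i : ℕ) : ℕ := (X >>> (2 * i)) % 4

theorem dig_lt (X i : ℕ) : dig X i < 4 := Nat.mod_lt _ (by norm_num)

theorem dig_eq (X i : ℕ) : dig X i = X / 4 ^ i % 4 := by
  rw [dig, Nat.shiftRight_eq_div_pow, pow_mul]
  norm_num

theorem dig_ne_of_testBit {X i j : ℕ}
    (h : (X.testBit (2 * i) ^^ X.testBit (2 * j)) = true ∨
      (X.testBit (2 * i + 1) ^^ X.testBit (2 * j + 1)) = true) : dig X i ≠ dig X j := by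
  intro he
  have key : ∀ i e, e < 2 → X.testBit (2 * i + e) = (dig X i).testBit e := by
    intro i e he
    rw [dig, show (4 : ℕ) = 2 ^ 2 by norm_num, Nat.testBit_mod_two_pow, Nat.testBit_shiftRight]
    simp [he]
  have k0 := key i 0 (by norm_num)
  have k1 := key j 0 (by norm_num)
  have k2 := key i 1 (by norm_num)
  have k3 := key j 1 (by norm_num)
  rw [Nat.add_zero] at k0 k1
  rw [k0, k1, k2, k3, he] at h
  simp at h

/-- Windowed disjunction of the digits of `S`, by doubling. -/
def smear (p : ℕ) : ℕ → ℕ → ℕ → ℕ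
  | 0, _, S => S
  | f + 1, q, S => bif Nat.ble p q then S else
      smear p f (q + min q (p - q)) (S ||| (S >>> (2 * min q (p - q))))

theorem smear_spec (p E : ℕ) : ∀ f q S, q ≤ p →
    (∀ i e, S.testBit (2 * i + e) = true → ∃ j < q, E.testBit (2 * (i + j) + e) = true) →
    ∀ i e, (smear p f q S).testBit (2 * i + e) = true →
      ∃ j < p, E.testBit (2 * (i + j) + e) = true := by
  intro f
  induction f with
  | zero =>
    intro q S hq h i e hs
    obtain ⟨j, hj, h1⟩ := h i e hs
    exact ⟨j, by omega, h1⟩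
  | succ f ih =>
    intro q S hq h i e hs
    rw [smear] at hs
    cases hb : Nat.ble p q with
    | true =>
      rw [hb] at hs
      obtain ⟨j, hj, h1⟩ := h i e hs
      exact ⟨j, by omega, h1⟩
    | false =>
      rw [hb] at hs
      refine ih _ _ (by omega) ?_ i e hs
      intro i e h2
      rw [Nat.testBit_or, Nat.testBit_shiftRight, Bool.or_eq_true] at h2
      rcases h2 with h2 | h2
      · obtain ⟨j, hj, h1⟩ := h i e h2
        exact ⟨j, by omega, h1⟩
      · rw [show 2 * min q (p - q) + (2 * i + e) = 2 * (i + min q (p - q)) + e by ring] at h2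
        obtain ⟨j, hj, h1⟩ := h _ e h2
        refine ⟨min q (p - q) + j, by omega, ?_⟩
        rwa [← Nat.add_assoc]

theorem mask_testBit : ∀ m i : ℕ, i < m → ((4 ^ m - 1) / 3).testBit (2 * i) = true := by
  have h4 : ∀ m : ℕ, 4 ^ m % 3 = 1 := by
    intro m; rw [Nat.pow_mod]; simp
  intro m
  induction m with
  | zero => intro i hi; omega
  | succ m ih =>
    intro i hi
    have e : (4 ^ (m + 1) - 1) / 3 = 2 ^ 2 * ((4 ^ m - 1) / 3) + 1 := by
      have := h4 m
      rw [pow_succ]; omega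
    rw [e, Nat.testBit_two_pow_mul_add _ (by norm_num)]
    rcases i with _ | i
    · simp
    · rw [if_neg (by omega), show 2 * (i + 1) - 2 = 2 * i by omega]
      exact ih i (by omega)

/-- No square of half-length `p` starts at a position `< m` of `X`. -/
def chk (X m p : ℕ) : Bool :=
  let S := smear p p 1 (X ^^^ (X >>> (2 * p)))
  Nat.beq ((S ||| (S >>> 1)) &&& ((4 ^ m - 1) / 3)) ((4 ^ m - 1) / 3)

theorem chk_spec {X m p : ℕ} (hp : 0 < p) (h : chk X m p = true) (i : ℕ) (hi : i < m) :
    ∃ j < p, dig X (i + j) ≠ dig X (i + j + p) := by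
  have h1 := Nat.eq_of_beq_eq_true h
  have h2 := congrArg (fun Y => Y.testBit (2 * i)) h1
  rw [Nat.testBit_and, mask_testBit m i hi, Bool.and_true, Nat.testBit_or, Nat.testBit_shiftRight,
    Bool.or_eq_true] at h2
  have key : ∀ e < 2, (smear p p 1 (X ^^^ (X >>> (2 * p)))).testBit (2 * i + e) = true →
      ∃ j < p, dig X (i + j) ≠ dig X (i + j + p) := by
    intro e he hs
    obtain ⟨j, hj, hb⟩ := smear_spec p (X ^^^ (X >>> (2 * p))) p 1 _ hp
      (fun i e h => ⟨0, by omega, h⟩) i e hs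
    refine ⟨j, hj, dig_ne_of_testBit ?_⟩
    rw [Nat.testBit_xor, Nat.testBit_shiftRight,
      show 2 * p + (2 * (i + j) + e) = 2 * (i + j + p) + e by ring] at hb
    obtain rfl | rfl : e = 0 ∨ e = 1 := by omega
    · left; exact hb
    · right; exact hb
  rcases h2 with h2 | h2
  · exact key 0 (by omega) h2
  · exact key 1 (by omega) (by rwa [Nat.add_comm])

/-- `chk` for all half-lengths `1, …, P`. -/
def chkAll (X m : ℕ) : ℕ → Bool
  | 0 => true
  | P + 1 => chk X m (P + 1) && chkAll X m P

theorem chkAll_spec {X m : ℕ} : ∀ {P : ℕ}, chkAll X m P = true → ∀ p, 0 < p → p ≤ P →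
    ∀ i < m, ∃ j < p, dig X (i + j) ≠ dig X (i + j + p) := by
  intro P
  induction P with
  | zero => intro _ p h1 h2; omega
  | succ P ih =>
    intro h p h1 h2 i hi
    rw [chkAll, Bool.and_eq_true] at h
    rcases Nat.lt_or_ge P p with h3 | h3
    · obtain rfl : p = P + 1 := by omega
      exact chk_spec h1 h.1 i hi
    · exact ih h.2 p h1 h3 i hi

theorem dig_append_left {X l Y d : ℕ} (hd : d < l) : dig (X + 4 ^ l * Y) d = dig X d := by
  rw [dig_eq, dig_eq]
  obtain ⟨e, rfl⟩ : ∃ e, l = d + (e + 1) := ⟨l - d - 1, by omega⟩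
  rw [pow_add, mul_assoc, Nat.add_mul_div_left _ _ (by positivity), pow_succ, mul_assoc,
    mul_left_comm, Nat.add_mul_mod_self_left]

theorem dig_append_right {X l Y d : ℕ} (hX : X < 4 ^ l) (hd : l ≤ d) :
    dig (X + 4 ^ l * Y) d = dig Y (d - l) := by
  rw [dig_eq, dig_eq]
  obtain ⟨e, rfl⟩ : ∃ e, d = l + e := ⟨d - l, by omega⟩
  rw [pow_add, ← Nat.div_div_eq_div_mul, Nat.add_mul_div_left _ _ (by positivity),
    Nat.div_eq_of_lt hX, Nat.zero_add, Nat.add_sub_cancel_left]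

theorem window_eq {X X' d d' : ℕ} : ∀ r : ℕ, (∀ j < r, dig X (d + j) = dig X' (d' + j)) →
    (X / 4 ^ d) % 4 ^ r = (X' / 4 ^ d') % 4 ^ r := by
  intro r
  induction r with
  | zero => intro _; simp [Nat.mod_one]
  | succ r ih =>
    intro h
    rw [Nat.mod_pow_succ, Nat.mod_pow_succ, ih (fun j hj => h j (by omega))]
    have := h r (by omega)
    rw [dig_eq, dig_eq, pow_add, pow_add, ← Nat.div_div_eq_div_mul, ← Nat.div_div_eq_div_mul]
      at this
    rw [this]

/-- Full check that the base-four digits of `X` form a circular square-free word of length `n`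
with `k` letters (`k = 3` or `k = 4`), whose letters number `0` and `n / 2` agree. -/
def goodChk (k n X : ℕ) : Bool :=
  Nat.blt X (4 ^ n) && (Nat.beq k 4 || (Nat.beq k 3 &&
    Nat.beq ((X &&& (X >>> 1)) &&& ((4 ^ n - 1) / 3)) 0)) &&
  Nat.beq (dig X 0) (dig X (n / 2)) && chkAll (X + 4 ^ n * X) n (n / 2)

theorem good_of_goodChk {k n X : ℕ} (hn : 0 < n) (h : goodChk k n X = true) : Good k n := by
  simp only [goodChk, Bool.and_eq_true, Bool.or_eq_true, Nat.beq_eq, Nat.blt_eq] at h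
  obtain ⟨⟨⟨hX, hk⟩, ha⟩, hc⟩ := h
  have hdbl : ∀ t < 2 * n, dig (X + 4 ^ n * X) t = dig X (t % n) := by
    intro t ht
    rcases Nat.lt_or_ge t n with h1 | h1
    · rw [dig_append_left h1, Nat.mod_eq_of_lt h1]
    · rw [dig_append_right hX h1, Nat.mod_eq_sub_mod h1, Nat.mod_eq_of_lt (by omega)]
  refine ⟨fun i => dig X (i % n), ⟨fun i => by simp, ?_⟩, ?_, 0, ?_⟩
  · intro p hp hpn i
    have hi := Nat.mod_lt i hn
    obtain ⟨j, hj, hne⟩ := chkAll_spec hc p hp (by omega) (i % n) hi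
    refine ⟨j, hj, ?_⟩
    rw [hdbl _ (by omega), hdbl _ (by omega)] at hne
    simpa [Nat.add_assoc] using hne
  · intro i
    have hi := Nat.mod_lt i hn
    have h4 := dig_lt X (i % n)
    rcases hk with rfl | ⟨rfl, hk⟩
    · exact h4
    · by_contra hcon
      have h3 : dig X (i % n) = 3 := by
        have : ¬ dig X (i % n) < 3 := hcon
        omega
      have hb : ∀ e < 2, X.testBit (2 * (i % n) + e) = true := by
        intro e he
        have : X.testBit (2 * (i % n) + e) = (dig X (i % n)).testBit e := by
          rw [dig, show (4 : ℕ) = 2 ^ 2 by norm_num, Nat.testBit_mod_two_pow,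
            Nat.testBit_shiftRight]
          simp [he]
        rw [this, h3]
        obtain rfl | rfl : e = 0 ∨ e = 1 := by omega
        · decide
        · decide
      have hb0 : X.testBit (2 * (i % n)) = true := hb 0 (by omega)
      have := congrArg (fun Y => Y.testBit (2 * (i % n))) hk
      rw [Nat.testBit_and, Nat.testBit_and, Nat.testBit_shiftRight, mask_testBit _ _ hi,
        hb0, Nat.add_comm 1, hb 1 (by omega)] at this
      simp at this
  · simp only [Nat.zero_mod, Nat.zero_add]
    rw [Nat.mod_eq_of_lt (by omega : n / 2 < n)]
    exact ha

/-- All entries of a table of words, of lengths `n, n + 1, …`, pass the check. -/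
def allFrom : ℕ → List ℕ → Bool
  | _, [] => true
  | n, X :: l => goodChk 3 n X && allFrom (n + 1) l

theorem allFrom_spec : ∀ (l : List ℕ) (n : ℕ), 0 < n → allFrom n l = true →
    ∀ m, n ≤ m → m < n + l.length → Good 3 m := by
  intro l
  induction l with
  | nil => intro n _ _ m h1 h2; simp at h2; omega
  | cons X l ih =>
    intro n hn h m h1 h2
    rw [allFrom, Bool.and_eq_true] at h
    rw [List.length_cons] at h2
    rcases eq_or_lt_of_le h1 with h3 | h3
    · subst h3; exact good_of_goodChk hn h.1
    · exact ih (n + 1) (by omega) h.2 m h3 (by omega)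
/-- Lengths of the three variants of the blocks. -/
def blen : ℕ → ℕ
  | 0 => 23
  | 1 => 24
  | _ => 30

/-- The blocks (as base-four numbers): block of letter `a`, variant `c`. -/
def bnum : ℕ → ℕ → ℕ
  | 0, 0 => 6907533760612
  | 0, 1 => 27630135187556
  | 0, 2 => 113173033107363940
  | 1, 0 => 27013505163657
  | 1, 1 => 108054020956553
  | 1, 2 => 442589268613341577
  | 2, 0 => 36447705253394
  | 2, 1 => 145790820566546
  | 2, 2 => 597159202886141458
  | _, _ => 0

/-- Three consecutive blocks. -/
def trip (a b c x y z : ℕ) : ℕ :=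
  bnum a x + 4 ^ blen x * (bnum b y + 4 ^ blen y * bnum c z)

/-- Windows of length 7 at the beginning of a block. -/
def markR (X : ℕ) : Bool := Nat.beq X 6244 || (Nat.beq X 8585 || Nat.beq X 1554)

/-- Windows of length 12 at the end of a block. -/
def markL (X : ℕ) : Bool := Nat.beq X 1646884 || (Nat.beq X 6440521 || Nat.beq X 8689810)

/-- Finite verification for three consecutive blocks. -/
def tripChk (X lx ly : ℕ) : Bool :=
  chkAll X lx 18 &&
  ((List.range lx).all fun d => (markR ((X / 4 ^ d) % 4 ^ 7)) == Nat.beq d 0) &&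
  ((List.range ly).all fun d => (markL ((X / 4 ^ (lx + d - 12)) % 4 ^ 12)) == Nat.beq d 0)

/-- All triples of blocks pass the verification. -/
def tripAll : Bool :=
  (List.range 3).all fun a => (List.range 3).all fun b => (List.range 3).all fun c =>
    (Nat.beq a b || Nat.beq b c) ||
    (List.range 3).all fun x => (List.range 3).all fun y => (List.range 3).all fun z =>
      tripChk (trip a b c x y z) (blen x) (blen y)

theorem tripAll_ok : tripAll = true := by decide +kernel

/-- Basic facts on single blocks. -/
def blkAll : Bool :=
  (List.range 3).all fun a => (List.range 3).all fun x =>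
    Nat.blt (bnum a x) (4 ^ blen x) && Nat.beq (dig (bnum a x) 0) a &&
      (List.range (blen x)).all fun d => Nat.blt (dig (bnum a x) d) 3

theorem blkAll_ok : blkAll = true := by decide +kernel

theorem blk_facts {a x : ℕ} (ha : a < 3) (hx : x < 3) :
    bnum a x < 4 ^ blen x ∧ dig (bnum a x) 0 = a ∧ ∀ d < blen x, dig (bnum a x) d < 3 := by
  have h := blkAll_ok
  simp only [blkAll, List.all_eq_true, List.mem_range, Bool.and_eq_true, Nat.blt_eq,
    Nat.beq_eq] at h
  obtain ⟨⟨h1, h2⟩, h3⟩ := h a ha x hx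
  exact ⟨h1, h2, h3⟩

theorem trip_facts {a b c x y z : ℕ} (ha : a < 3) (hb : b < 3) (hc : c < 3) (hab : a ≠ b)
    (hbc : b ≠ c) (hx : x < 3) (hy : y < 3) (hz : z < 3) :
    chkAll (trip a b c x y z) (blen x) 18 = true ∧
    (∀ d < blen x, markR ((trip a b c x y z / 4 ^ d) % 4 ^ 7) = Nat.beq d 0) ∧
    (∀ d < blen y, markL ((trip a b c x y z / 4 ^ (blen x + d - 12)) % 4 ^ 12) = Nat.beq d 0) := by
  have h := tripAll_ok
  simp only [tripAll, List.all_eq_true, List.mem_range, Bool.or_eq_true, Nat.beq_eq] at h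
  have h1 := (h a ha b hb c hc).resolve_left (by tauto) x hx y hy z hz
  simp only [tripChk, List.all_eq_true, List.mem_range, Bool.and_eq_true, beq_iff_eq] at h1
  exact ⟨h1.1.1, h1.1.2, h1.2⟩

theorem blen_ge (x : ℕ) : 23 ≤ blen x := by
  unfold blen; split <;> norm_num

theorem blen_le (x : ℕ) : blen x ≤ 30 := by
  unfold blen; split <;> norm_num

/-- Starting positions of the blocks. -/
def bpos (c : ℕ → ℕ) : ℕ → ℕ
  | 0 => 0
  | t + 1 => bpos c t + blen (c t)

/-- The index of the block containing position `i`. -/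
def bidx (c : ℕ → ℕ) (i : ℕ) : ℕ := Nat.findGreatest (fun t => bpos c t ≤ i) i

/-- The substituted word. -/
def sub (u c : ℕ → ℕ) (i : ℕ) : ℕ :=
  dig (bnum (u (bidx c i)) (c (bidx c i))) (i - bpos c (bidx c i))

theorem bpos_lt (c : ℕ → ℕ) (t : ℕ) : bpos c t < bpos c (t + 1) := by
  have := blen_ge (c t)
  rw [bpos]; omega

theorem bpos_strictMono (c : ℕ → ℕ) : StrictMono (bpos c) := strictMono_nat_of_lt_succ (bpos_lt c)

theorem bidx_eq {c : ℕ → ℕ} {t d : ℕ} (hd : d < blen (c t)) : bidx c (bpos c t + d) = t := by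
  unfold bidx
  rw [Nat.findGreatest_eq_iff]
  refine ⟨?_, fun _ => by omega, ?_⟩
  · have := (bpos_strictMono c).le_apply (x := t); omega
  · intro m hm _ hle
    have h1 : bpos c (t + 1) ≤ bpos c m := (bpos_strictMono c).monotone hm
    rw [bpos] at h1
    omega

theorem exists_block (c : ℕ → ℕ) (i : ℕ) : ∃ t d, d < blen (c t) ∧ i = bpos c t + d := by
  induction i with
  | zero => exact ⟨0, 0, by have := blen_ge (c 0); omega, rfl⟩
  | succ i ih =>
    obtain ⟨t, d, hd, rfl⟩ := ih
    rcases Nat.lt_or_ge (d + 1) (blen (c t)) with h | h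
    · exact ⟨t, d + 1, h, rfl⟩
    · refine ⟨t + 1, 0, by have := blen_ge (c (t + 1)); omega, ?_⟩
      rw [bpos]; omega

theorem sub_block {u c : ℕ → ℕ} {t d : ℕ} (hd : d < blen (c t)) :
    sub u c (bpos c t + d) = dig (bnum (u t) (c t)) d := by
  unfold sub
  rw [bidx_eq hd, Nat.add_sub_cancel_left]

/-- The number coding the three blocks from block `t` on. -/
def tripAt (u c : ℕ → ℕ) (t : ℕ) : ℕ :=
  trip (u t) (u (t + 1)) (u (t + 2)) (c t) (c (t + 1)) (c (t + 2))

theorem sub_trip {u c : ℕ → ℕ} (hu : ∀ i, u i < 3) (hc : ∀ i, c i < 3) {t d : ℕ}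
    (hd : d < blen (c t) + blen (c (t + 1)) + blen (c (t + 2))) :
    sub u c (bpos c t + d) = dig (tripAt u c t) d := by
  unfold tripAt trip
  have f0 := (blk_facts (hu t) (hc t)).1
  have f1 := (blk_facts (hu (t + 1)) (hc (t + 1))).1
  rcases Nat.lt_or_ge d (blen (c t)) with h | h
  · rw [sub_block h, dig_append_left h]
  · rw [dig_append_right f0 h]
    rcases Nat.lt_or_ge (d - blen (c t)) (blen (c (t + 1))) with h' | h'
    · rw [dig_append_left h', ← sub_block h', bpos]
      congr 1; omega
    · rw [dig_append_right f1 h', ← sub_block (by omega), bpos, bpos]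
      congr 1; omega

theorem bpos_add_period {c : ℕ → ℕ} {k : ℕ} (hc : ∀ i, c (i + k) = c i) (t : ℕ) :
    bpos c (t + k) = bpos c t + bpos c k := by
  induction t with
  | zero => simp [bpos]
  | succ t ih =>
    rw [Nat.succ_add, bpos, ih, hc, bpos]; omega

theorem sub_periodic {u c : ℕ → ℕ} {k : ℕ} (hu : ∀ i, u (i + k) = u i)
    (hc : ∀ i, c (i + k) = c i) (i : ℕ) : sub u c (i + bpos c k) = sub u c i := by
  obtain ⟨t, d, hd, rfl⟩ := exists_block c i
  rw [show bpos c t + d + bpos c k = bpos c (t + k) + d by rw [bpos_add_period hc]; omega,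
    sub_block (by rwa [hc]), sub_block hd, hu, hc]

/-- Boundaries are recognised from the window of length 7 on the right. -/
theorem bd_right {u c : ℕ → ℕ} (hu : ∀ i, u i < 3) (hc : ∀ i, c i < 3)
    (h1 : ∀ i, u i ≠ u (i + 1)) {x y : ℕ} (h : ∀ j < 7, sub u c (x + j) = sub u c (y + j))
    (hx : ∃ t, x = bpos c t) : ∃ t, y = bpos c t := by
  obtain ⟨t, rfl⟩ := hx
  obtain ⟨t', d, hd, rfl⟩ := exists_block c y
  have g0 := blen_ge (c t)
  have g1 := blen_ge (c (t' + 1))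
  have e := window_eq (X := tripAt u c t) (X' := tripAt u c t') (d := 0) (d' := d) 7 (by
    intro j hj
    rw [← sub_trip hu hc (by omega), ← sub_trip hu hc (by omega), ← Nat.add_assoc,
      ← Nat.add_assoc]
    exact h j hj)
  have m0 := (trip_facts (hu t) (hu (t + 1)) (hu (t + 2)) (h1 t) (h1 (t + 1)) (hc t) (hc (t + 1))
    (hc (t + 2))).2.1 0 (by omega)
  have m1 := (trip_facts (hu t') (hu (t' + 1)) (hu (t' + 2)) (h1 t') (h1 (t' + 1)) (hc t')
    (hc (t' + 1)) (hc (t' + 2))).2.1 d hd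
  rw [tripAt, tripAt] at e
  rw [← e, m0] at m1
  have : d = 0 := Nat.eq_of_beq_eq_true (by rw [← m1]; rfl)
  exact ⟨t', by omega⟩

/-- Boundaries are recognised from the window of length 12 on the left. -/
theorem bd_left {u c : ℕ → ℕ} (hu : ∀ i, u i < 3) (hc : ∀ i, c i < 3)
    (h1 : ∀ i, u i ≠ u (i + 1)) {x y : ℕ} (hy0 : bpos c 1 ≤ y + 12)
    (h : ∀ j < 12, sub u c (x + j) = sub u c (y + j))
    (hx : ∃ t, x + 12 = bpos c t) : ∃ t, y + 12 = bpos c t := by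
  obtain ⟨t, hx⟩ := hx
  obtain ⟨t', d, hd, hy⟩ := exists_block c (y + 12)
  have p0 : t ≠ 0 := by
    rintro rfl; simp [bpos] at hx
  have p1 : t' ≠ 0 := by
    rintro rfl
    simp [bpos] at hy hy0; omega
  obtain ⟨t, rfl⟩ := Nat.exists_eq_succ_of_ne_zero p0
  obtain ⟨t', rfl⟩ := Nat.exists_eq_succ_of_ne_zero p1
  rw [Nat.succ_eq_add_one] at *
  have g0 := blen_ge (c t)
  have g1 := blen_ge (c t')
  have g2 := blen_ge (c (t + 1))
  have q0 : bpos c (t + 1) = bpos c t + blen (c t) := rfl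
  have q1 : bpos c (t' + 1) = bpos c t' + blen (c t') := rfl
  have e := window_eq (X := tripAt u c t) (X' := tripAt u c t') (d := blen (c t) + 0 - 12)
    (d' := blen (c t') + d - 12) 12 (by
    intro j hj
    rw [← sub_trip hu hc (by omega), ← sub_trip hu hc (by omega)]
    have := h j hj
    rw [show bpos c t + (blen (c t) + 0 - 12 + j) = x + j by omega,
      show bpos c t' + (blen (c t') + d - 12 + j) = y + j by omega]
    exact this)
  have m0 := (trip_facts (hu t) (hu (t + 1)) (hu (t + 2)) (h1 t) (h1 (t + 1)) (hc t) (hc (t + 1))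
    (hc (t + 2))).2.2 0 (by omega)
  have m1 := (trip_facts (hu t') (hu (t' + 1)) (hu (t' + 2)) (h1 t') (h1 (t' + 1)) (hc t')
    (hc (t' + 1)) (hc (t' + 2))).2.2 d hd
  rw [tripAt, tripAt] at e
  rw [← e, m0] at m1
  have : d = 0 := Nat.eq_of_beq_eq_true (by rw [← m1]; rfl)
  exact ⟨t' + 1, by omega⟩

theorem sub_no_square {u c : ℕ → ℕ} {k : ℕ} (hcsf : CSF k u) (hk : 2 ≤ k) (hu : ∀ i, u i < 3)
    (hc : ∀ i, c i < 3) (hper : ∀ i, c (i + k) = c i) {p s : ℕ} (hp : 0 < p)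
    (hpn : 2 * p ≤ bpos c k) (hs : bpos c 1 ≤ s)
    (hsq : ∀ j < p, sub u c (s + j) = sub u c (s + j + p)) : False := by
  have h1 : ∀ i, u i ≠ u (i + 1) := by
    intro i
    obtain ⟨j, hj, hne⟩ := hcsf.2 1 (by omega) (by omega) i
    obtain rfl : j = 0 := by omega
    simpa using hne
  have hmono := bpos_strictMono c
  have hstep : ∀ t, bpos c (t + 1) = bpos c t + blen (c t) := fun t => rfl
  rcases Nat.lt_or_ge 18 p with hp18 | hp18
  swap
  · obtain ⟨t, d, hd, rfl⟩ := exists_block c s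
    have g1 := blen_ge (c (t + 1))
    have g2 := blen_ge (c (t + 2))
    obtain ⟨j, hj, hne⟩ := chkAll_spec (trip_facts (hu t) (hu (t + 1)) (hu (t + 2)) (h1 t)
      (h1 (t + 1)) (hc t) (hc (t + 1)) (hc (t + 2))).1 p hp hp18 d hd
    apply hne
    have := hsq j hj
    rw [Nat.add_assoc, Nat.add_assoc, sub_trip hu hc (by omega), Nat.add_assoc,
      sub_trip hu hc (by omega), ← Nat.add_assoc] at this
    exact this
  -- boundaries correspond
  have bd : ∀ x, s ≤ x → x < s + p → ((∃ t, x = bpos c t) ↔ ∃ t, x + p = bpos c t) := by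
    intro x hx1 hx2
    by_cases hr : x + 7 ≤ s + p
    · have e : ∀ j < 7, sub u c (x + j) = sub u c (x + p + j) := by
        intro j hj
        have := hsq (x + j - s) (by omega)
        rw [show s + (x + j - s) = x + j by omega] at this
        rw [this]; congr 1; omega
      exact ⟨bd_right hu hc h1 e, bd_right hu hc h1 fun j hj => (e j hj).symm⟩
    · obtain ⟨z, rfl⟩ : ∃ z, x = z + 12 := ⟨x - 12, by omega⟩
      have e : ∀ j < 12, sub u c (z + j) = sub u c (z + p + j) := by
        intro j hj
        have := hsq (z + j - s) (by omega)
        rw [show s + (z + j - s) = z + j by omega] at this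
        rw [this]; congr 1; omega
      rw [show z + 12 + p = z + p + 12 by omega]
      exact ⟨bd_left hu hc h1 (by omega) e,
        bd_left hu hc h1 (by omega) fun j hj => (e j hj).symm⟩
  -- first boundary in the square
  obtain ⟨α, hα, hαlt, hfirst⟩ : ∃ α, s ≤ bpos c α ∧ bpos c α < s + p ∧
      ∀ t, s ≤ bpos c t → bpos c α ≤ bpos c t := by
    obtain ⟨t, d, hd, hs'⟩ := exists_block c s
    have l0 := blen_le (c t)
    have q := hstep t
    rcases Nat.eq_zero_or_pos d with h0 | h0
    · exact ⟨t, by omega, by omega, fun t' ht' => by omega⟩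
    · by_cases hlt : bpos c (t + 1) < s + p
      · refine ⟨t + 1, by omega, hlt, fun t' ht' => ?_⟩
        have a1 : t < t' := hmono.lt_iff_lt.1 (by omega)
        exact hmono.monotone a1
      · exfalso
        obtain ⟨t', ht'⟩ := (bd (bpos c (t + 1) - p) (by omega) (by omega)).2
          ⟨t + 1, by omega⟩
        have a1 : t < t' := hmono.lt_iff_lt.1 (by omega)
        have a2 : t' < t + 1 := hmono.lt_iff_lt.1 (by omega)
        omega
  obtain ⟨β, hβ⟩ := (bd (bpos c α) hα hαlt).1 ⟨α, rfl⟩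
  have hαβ : α < β := hmono.lt_iff_lt.1 (by omega)
  obtain ⟨m, rfl⟩ : ∃ m, β = α + m := ⟨β - α, by omega⟩
  have hm : 0 < m := by omega
  -- all block starts correspond
  have hcorr : ∀ j, bpos c (α + j) < s + p → bpos c (α + j) + p = bpos c (α + m + j) := by
    intro j
    induction j with
    | zero => intro _; exact hβ
    | succ j ih =>
      intro hj
      have hlt := bpos_lt c (α + j)
      have hlt2 := bpos_lt c (α + m + j)
      have i0 := ih (lt_trans hlt hj)
      have ge : bpos c α ≤ bpos c (α + j) := hmono.monotone (by omega)
      obtain ⟨t, ht⟩ := (bd (bpos c (α + (j + 1))) (by rw [← Nat.add_assoc]; omega) hj).1 ⟨_, rfl⟩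
      have t1 : α + m + j < t := hmono.lt_iff_lt.1 (by rw [← Nat.add_assoc] at ht; omega)
      by_cases ht2 : t = α + m + (j + 1)
      · rw [ht, ht2]
      · exfalso
        have t2 : bpos c (α + m + j + 1) < bpos c t := hmono (by omega)
        obtain ⟨t', ht'⟩ := (bd (bpos c (α + m + j + 1) - p) (by omega) (by omega)).2
          ⟨α + m + j + 1, by omega⟩
        have a1 : α + j < t' := hmono.lt_iff_lt.1 (by omega)
        have a2 : t' < α + (j + 1) := hmono.lt_iff_lt.1 (by omega)
        omega
  have hin : ∀ j < m, bpos c (α + j) < s + p := by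
    intro j hj
    by_contra hcon
    have b1 : bpos c (α + j) < bpos c (α + m) := hmono (by omega)
    obtain ⟨t', ht'⟩ := (bd (bpos c (α + j) - p) (by omega) (by omega)).2 ⟨α + j, by omega⟩
    have := hfirst t' (by omega)
    omega
  have hstart : ∀ t, sub u c (bpos c t) = u t := by
    intro t
    have g := blen_ge (c t)
    have := sub_block (u := u) (c := c) (t := t) (d := 0) (by omega)
    rw [Nat.add_zero] at this
    rw [this, (blk_facts (hu t) (hc t)).2.1]
  have h2m : 2 * m ≤ k := by
    have e1 := hcorr (m - 1) (hin (m - 1) (by omega))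
    have e2 := hin (m - 1) (by omega)
    have e3 := bpos_add_period hper α
    have : α + m + (m - 1) < α + k := hmono.lt_iff_lt.1 (by omega)
    omega
  obtain ⟨j, hj, hne⟩ := hcsf.2 m hm h2m α
  apply hne
  have a1 := hin j hj
  have a2 : bpos c α ≤ bpos c (α + j) := hmono.monotone (by omega)
  have := hsq (bpos c (α + j) - s) (by omega)
  rw [show s + (bpos c (α + j) - s) = bpos c (α + j) by omega, hcorr j a1, hstart, hstart] at this
  rw [this]; congr 1; omega

theorem sub_csf {u c : ℕ → ℕ} {k : ℕ} (hcsf : CSF k u) (hk : 2 ≤ k) (hu : ∀ i, u i < 3)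
    (hc : ∀ i, c i < 3) (hper : ∀ i, c (i + k) = c i) : CSF (bpos c k) (sub u c) := by
  have per := sub_periodic hcsf.1 hper
  refine ⟨per, ?_⟩
  intro p hp hpn i
  by_contra hcon
  push Not at hcon
  have hge : bpos c 1 ≤ bpos c k := (bpos_strictMono c).monotone (by omega)
  refine sub_no_square hcsf hk hu hc hper (s := i + bpos c k) hp hpn (by omega) ?_
  intro j hj
  rw [show i + bpos c k + j = i + j + bpos c k by omega,
    show i + j + bpos c k + p = i + j + p + bpos c k by omega, per, per]
  exact hcon j hj

theorem sub_lt {u c : ℕ → ℕ} (hu : ∀ i, u i < 3) (hc : ∀ i, c i < 3) (i : ℕ) : sub u c i < 3 := by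
  obtain ⟨t, d, hd, rfl⟩ := exists_block c i
  rw [sub_block hd]
  exact (blk_facts (hu t) (hc t)).2.2 d hd

theorem sub_start {u c : ℕ → ℕ} (hu : ∀ i, u i < 3) (hc : ∀ i, c i < 3) (t : ℕ) :
    sub u c (bpos c t) = u t := by
  have g := blen_ge (c t)
  have := sub_block (u := u) (c := c) (t := t) (d := 0) (by omega)
  rw [Nat.add_zero] at this
  rw [this, (blk_facts (hu t) (hc t)).2.1]

/-- Choice of variants: `y` blocks of variant 2, then up to index `z` variant 1, then 0. -/
def pat (y z t : ℕ) : ℕ := if t < y then 2 else if t < z then 1 else 0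

theorem pat_lt (y z t : ℕ) : pat y z t < 3 := by
  unfold pat; split_ifs <;> omega

theorem bpos_pat (c : ℕ → ℕ) (s y z : ℕ) (hyz : y ≤ z) : ∀ j, (∀ t < j, c (s + t) = pat y z t) →
    bpos c (s + j) = bpos c s + 23 * j + min j z + 6 * min j y := by
  intro j
  induction j with
  | zero => intro _; simp
  | succ j ih =>
    intro h
    rw [← Nat.add_assoc, bpos, ih (fun t ht => h t (by omega)), h j (by omega)]
    unfold pat
    split_ifs <;> simp only [blen] <;> omega

theorem CSF.shift {n : ℕ} {w : ℕ → ℕ} (h : CSF n w) (s : ℕ) : CSF n (fun i => w (i + s)) := by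
  refine ⟨fun i => ?_, fun p hp hpn i => ?_⟩
  · have := h.1 (i + s)
    show w (i + n + s) = w (i + s)
    rw [show i + n + s = i + s + n by omega]; exact this
  · obtain ⟨j, hj, hne⟩ := h.2 p hp hpn (i + s)
    refine ⟨j, hj, ?_⟩
    show w (i + j + s) ≠ w (i + j + p + s)
    rw [show i + j + s = i + s + j by omega, show i + j + p + s = i + s + j + p by omega]
    exact hne

/-- The inductive step. -/
theorem good_step {n j : ℕ} (hj : 1 ≤ j) (h1 : 23 * j ≤ n / 2) (h2 : n - n / 2 + 30 ≤ 30 * j)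
    (hg : Good 3 (2 * j)) : Good 3 n := by
  obtain ⟨u0, hcsf0, hu0, i0, hi0⟩ := hg
  rw [Nat.mul_div_cancel_left j (by norm_num : 0 < 2)] at hi0
  have hcsf := hcsf0.shift i0
  have hu : ∀ i, (fun i => u0 (i + i0)) i < 3 := fun i => hu0 _
  have hanti : (fun i => u0 (i + i0)) 0 = (fun i => u0 (i + i0)) j := by
    simpa [Nat.add_comm] using hi0
  generalize (fun i => u0 (i + i0)) = u at hcsf hu hanti
  obtain ⟨y1, z1, e1, f1, g1⟩ : ∃ y z, y ≤ z ∧ z ≤ j ∧ n / 2 = 23 * j + z + 6 * y :=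
    ⟨(n / 2 - 23 * j) / 7, (n / 2 - 23 * j) / 7 + (n / 2 - 23 * j) % 7, by omega, by omega,
      by omega⟩
  obtain ⟨y2, z2, e2, f2, g2⟩ : ∃ y z, y ≤ z ∧ z ≤ j ∧ n - n / 2 = 23 * j + z + 6 * y :=
    ⟨(n - n / 2 - 23 * j) / 7, (n - n / 2 - 23 * j) / 7 + (n - n / 2 - 23 * j) % 7, by omega,
      by omega, by omega⟩
  obtain ⟨c, hcdef⟩ : ∃ c : ℕ → ℕ, ∀ t, c t = if t % (2 * j) < j then pat y1 z1 (t % (2 * j))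
    else pat y2 z2 (t % (2 * j) - j) := ⟨_, fun t => rfl⟩
  have hc : ∀ i, c i < 3 := by
    intro i; rw [hcdef]; split_ifs <;> exact pat_lt _ _ _
  have hper : ∀ i, c (i + 2 * j) = c i := by
    intro i; rw [hcdef, hcdef, Nat.add_mod_right]
  have b1 : bpos c j = n / 2 := by
    have := bpos_pat c 0 y1 z1 e1 j (by
      intro t ht
      rw [hcdef, Nat.zero_add, Nat.mod_eq_of_lt (by omega), if_pos ht])
    rw [Nat.zero_add] at this
    rw [this, bpos, min_eq_right f1, min_eq_right (by omega)]; omega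
  have b2 : bpos c (2 * j) = n := by
    have := bpos_pat c j y2 z2 e2 j (by
      intro t ht
      rw [hcdef, Nat.mod_eq_of_lt (by omega), if_neg (by omega), Nat.add_sub_cancel_left])
    rw [two_mul, this, b1, min_eq_right f2, min_eq_right (by omega)]; omega
  have hw := sub_csf hcsf (by omega) hu hc hper
  rw [b2] at hw
  refine ⟨sub u c, hw, sub_lt hu hc, 0, ?_⟩
  have s0 := sub_start hu hc 0
  have s1 := sub_start hu hc j
  rw [b1] at s1
  rw [bpos] at s0
  rw [s0, Nat.zero_add, s1, hanti]
/-- The length `m` word coded by `X` begins with a square of half-length at most `P`. -/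
def sqHead (m X : ℕ) : ℕ → Bool
  | 0 => false
  | p + 1 => (Nat.ble (2 * (p + 1)) m &&
      Nat.beq (X % 4 ^ (p + 1)) (X / 4 ^ (p + 1) % 4 ^ (p + 1))) || sqHead m X p

/-- A square of half-length at most `P` starts in the first `f` positions. -/
def sqAny (P : ℕ) : ℕ → ℕ → ℕ → Bool
  | 0, _, _ => false
  | f + 1, m, X => sqHead m X P || sqAny P f (m - 1) (X / 4)

/-- Exhaustive search: no extension of `X` by `f` letters among `0, 1, 2` is circularly
square-free. -/
def dfs (P : ℕ) : ℕ → ℕ → ℕ → Bool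
  | 0, m, X => sqAny P m (m + m) (4 ^ m * X + X)
  | f + 1, m, X => sqHead m X P || (dfs P f (m + 1) (4 * X) && (dfs P f (m + 1) (4 * X + 1) &&
      dfs P f (m + 1) (4 * X + 2)))

/-- Code of the reversed initial word of length `m`. -/
def revp (w : ℕ → ℕ) : ℕ → ℕ
  | 0 => 0
  | m + 1 => 4 * revp w m + w m

theorem revp_get {w : ℕ → ℕ} (h3 : ∀ i, w i < 3) : ∀ (m i : ℕ), i < m →
    dig (revp w m) i = w (m - 1 - i) := by
  intro m
  induction m with
  | zero => intro i hi; omega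
  | succ m ih =>
    intro i hi
    have := h3 m
    rcases i with _ | i
    · rw [dig_eq, revp, pow_zero, Nat.div_one, Nat.mul_add_mod, Nat.mod_eq_of_lt (by omega)]
      rfl
    · rw [show m + 1 - 1 - (i + 1) = m - 1 - i by omega, ← ih i (by omega), dig_eq, dig_eq,
        revp, pow_succ', ← Nat.div_div_eq_div_mul]
      congr 2; omega

theorem dig_of_eq {X p j : ℕ} (h : X % 4 ^ p = X / 4 ^ p % 4 ^ p) (hj : j < p) :
    dig X j = dig X (p + j) := by
  have e : ∀ Y, dig (Y % 4 ^ p) j = dig Y j := by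
    intro Y
    conv_rhs => rw [← Nat.mod_add_div Y (4 ^ p)]
    rw [dig_append_left hj]
  rw [← e X, h, e, dig_eq, dig_eq, pow_add, Nat.div_div_eq_div_mul]

theorem sqHead_false {n : ℕ} {w : ℕ → ℕ} (h : CSF n w) (h3 : ∀ i, w i < 3) (m : ℕ) :
    ∀ P, 2 * P ≤ n → sqHead m (revp w m) P = false := by
  intro P
  induction P with
  | zero => intro _; rfl
  | succ P ih =>
    intro hP
    rw [sqHead, ih (by omega), Bool.or_false, Bool.eq_false_iff]
    intro hc
    rw [Bool.and_eq_true, Nat.ble_eq, Nat.beq_eq] at hc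
    obtain ⟨hl, he⟩ := hc
    obtain ⟨j, hj, hne⟩ := h.2 (P + 1) (by omega) hP (m - 2 * (P + 1))
    apply hne
    have := dig_of_eq he (j := P - j) (by omega)
    rw [revp_get h3 _ _ (by omega), revp_get h3 _ _ (by omega)] at this
    rw [show m - 2 * (P + 1) + j = m - 1 - (P + 1 + (P - j)) by omega, ← this]
    congr 1; omega

theorem sqAny_false {n : ℕ} {w : ℕ → ℕ} (h : CSF n w) (h3 : ∀ i, w i < 3) {P : ℕ}
    (hP : 2 * P ≤ n) : ∀ f m, f ≤ m → sqAny P f m (revp w m) = false := by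
  intro f
  induction f with
  | zero => intro m _; rfl
  | succ f ih =>
    intro m hm
    obtain ⟨m, rfl⟩ : ∃ m', m = m' + 1 := ⟨m - 1, by omega⟩
    have := h3 m
    have e : revp w (m + 1) / 4 = revp w m := by rw [revp]; omega
    rw [sqAny, sqHead_false h h3 (m + 1) P hP, Bool.false_or, e, Nat.add_sub_cancel]
    exact ih m (by omega)

theorem revp_add {n : ℕ} {w : ℕ → ℕ} (h : CSF n w) (m : ℕ) :
    revp w (n + m) = 4 ^ m * revp w n + revp w m := by
  induction m with
  | zero => simp [revp]
  | succ m ih =>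
    rw [← Nat.add_assoc, revp, ih, revp, Nat.add_comm n m, h.1]; ring

theorem dfs_false {n : ℕ} {w : ℕ → ℕ} (h : CSF n w) (h3 : ∀ i, w i < 3) {P : ℕ} (hP : 2 * P ≤ n) :
    ∀ f m, m + f = n → dfs P f m (revp w m) = false := by
  intro f
  induction f with
  | zero =>
    intro m hm
    obtain rfl : m = n := by omega
    rw [dfs, ← revp_add h, sqAny_false h h3 hP _ _ (by omega)]
  | succ f ih =>
    intro m hm
    have h1 := ih (m + 1) (by omega)
    rw [dfs, sqHead_false h h3 m P hP]
    rw [revp] at h1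
    have := h3 m
    obtain e | e | e : w m = 0 ∨ w m = 1 ∨ w m = 2 := by omega
    all_goals
      rw [e] at h1
      first | rw [h1] | rw [show dfs P f (m + 1) (4 * revp w m) = false from h1]
      simp

theorem no_three {n P : ℕ} (hP : 2 * P ≤ n) (hd : dfs P n 0 0 = true) :
    ∀ k' < 4, ∀ w : ℕ → ℕ, CSF n w → ¬ ∀ i, w i < k' := by
  intro k' hk w hw hlt
  have := dfs_false hw (fun i => lt_of_lt_of_le (hlt i) (by omega)) hP n 0 (by omega)
  rw [revp, hd] at this
  exact absurd this (by decide)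

theorem dfs_5 : dfs 2 5 0 0 = true := by decide +kernel

theorem dfs_7 : dfs 3 7 0 0 = true := by decide +kernel

theorem dfs_9 : dfs 4 9 0 0 = true := by decide +kernel

theorem dfs_10 : dfs 5 10 0 0 = true := by decide +kernel

theorem dfs_14 : dfs 7 14 0 0 = true := by decide +kernel

theorem dfs_17 : dfs 8 17 0 0 = true := by decide +kernel

/-- Words of lengths `18, 19, …`, as base-four numbers. -/
def table : List ℕ := [
  36916462737,
  39076632865,
  310888178786,
  2277969631377,
  2500883745057,
  19899139515544,
  108053090832914,
  79595982840390,
  640072636832033,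
  4936284437104146,
  20374367637738054,
  163899277495638296,
  331175209095796888,
  1263686961265738886,
  2416499584015083033,
  10487060842818380070,
  84760304961068601926,
  113425716594180761106,
  463911884617373074982,
  7251987031293305626916,
  42954993656303924307096,
  82980536834793138426466,
  179912867198195808150625,
  2589648585652967561119817,
  10145457986445906414962249,
  10135998331965964273863049,
  162326962577866683970587012,
  649373286141218065259726372,
  1878789236546112537159569938,
  7766829269833659466750957640,
  41036465458688000243057922441,
  41036465464362649603317795097,
  166060586946769671489015351577,
  3016325877788578117093599516772,
  11530645337873147277802409105697,
  31178227758424679923172495663396,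
  88826560946681228164733814065250,
  367029884304173130464656353530466,
  2720726233342730525047640911548804,
  5690647690285725352614726338103686,
  5873147020793205937656633237997094,
  23492588083216518664802126030014022,
  758584350225411037378344525062505617,
  2752427413711394684175344137750857801,
  12161100037798844342192899254286648465,
  48540679695403972261768057359600551057,
  50699625270853457429891203378314613273,
  516532654175014338580675464870301566500,
  810255513158578070520936450130137154694,
  5961014179322543506844490675977046214754,
  46650961580813757978189149573770044343881,
  132223008450299801582538398246751307075986,
  393559842697678230346861426150710288943494,
  2986415216229485048556931858622520729084305,
  12677933572889563919252225957434095982709025,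
  46202713505044625793394293408486036473152657,
  97773042905333579669368660161617253229498978,
  212251174907617296374946819293454845776110726,
  2241625198229337957340330284853317441283496008,
  1639900194213828145736505767588128788216694310,
  48918285666137863047332527364798494855347340873,
  195670057178109580035897588226099441464498226761,
  140414248118612639197877713084094756533628717129,
  2297205885358706879073378320044920627509444352152,
  6717030656750067202366599138553424838506955805254,
  13293928984625110034057100774713953181932802611494,
  143627199725397119690711570961547556450893430022728,
  222565546724741186133832609864978875159004347507846,
  3100611591765845813684442775129700772269403480032401,
  13692178098553978407218942740504644287645304628994657,
  50237760604281386308039574734903452539659227068176457,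
  200964565314544181352310064796930203085462861153191497,
  803805994092768617158887301781491867414463534673238089,
  3174385033908699160932174198047668690039639575982868041,
  13993213951031526446593706030780165983888216041581741208,
  55751296653835693753749688160305074277136933138859319905,
  27732152281555411336571211302009610523850294711712031014,
  443762442079573450803337385171619012365673077248453874274,
  935255003551053025371248989103343130977271054673953442073,
  13449769168686123838507270696678234007946532657519160091025,
  9858761593306258960957008454529865317547149067286739191334,
  238977956837238384030748866811195621762196302102100672268568,
  956580761652620215782732978755494013116889368932559605867620,
  832145518830921575255619043331948536036173787378120965329289,
  10081473464077756657556978399286903531554070831548601796420760,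
  58467317934321593024618883937898274593394347917970596296018308,
  213072406147724970245416482041676738604214015267433229633872273,
  213029590916232190365905418761053795818621975445500819952210313,
  979538810342653755281888535653649831526276691732530231484449926,
  2584417965151617264390662333084737966400832489641422897218356774,
  59869898792805216843801678225276161199886766367567070745439312161,
  120279767025406537325377954868350660877102552194239184561727179032,
  646896364536629699947485601985283314243954076497803056112793175624,
  3535396083165419364514571961475258025687911593345301951097317134729,
  2646603065536771423956701263182025364654658844333403844076085201289,
  64150156818659190162776037076042215789773591872513583864468148996196,
  64270274919627896748787051458379203963372503504482156997125194786329,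
  924039783642814240927404925157509825477320588066142077596827432591761,
  1970633378873816307954576838707090159220260729742293386143065882256536,
  4105656089613954162515627183234063112922047113173414902540973668140166,
  15692613496028515852849103006116547029029484948927929734913728352494726,
  262759019523565280579045080713486089621399364662703914532600512566600804,
  670373515299363936662369437630783754340182620489462772065432869275772002,
  1936594633203845046633209876177710394474586140629232919581401678177505890,
  16847840366358592893986364151506098178452220072302230716829057600425698436,
  58569204197617234332189402946995747985759363953568028239597152548754629001,
  129926268673405116106361844819293592021677209624542082757543841479271801414,
  695297679327569421326226783070005176866287110774146085384676724609183745608,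
  710942893597108648469733050254428918602096839040554574215196314369974749257,
  11375086312488338193246431512448981659031622278067198350527791603381426341412,
  45465559687798999676295973643384734377143061836335952159469114264624369649188,
  276038743418218251725850847122078149095327800174201372004755587281194508765284,
  995218192936172364840387941498919288034922621332766607213811978273157070217505,
  2095632819711643054244070754403369518180497761877598408948283651441845923615330,
  15532594855627207273680512021504970086091221532983722597988735088688369821323652,
  44988070472057329806229907225824849207251652873405798523637200616087595835269412,
  182070664819466513382292554929675484185541335161933623209728391546128259189348424,
  995061397677724552412655236822671553031504167766096111990289023205667277975918665,
  1130653933669559950050582354981045372440908609849724342900931390052678430719775257,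
  8582685408794383865363007667188880014279695315465523195263443928035383874138020120,
  33233437810070284518013390488732280992690142822917305958532651220768734485827429510,
  277701978692921866654664744711003576551265315507761799183307683190108567270712248609,
  1018945153980005111786054503383594305674663537230582776136243784812905098316978988132,
  2983295352978581879622900705380303376031642803732213355880410148407705437892906653768,
  11793336332237768910660321373893272311870495384096123128044754299138367697421303318052,
  12187756827838173874797057304647790788877315164966083184287062833097854135630534313510,
  283816098625731609849885559806868937026047610529397870025262465623596128824986207392353,
  562542117438141842549715517052667433068677429357127528258326645055639072405268795040866,
  4541128009046256043405453610665236960627523777095140686109710075925447590326884693840408,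
  3054612583025188682126771032118055307105586946678593061354687048027091814941576852038034,
  75735137607816955221753994880981138838552739562289103722215388971171488568440924080216164,
  146283730369329499723496849544135761372398502312685327282605381804545658032253079372567110,
  289584978780087914097774048975368625121628387237453517463523381370328505730722340750629153,
  4377015901230193736754137771578336476735024565432255437896881638945707853169691335207313809,
  19388194151930511043167023959546730881636521448102823159457790129671030821263472779257745944,
  18533283228368184581298572976510928343270060656258904039640126287903328663756797574321300065,
  50051392205579113960863228187054202028173251355109180484718878395781059973899578644989776274,
  1243151197731673869529436421399308553445583644251089780969699555124911253106853620467974115716,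
  4372252094276350580126718703628514191993996549871914529051329751459134521974777653333611288676,
  12664448177300926181397899767765041374244992655223109155251115959346187527037570886104354670692,
  36581236072123224143532242519174055316032564983839338667625162767616779181366433853018123833874,
  51248336139753128128872292031912011728460521812257205899403025095374538644726862911404736930194,
  1119241854100208032807490051478190208308240743143461139558794352701092682427340767886486747104804,
  2340996677118487466852562425513825369743060227579733157524003215359029649879955543818756287767686,
  20329996198977502608204432770047020338152996844938217979770328426192707632358226922883381830490392,
  19433556218315549001383651058471855238341893639007030507349177297278705088922566898946940443189542,
  78014774707615156880204089590766035567171043628133287778886814652850094348531536976617488086802726,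
  1132282963239283659536452306272914334186688677638935805229781303584297032393394026629927052538618249,
  618447661837537890823299994036125737735179589286627976916683499151960516440097194308431929129141830,
  13741122852865523929141244198482587957742713771590404339397456832303864321743362016989717239190591560,
  75196407954604585560022126188310674554053456027053392063591011649558970659865032612068924146630039697,
  219564791911195891072747241795129018407834275524538004009055163529802684974214481606142456221570472008,
  1174840179121732162112232651167003802678913640520469603998217064068238961148988343266870613246797301833,
  2452233946829678529330732593290039850178403583054840571952160908100416405258223054282806623130773506146,
  13756794753502837292567487630245060890430383879192872173917821030488195589605677807157144070363795310098,
  10232284174122825395601489053022863592226148093376055789523318569757993857292022485777720425911130069286,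
  164701126919449877223472105140009693612444756597743113403476938914568870444324132806253493917525148321352,
  1303864760929448011023587619892134106967558442886817592052788760989854155755524100155322410608753104937249,
  1364322870968603588096705248857191250763473090739598381972971606259139332640280615688632223827075489433158,
  3480782884394354099762216085260207198399209294587757564505963257727328642446167093228636155825510119186825,
  20938468672168115528354470018656548058229638960530789977323539680597037643793125123109605579159842310424134,
  83466488378643649601389593613758123557849678426887668643562462098036347126233029735905214955751301322253446,
  1230618947933241243809232169830895397524602710456600012791155820865656118754154370183769557496977470104413284,
  2579095402479938455833768070850859036519840557790328778636245928356318418355944070433531772449940848049800722,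
  3564725255988478894752359054248963404666343395720605701305300865507500171620515523620075147278936533111425417,
  85438612278366478375639361380945473627197342454150981998168015717468359333878033109914379003449074529392157848,
  229148915100566304313447246274211560353176774086771227086108385989713782623174652662896189485016612852643996770,
  1367526296915560652258908271343298152691828671000704767864472438474755419567303371412205248031795868862568080516,
  2635728902664518493000424401610227502814844692839406088380138932815631885289858897356622735133464940613583016466,
  5468081646599900443166143365708913170842788926019726317313278811162004128421193689886667589745806891969094455905,
  20184270068423073015363782681573472128259286367992674094015692019458611512975189992451774223498127080374845973601,
  168686650265452628473913165524128226012560187915926730111745924549047562902302621663114355591579582167997918815762,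
  676090444241241442024367179741871391074017259315503711217310215663534691637442940717200782430194697743898425575522,
  966945558440861397765014236791117318425525362283828760564011923636052805413300062040433131791335813947324342085138,
  15483136959708369682473071387180948437092301828787339712276504105035412664383773008789255153401708694119510246496328,
  84425656620262786632530543213463348849196042157549115705738924085596571074481104419307557425843638724387689751413905,
  93931112275149341328591226671116853621342607545590439227783448453595934014352230746305756669924186168994064713746721,
  1354618039629883994329185730330204788047388434384510573165823535017677522124413789727040662289819300165535050274801953,
  5418483236595143363318400983041133057064165843810236865423880904179486764566937889200714358046742444334996354469486881,
  3955326458695102709073696262924146803869974714368164882475023506037729722255648027925475380752510898733316838567216678,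
  84658991771989985967284815593150576882203486356206330449522124371423541290072814895375885610475005849245636854811084873,
  182533547993727006912568431799642287203827183895987566559183733444594773040867513830435581457260985915190159284989168006,
  1013976826762991141644368836164492145438986970340892975122097938933005939158918906456122919489218225631837034583697941656,
  2916551981688034627149753550755145568084044336085941634280067206432506572835129362070935801041679318410479367164570735202,
  11797005218796689723544260497461631499743523712907756860524220337558352437507659564412361913684449221883546349876947345992,
  86682070158064111407332670920392506556801859503369215292637479847692639199280937354596714024459443373606890445306959831433,
  259763934450931297507150179050369531418199102733710182214876975945804774717461804926234217498398833562879217050355797353032,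
  375902793899680623189416278059435709308746857894388529406641032109089216450864785497826393184864170514760745387018569409121,
  5475361020028763956777305276194579779557758931506905145838799739383125655672825544409062015008925371986993922799079828562321,
  22657389585560217218722068161202520392251390899166364541717187801715512263479070419305143776535902924233686233865060941373841,
  100740268335008802149525384998573040871768773161652446126392893810792078318869189969354881600705543651612512466882013790769540,
  350613453084747081758372266226018466625256632552034861513413021284330511421164659747801129775033100204207450774049082688741777,
  1539331811239991382581839212532170492119152916769010989539029676473354768811437543677751026192772861262070372387733875947096452,
  4246813402292821667060903838044822052060736621087060538581119311765232573622167895911363309961962890064124096002021062248536136,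
  16632356927090104281635333114486071421556280994254181523723961840701490857095345395789443188455178407197315334832099004145354312,
  98516108494940821221278464117678834875954845698080387444948656239537822949212507952698165868062706871224950826114629900096115297,
  363595424445118383312529715232362416069402914700597499800199539046651636452544732128397722565761946081332569963846478175211243081,
  759762548589363574542140618427741669418256431694217487067628765607952181680089718556275138331553882612342439822512983401744077330,
  5939355441919610960520946389813337045781332615774159629779461381884071602783656370979157237146828505363226128003747451134120445513,
  17418942160338656861156427832363836999431405879400404353502129105934300690496279519936024723029256433519527495993761628954091100232,
  17030034218132049198566606559592868471331289618156400862641964338801248395162416270375901014349710529436662227131555105119928621202,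
  405874152527398149400703131599742250634475290821259484853189280920464582940997811081180040844537268685502799549603159407139484174625,
  403522319617244013346727655895530104416102969818813672576042713484196509200548957821428675304818135130211453803779426310219412640353,
  3108575358435039469945382112420016629294107775206001604822988499080178410322932848188905042174115566514287493733694175857449799010402,
  4453319862512502330941701173719314976618682518443219828666105471235113304126752251961024857408274926111313383187220294966884794929554,
  51384764136684561565591852746261781364072143887841882797988458662613410269364054398718256928692617987612300105991470337385508561519768,
  381232568913238725530668612566000148492740598772273670265280625157909843463572247555503951147946039829829845336172843752443327475190148,
  1505061628884655671993035689000838387397508090956826414914497006048882079100524975838113119914109336686154606657119207002660859229128777,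
  1658911524890541016175591369055353273388746068460665635901929178949779845451232300773860956990675851034644943012015367177283546011763846,
  26445216502924458509250685379011875795489391180484571535533736994713645210115412322786979974959771727379384179651123917477048190207365729,
  106170337524827172706234021604447075992914240502719134994014889019269161802505496468527470076264583038138376467637785156302686154174596241,
  106170649526532679478305842204096587830381074481554808402012072586016492671602863772830594556303026168644686774363411814640910832346694790,
  850089197801254047205898559799139281842155480358348451948134905620090280101709736605561955499217971884619521289003375915832873841952186952,
  6246114502108567703889806349301716658014282861890757550846017837982486484560512912476242360694308702333701549150348649985588337075158140489,
  28335366439454788336683320317288108734871918346262109451944420557128528608280739261591560993715299247258214536713753095447207301271416869400,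
  53880204259667547739720162557118868996857956720429811774686243710094783141504344256960879441624305599775618507187368281757590956731199988834,
  394542875344573875393245503880891922592795794854491718454784091080838486916824988861648276992105443822800376274502946505420715444044580395153,
  1739814610957178538663361494627821358901543443204544513115895118994573768870342919858138683398817363611086343847247126958376519594785300302104,
  1170305110957343237818189968634121319376892914999625768635509611011346630195366180379333571764626649922610703149199210213180192520060276990354,
  14007793688383715229759679979258205614474010229889459544304594791246396967037528243460790275885292803582337577660322134867433212985935229388360,
  104512641884352279900366502984629409826592146270240789147481729515746403616433658352710378429274655909860672848885149142924164852539385713942929,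
  110919370541499082658892889400077061267776021980321636639877188578667575855245453750795838938457906265132242435991183975947371946798628982891617,
  1637483513637121514448314153708743577709129809757268285076275493030540487288600468949810173251231273266660149367868320654891977678454921646674308,
  1857020063110278970176842737473067024249207154312149582464200301519369262316693985510383216794290482908986998501316996826905032757961925826545945,
  3565430736889658492383569728565302655874195520599767258139672497826842433905529695284529622113910874843902823399968156621519389802317593268590886,
  57048579300422794486789437005928433905350985181952044207942621684166238668869873919612961969377392055183166487777646376261390246769827000904868424,
  78339879960908387119191700918150439522025616443256515604445318944962881102202972407792940203833629996258061130475063115811729065012132512958547494,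
  1256141409554873043422773184078976384420352339836430774176927561657857915849142539859956767630578875902405060535202591439092289443972261920094951576,
  1905123662068813383118279304547122106937402091961867872841754258834468226838935866405784705923248003870629848404369313595579087237951889544303446305,
  26477334454727145175542386948255872116919386287798491658953833282091174297428656917765057254335080858520807959810665627568103979417877841548805440657,
  56055733888540461451875862148005086152659819917088214103684183097039756189953015005842295832834664429823977758172531616933659303660858696519557597574,
  465172606825200026354999690911655099269570027798491074555672837976799628643313494515614262097841482224827554222443751895249882022467982881616925581921,
  1257968191490196287205002495495863873502509351611743339279375675176584673878900348509758927007421874827366435217087513229527163084654463315517242630728,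
  6781850517486106518063168065025555668290268768232509175539546869723418105909174048783629939710729685246030911946239647928904399315234762709923522709028,
  27112679826693821913497568942755576581839437375439052294571623889927465364700492998131315923811559066375565650652925648863063175271594977340464044329033,
  59242600919797842906958126444398148060755553003967078043736428867739678062141180416515605622903419249368545331286560222231073389354741154927120671122530,
  59819770754129990433826416683326137738456016065401577113331049804555288171332099870737197426394722904069339345778991519236167954128085271209120413325458,
  1271936921966008146242021522751183195900337150875706044371057559100402122220047786846293042237491703870269647637348110030541726268044573048693954321729634,
  7032938488287777765107876468421240269697720226601561157966425836587150063041391882598972510579079878473085951235899882842721748286205960980171981280544329,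
  27778224115025182457170797137531062646605536617646317100336804922378061088582869565478794314419575275470760150743544390476962086762865408689945358327236132,
  112527332247719153016997689451816594786751054715675822174609682030238274937419759544346581131694529721208931830758394152053071807481695221011006377780875657,
  336482064535298396614718974130719835998745785839902713323988857453027835232604682343202397326874368436877804345016045974627425024177671442073105992321098904,
  1348756633206894211644505915807514884675820711168695497838659172913918675811820859144993389858345013486265906131788318331558810883987667674093981461134252184,
  7111248452406278253268144170002863296310011817909433835876033556356537584177572139437847744755106590126821515372912630637014386291948379114461333564837632145,
  8167113154578205311236135156266152909452363766163317376869546097405399131283293697307731664114751116623028480627809142674358404312339022317160268376106735905,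
  21563606526786647626724802656424510433451508556376299936214490945592403165311164336378713151614980288143761077554110686190942472129075861331603769807243647270,
  124868671657032947686952963025873575877808635855750343338383952272375751356680700993707252763576167509987102026616091662765439594053847526302002872716404820257,
  993801447711970593374878327352163498704323603621951301496059142801002012894044177007232801810385253219324927375937467657025419961371395029592154841710372395160,
  8378822497512590523261531345108123249426016908752641161070220959695429780840152282363154767665277272740766228513196704813295298162831221797470322817298524031076,
  32088015340178709713099418726237183185545413759005333269312669065994195316225257892456900368365564791236093148795798655478115867017455088427455593738149470438552,
  128352424167065836344933322771942704384197377219386552574724132673642034926837218637581393770552242085033186972660176073640431252152990777314425850045140792906337,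
  513502636388360604392122648378489088443454513966435577553202174697587770989233222482401191508787519408209252968814975077169569720892330319642764573306406291509784,
  511648085156886146874412615784072992047010851680744530598192589183744968961421594392184216759892483358738102337137633420068106070044527945503225375707773117499681,
  4065080146028526106452385262551874417438811876866126813587772302276699778249588940902291002142429250074025472418379976668158749830706384927459779774795089383133794,
  22628631851235207169574985127188600519998881712520998658492391537487026622610097235303497300165423657690523499669311546937795070298048564008376195227376672257415240,
  90513902058058705234021134828964140804667568161904766346210979316689916977084633504103977936033970133121909106718845911633056860607477875162113886113303506715173448,
  90319708862374436981779397791256792949198503935004314719972918712818067674972106068994474495743942681112448992977222411822186833791932568724699696767970279695730214,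
  361777268625813681218270980312101972087475901243393605790214037308871963990396575383636339653327126837781897585126096043191771548038855062616710609219338603778426386,
  1908527623759937518675913960957515093207498823056323514888836946305892393871824281476059249730088518099933422718163857436552918186896567345638359519636432098691533193,
  4234632108451644780289499000714163307516934611408998866620566155115752171014079946636410674289719280565756978044958713828353847451569857186522161210895395966236791186,
  22638791130496110190195523030910284790338365169878458705264021737948221795223106477216259142032160679841782686655241213681563329616321900053043577739069749676537581970,
  488683831536499839363717110019006282488516207817049424438579572246208762853342651518295686120629415376169743746665210052463009694632285127500262866469559243069672546705,
  2244958495125140003049817558287318983201000055540116650617697167705304782395088404171639679624013606744451400347004996974399133090476492605792258055517523348058994252056,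
  1432073157701021848828635763320071422914428427339154998368301462223441646320153584500600012731421520252874908488060082727229168959528048230791288399581800979707063248409,
  32345482523001194646890517180326698456483307298805807280895504888629839126948786198192458485605482882234570674632910494003882855121486875374511020481709486605944806859041,
  68302068581760362818249963192743777549739437850674661101889923460890296129566866811478242687461188884224947967494404762977282972746433537065231509620577957552643133432930,
  264738609361752818451675887997192754444758179962936695197037495398793229522622564832233896260500803455621067892780996304302031843876588653421544179255484380066805771768418,
  2197530032535431254454018703313230009010314801399031120216151373215914224512976501125683485711631631775839124494094251419577801114748097508778616965958574662175090352424088,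
  2001648844736765947947925598719363813240781139334964513945014962083236834658134749940520112173071568151250181253518822881673286942604301600693321670537349869284769558565401,
  35147474363184626279193556168192904083797218014117266270051338816705838144778411270470196784510416107963087204686507468554067029223084626723858025841894832647839022594688152,
  129739527870938025787240202024616966777876900807176518626021269093256562971166471488535091320004649074946487137445362210051837089895168077916173528272108958520717166350995844,
  379785649380865058488739534804110051551814191116319617085509626265052616800585748607109578776719275108861021799085173800498213548650714845501801259062814838462272426474627656,
  282490614891296619258952777680977565028991932063054269237056434114041835083616997268657129075442925575419220365294338309343367645111068984390877913587811900638492310289651858,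
  2358460709412890543952225286470849931619929939791925218258305070145809790223903420669626928945618863052328628783613644778547385282492860478519504810994908947670602065313810713,
  9416316559326022410589724389962020104753890683688796099136452499327233923980309826939910108331259776850106553590822946502475033625191496027056126577236731742135465385189057670,
  17904902756380904784586798068951612558750121550135766553452022894855229078938822927702356835890154800281429760110673083147287784012304462826313875623567103626214301874837358150,
  286476377992471826510937775580328702129212179843479042608740049511560518372727531571450913419143413933656098506008128375022210366926981549207668692645914315356664332044446360134,
  1144244278935789772804763835200168048732581101037919578696070749492312298090119330958687669401956473201617392367517135555146492595834898503985693207374321013698480034838066860642,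
  2125442595179912044418575980898179782022501805363094778076969102311985427704404998623551003751887146255342361253797135492554011751468115978857059025892674395047892108832369304673,
  36995071914372843242412453304312569401409007474092927772718694380963114121483937145037089152984048813199349938413388034043021960105288282453020122925193198500684674737256122179873,
  25423963693434767240010912286969966339748191741745667534566777797669965061835943680905907612896886262264184329177981346252746595650779995441602511143361134792949012210955783016850,
  101909591729424013163306570954453345104061197564729619126739305086619922005007800535585422092537397215813728618408240131032349718551683411605151419933448039721699995006816601131081,
  2472989787525954107962574371157510590258310353246907806968284525909367594287724087083633032491791004493801851843243453510717350010028544105613969004538173655125734942576369106196580,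
  1594664342434595244517803167849550540166357780343656707984811642051435155463532128097437057229870464564029886972835322524346460657438700304381549078600745403127618774917657317754953,
  4739264099690550727101468994565865419571489430494434869675817662850405063750422010114381353786371379347460713841800784180440088926502964284221985598764511948799940485897533635462694,
  104136548614760915195739894355701724924329694210803874118073495555554921654106494624703018558545839381282577120258757501900919120868439753710041828168371608165283302664115818471776840,
  291083622459356902549109839197944393200863037065120781907393627262681326293350717258723052243623522788443128939613735230105055351699686556481229771762788016967453130955069736459047522,
  1163056121338492665651640714320056854541645130873763328768123552472497912650660319899632359175970011648730053484675708747991709183656339799140286149979086582448383520770934413098848786,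
  1213289092657904343027645655938639348809898804308937150035592925926193053232153132186536723530448929324176394651679499031259877526506655391574483970865028445994553749457250872965301830,
  6678719361333225578309763604447636738489347131188384098085264739510144184410110012623036041532335109866095070698073626811291694237842014808881623545137568988495034961409496855881074214,
  104507917279948337747509837860290520748802358091926325400167002109606319315470068673272549763128217907288654516731295695322905430154517111465980592278698266934550175590738800660546394184,
  104507922345769614115113238987280600660052801524977834642888263653028025070290632107834585596539975212813463109966805775637874924122918086125376403247653771377748354769634716059366103186,
  1651067641084410502190848923234697480013678716339999742718617275597305588171486035129093069762794050286804807817982151157701562519376185050601711419023773112495029790098268244215557415314,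
  9322837372193103992685692955311995770254013130651931075614685398720785992442483783757965090213123196336207296236923678906987000062624204150351880142648845022785861839639252650181145026961,
  26754028101856441914343818221539963284509808537845282577653133810434524583656124119829538303473865467185977231638406937634564909645733631288180341149594913512288946538287221470073153806920,
  39586853164969575916172651494267509055955671387723282659821026059547943918886708765263615071738821399105466857783915717459351796302821788417902925072912427781112003355623452554771997230662,
  662594945988835716950257646085697701496284560279983580381455027840821476847440965965563175542421855687774335860698516432940776088307973714496758676278549046203651393797466051223828019160164,
  2655354842044398948185509145775956545253162041106509220414470197239702496997219819811353737957952632071628235707407907650027711885028757709294598475193578917129345108554771709988813190276196,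
  2532950652662526683664354186035492063595842427272375963384209080339583828923163124383576585494561657799159532269972583994409422084260689212635191397306188888603220518571241032584277204801825,
  36916234275651402517102783497100859604147678492992583574602899240762959458323314416214164571359946528826370641708787851167552483241065444834512820373933076035585347180317587356003236437173348,
  109582581780223200294558772319195304629494620436337139709686992086485276174617237250515961445398905483604116544427573329660596749525274829497067475253692378652425676614183215770394199777158692,
  590464060165802694699519762703126007432823107673059465918387173185292010163820302738377235857682811525936201553616563214890439767599266823563773554967223803037756622917634736882310744439820681,
  2593741573517413485476564108160223650561165880826958348760662625433836194723467980165591461027710560999562552081756996801153952723857255171831459358060485950314115609069997910426433206644937092,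
  6925570466032442283087197202107722003133776620455727376509312252937992927188143855274179389864812983276142821366009981986321899012921776565948008240705910878002350711782790726448064967283853412,
  20640565438767934172894200060270907354306712343129698385041615730513732565913900208412337089044367507021412209058411799972232331549040430429914751624282735651694541410509468357809074444834314520,
  110801274093442104127922878009170815390712323259678926240366177249376077151650282071194830493860985030700759508804138344565012983150290836381992309288495672422853862892886416673212808664718057874,
  166039413397859464248406899706912472962533758201104750233683508219314719110644156607800321532000959312800695050745704183572381370867929668615250211855071111679540882435258291135827403151019106598,
  2419346102140561848948129005199842454441835371585300970201834790835177973850123827601255801718036261920494951080596737297477050932371818320303514140922128399312772064858572115800158934719834657161,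
  10624075746685596409520446675714425493778114912532118971036824557804480942150580620981282509604202513365141559873335955329839285642625740441152494976381008691999190351414420023876919767828449862788,
  9677384756207150787068503309732820064701974648756167819553886259500985782016568827252984477732280813649681711945816968562208155264657053299546246606292637082280017188121192335226611397584218263945,
  38709497799008636910524006904796826716942434087361160842694722755494202946696296225442082365526569598771656434843925156668325083863029552045218327509380954656623136021134589590434964261684108666393,
  170609635527398162617781330327459306007783900475634318279038737834294841564165469673632313703572594453505008043236210574910585278169309044034717828250111997566990373817512363522899425526875224114758,
  1350885709022960088543126202224537574624012539638117791154456490595149897798022504923007753172355199113309988225067781093528726340405822301673901890843833322588325530601846206624616301077097284657734,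
  1374214280197566613896411471040584529146292129542887126281302380325322793985364173059869164127784516165169037860270859779773595659005063645256837196858692965553794903088325270668099204627485514043794,
  45565871351402386341215916405364966168506798292915203202123638132510630275441744428855509403355866737557391988005830571401006006810454320131327887877901757686610916627262446627965866150690353856399640,
  120313099080033111329714499443900964473308105994814082825703424598482764035072569164505385329428242364310066673537156199384178305818306646706868363585114693651387552607469235244926423592081003041293860,
  470653809909909040573618001782716720689427610300001967471510164072880066146313496466887844061855093641186193284576973790867608767733497416875783289435287393766312491501070144398957870818891908609368648,
  2569502467921234524885977977334631678379536229118016211422010907652573362319651348756426454917100830329070133369714660462488253049091787414343045755223032679197729265316681841252654320330086565131393097,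
  2536865760622299497617044068765079527717813267220461695026239140419715733912584552022125666615752708622906365908875484576797625166998627584617419450852978600221271421721321442322950547172952260997433737,
  11664926137579466233345245662205754434328747862682577386161139578721835309420783880102713987255650969456313289496761705698420770704746737589270638773775743162294072737096223817511090677140479260608267398,
  178218864565278197785637598421426631170280060513240574510411904233635156360117482157697173231939663309540323723029487200300754316742120010477123696351652434279879209692567708274864650489806029595007657092,
  492457833987050360169277004348838839990060357571606920550212534190319695672664452077567134644851385925490596948737601428413677525936195105504598642550613582481487252945371707130195211521425688189515220516,
  2984062351853136364920869995640967453305359168626421123271994747437280858919944351976467783391496045724200422787300465322221737322963243680629613388744583449377969794768805160225852865819457367918281640036,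
  10746052341396253912910264418641666311329766653771966571231125736057543550262724586287927279948725014969841152667648310126412430052325580029683602463433418361642765800126094283460607213502288395274724909457,
  11410141606137923012364270729108240330351815716757270868613397919848638005821970700522654753543625601169316011655275551146290413140539942403939706182853831728009684516168256903289010917727880367691960555814,
  41564008622860484902231254529707007063805722168990137835204397398344739367164112170137154863419665245723191962326436419665164564004033990436304869773600942664360888219020143526270894204063471176926484777353,
  729983083375490890046308297863111140313132503435697586830243395913328611191756184410624364488808551383152354876427834939580948205853182832605354858508426617267341674372550334221647214040360798567375426577560,
  2018518853287149662462551614694013393506278859125904076576748265753271699558241082295488575626898495199880019264066773804165507858706751830584507674096922880610751089155542212128033468227287546712018960671304,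
  2660647845717481877403027010711012596853016252067480705747060754825025372492741857424354666409632314869756420248567637913923246538693887789237689420690052787668110184109160818958759761850565465684975420838425,
  11679751508150072460205507761884361403744990889649247039015575300767038575960378825302009069045401140344143952309698979075957675374565267666771242956320136137686564082123132737905124220925571888813707599382817,
  170281451281165971466085311451482103321569308665589760451087002186916385619722793067659897846686711720936523063990663806722895032644342973619652216979024649782367396692497240919231259657923249951349115927692836,
  498947543964165329378414314044645063249128308743836033740470849511399861903098018839347254247141244397180678172836056723917327440561337632447962899193100293216021788151527186333793003445812172438230928281863716,
  2825772549899908827174750099373264211227685231364652810256481712369420161055652548269691009435119984692424292275107855569199769872472958263749028298763255181431599591204649233281880682485482317320585047110132113,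
  11036617597586207136431983038885679776834488419722775077187720007917095234772477971318863895848381892118971454521751705732305764545010471380216645991838787195709505081535101932962300674830907921791869938689151364,
  33000609371053505390240824816386243403276530169290258910326662746183861109941375459250306699293709369929930312056350613918252618268137093307916641370873912923521563814256984325063314332590277552679596098461440152,
  95198105473343649612552064152274931300603257322617314225967968732408030160722273977907416582715757696031847717745336695912052511722000273257390996817996512285053312949387232512952459157285447496108229023532194072,
  129245201434772229949857513913840467054317137528211375176154887661798819106090873269344199749349145768879040238248657411093193849715012902090211738151718930242867555704362340185001791989058926613031221339950834066,
  801051624127211604078858001892321531895453347347361875063018214924431019086696529636026005572557258544525037457809109804194500393687934632325724496699355417552424964317792743499801643429835586955506621919764288070,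
  6083707118575829179859979442593569447743238786192610990302512401167714381506147958090877674779115479725374614733815765260104269101277772438068850918979440713729342442009603755304519879397311357304764002943902304354,
  12840508081473908070017289017860160020425741497350244448491126991780337486053931209447313306624182831085057167782894626512464769452821512290785794258125399836331032032549578079183422297213031140605277641778638431769,
  51302610817103646653854460526205060305622989602436106458658726290901384134075674535256730401765207145551802281767870433702280047270761019419900673948215314986905022763065725875093168094771159778550565239515030889569,
  821803573647644834294278904468403995777403541960427773208094094442414693704560777361942691788913858055632886984006483616750403428186812502922269025227916018521665849887369737553441855913818344016173497998282206880900,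
  389931338749281814132399792115367764522127792040383745148257845954078649473477369140848002789743519396517293339345806394590211439614827482434247942554403832932068242591559722213931994829637666895509392517490998319398,
  2893182938950085273944930286883098669777164746943396238104946971323897953432759376092661934782191124252688144854342992179077178485674190846010476391495621168674178512261208889803851128213889230556926654849703851725409,
  50170256488005557283682603366524795652794125600383156093065945059098302191860787094837481434756942171890396861661560996325954026970406416590863751115995698169207064338038975554660710262438887419583631785993011787358497,
  200656603017560602410793446221415906850102134221953067036615557488570013363844329605088252653304918410803689478373811091227343255025802821246031346944629962377278117047912958164917716269298454835170057179643891847292036,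
  805827072499476852335353044887183057126649428498904559498505585470441393156301462480825067828102083550064721699195347252122260818072615589671610421297714315592835623040700850263782093710286270878525516944287125608170648,
  405596394676883984005722992174837795600712980306889568487240942764969129992887014988317084208053974842022781398723973597713422688807032869941867783703225316091528987294180503064851569795584787207286773481736849394393490,
  8682177343962699469636858521716774463712572457114744316245293198275361388593050695061632774063803313274577224001608619918755812254791485959817684087744780250791058574906460696751279743659952492203697438859612709738584136,
  48546402751018560069709254974824771220669047709851998222226596433869379428479133728679532884720464287267388568186154247854590130463512958952427157988031123746586090721392334291908285485026809099560420335260133394577922193]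

theorem table_ok : allFrom 18 table = true := by decide +kernel

theorem table_length : table.length = 350 := by decide +kernel

theorem good_mid {n : ℕ} (h1 : 18 ≤ n) (h2 : n < 368) : Good 3 n :=
  allFrom_spec table 18 (by norm_num) table_ok n h1 (by rw [table_length]; omega)

theorem good_4 : Good 3 4 :=
  good_of_goodChk (X := 72) (by norm_num) (by decide +kernel)

theorem good_6 : Good 3 6 :=
  good_of_goodChk (X := 2121) (by norm_num) (by decide +kernel)

theorem good_8 : Good 3 8 :=
  good_of_goodChk (X := 35105) (by norm_num) (by decide +kernel)

theorem good_11 : Good 3 11 :=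
  good_of_goodChk (X := 596262) (by norm_num) (by decide +kernel)

theorem good_12 : Good 3 12 :=
  good_of_goodChk (X := 4819224) (by norm_num) (by decide +kernel)

theorem good_13 : Good 3 13 :=
  good_of_goodChk (X := 25764242) (by norm_num) (by decide +kernel)

theorem good_15 : Good 3 15 :=
  good_of_goodChk (X := 77107602) (by norm_num) (by decide +kernel)

theorem good_16 : Good 3 16 :=
  good_of_goodChk (X := 1686411336) (by norm_num) (by decide +kernel)

theorem good_5 : Good 4 5 :=
  good_of_goodChk (X := 900) (by norm_num) (by decide +kernel)

theorem good_7 : Good 4 7 :=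
  good_of_goodChk (X := 12580) (by norm_num) (by decide +kernel)

theorem good_9 : Good 4 9 :=
  good_of_goodChk (X := 205956) (by norm_num) (by decide +kernel)

theorem good_10 : Good 4 10 :=
  good_of_goodChk (X := 823684) (by norm_num) (by decide +kernel)

theorem good_14 : Good 4 14 :=
  good_of_goodChk (X := 239477892) (by norm_num) (by decide +kernel)

theorem good_17 : Good 4 17 :=
  good_of_goodChk (X := 14571324548) (by norm_num) (by decide +kernel)

theorem good_large : ∀ n, 18 ≤ n → Good 3 n := by
  intro n
  induction n using Nat.strong_induction_on with
  | _ n ih =>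
    intro hn
    rcases Nat.lt_or_ge n 368 with h | h
    · exact good_mid hn h
    · refine good_step (j := n / 2 / 23) (by omega) (by omega) (by omega) ?_
      by_cases h8 : n / 2 / 23 = 8
      · rw [h8]; exact good_16
      · exact ih _ (by omega) (by omega)

/-- for the cycle `C_n`, `n ≥ 4`, the Thue reach equals the diameter,
`π_R(C_n) = diam(C_n) = ⌊n/2⌋`: some Thue colouring with exactly `π(C_n)` colours has
two equally coloured vertices at distance `⌊n/2⌋`, and this is the maximum possible
distance between equally coloured vertices over all such colourings. -/
theorem thueReach_cycleGraph (n : ℕ) (hn : 4 ≤ n) :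
    thueReach (cycleGraph n) = (cycleGraph n).diam ∧
    (cycleGraph n).diam = n / 2 ∧
    (∃ φ : Fin n → Fin (thueNumber (cycleGraph n)), Function.Surjective φ ∧
      IsThueColoring (cycleGraph n) φ ∧
      ∃ u v : Fin n, u ≠ v ∧ φ u = φ v ∧ (cycleGraph n).dist u v = n / 2) ∧
    (∀ φ : Fin n → Fin (thueNumber (cycleGraph n)), Function.Surjective φ →
      IsThueColoring (cycleGraph n) φ → ∀ u v : Fin n, u ≠ v → φ u = φ v →
        (cycleGraph n).dist u v ≤ n / 2) := by
  have h3 : Good 3 n → _ := fun hg => main_of_good hn hg (no_two hn)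
  rcases Nat.lt_or_ge n 18 with h | h
  · interval_cases n
    · exact h3 good_4
    · exact main_of_good hn good_5 (no_three (by norm_num) dfs_5)
    · exact h3 good_6
    · exact main_of_good hn good_7 (no_three (by norm_num) dfs_7)
    · exact h3 good_8
    · exact main_of_good hn good_9 (no_three (by norm_num) dfs_9)
    · exact main_of_good hn good_10 (no_three (by norm_num) dfs_10)
    · exact h3 good_11
    · exact h3 good_12
    · exact h3 good_13
    · exact main_of_good hn good_14 (no_three (by norm_num) dfs_14)
    · exact h3 good_15
    · exact h3 good_16
    · exact main_of_good hn good_17 (no_three (by norm_num) dfs_17)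
  · exact h3 (good_large n h)
end
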